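/- arXiv:2011.12828 — 2 statements merged into one kernel-verified Lean document; each statement's English description precedes it below -/
import Mathlib

section
/- For any positive integers c_1, c_2, c_3, the generating functions of cylindric partitions satisfy F_{(c_1,c_2,c_3)}(1,q) = F_{(c_2,c_1,c_3)}(1,q); equivalently, Borodin's infinite products for the profiles (c_1,c_2,c_3) and (c_2,c_1,c_3) coincide. -/
/-! The proof is a weight-preserving bijection between the cylindric partitions of the two profiles,
obtained by proving Borodin's product formula bijectively, one weight at a time.

Let `T = c₁ + c₂ + c₃ + 3`. Reading a cylindric partition along diagonals turns it into a closed
path `μ₀, μ₁, …, μ_T = μ₀` of partitions in which consecutive ones differ by a horizontal strip: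
three steps go up, and between them there are blocks of `p`, `q`, `r` down-steps, the lengths being
the entries of the profile (`Cyl_iso`). By Abel summation the total size is `T |μ₀|` plus a sum of
terms `y (|μ_{i+1}| - |μ_i|)`, with a parameter `y` for each step (`C_iso_Conf`).

An up-step with parameter `y` followed by a down-step with parameter `z` may be interchanged at the
cost of a factor `1 / (1 - q ^ (y - z))`; this is the local rule `Part.valley`, `Part.peak`
(`Fac.swap`). The last step of a closed path can be carried around the cylinder, which adds `T` to
its parameter (`C_rotate`). Moving all up-steps once around the cylinder gives back the same word,
with the parameters of the up-steps increased by `T` (`C_hop`). After `M` such moves the parameters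
are so large that, below weight `M`, only constant paths are left (`Conf_lt`), so the enumerator of
the closed paths below weight `M` is a product of explicit factors (`Conf_zero_lt`).

An up-step picks up every exponent in an interval of length `T - 1` except for its distances to the
other two up-steps. The six distances between up-steps form the same multiset for the blocks
`p, q, r` and for the blocks `r, q, p` (`wordHop_perm`), hence `Conf_reverse`. On the cyclic word,
reversing the order of the blocks is interchanging the first two entries of the profile. -/

open scoped Finset

/-- A cylindric partition with profile `c = (c₁, …, c_k)` (0-indexed): a `k`-tuple of
partitions `λ⁽ⁱ⁾` (antitone, eventually-zero sequences of naturals, 0-indexed) with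
`λ⁽ⁱ⁾ⱼ ≥ λ⁽ⁱ⁺¹⁾_{j + c_{i+1}}` cyclically. -/
structure CylindricPartition (k : ℕ) [NeZero k] (c : Fin k → ℕ) where
  part : Fin k → ℕ → ℕ
  antitone : ∀ i, Antitone (part i)
  finite_support : ∀ i, ∃ N, ∀ j, N ≤ j → part i j = 0
  cyl : ∀ i j, part (i + 1) (j + c (i + 1)) ≤ part i j

namespace CylindricPartition

variable {k : ℕ} [NeZero k] {c : Fin k → ℕ}

/-- The size `|Λ|`: the sum of all parts. -/
noncomputable def size (Λ : CylindricPartition k c) : ℕ :=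
  ∑' (i : Fin k) (j : ℕ), Λ.part i j

/-- The largest part `max(Λ)`. -/
def maxPart (Λ : CylindricPartition k c) : ℕ :=
  Finset.univ.sup fun i => Λ.part i 0

end CylindricPartition

noncomputable instance : TopologicalSpace (PowerSeries ℚ) :=
  Pi.topologicalSpace (ι := Unit →₀ ℕ) (Y := fun _ => ℚ)

/-- The generating function `F_c(1, q) = Σ_Λ q^{|Λ|}` of cylindric partitions of profile `c`. -/
noncomputable def cylGF (k : ℕ) [NeZero k] (c : Fin k → ℕ) : PowerSeries ℚ :=
  ∑' Λ : CylindricPartition k c, (PowerSeries.X : PowerSeries ℚ) ^ Λ.size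

namespace CylSwap

/-! ### Weighted types -/

/-- A weighted type: a type together with an integer-valued statistic. -/
structure WT where
  α : Type
  w : α → ℤ

namespace WT

/-- Weight-preserving equivalence, as a proposition. -/
def Iso (X Y : WT) : Prop := ∃ e : X.α ≃ Y.α, ∀ a, Y.w (e a) = X.w a

/-- Product of weighted types; weights add. -/
def prod (X Y : WT) : WT := ⟨X.α × Y.α, fun p => X.w p.1 + Y.w p.2⟩

/-- The natural numbers, `k` having weight `d * k`; the analogue of the factor `1 / (1 - q ^ d)`. -/
def geom (d : ℤ) : WT := ⟨ℕ, fun k => d * k⟩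

/-- The product of the factors `geom d` over a list; the analogue of `∏ 1 / (1 - q ^ d)`. -/
def K : List ℤ → WT
  | [] => ⟨Unit, fun _ => 0⟩
  | d :: L => (geom d).prod (K L)

/-- The elements of weight less than `M`. -/
def lt (X : WT) (M : ℤ) : WT := ⟨{x : X.α // X.w x < M}, fun x => X.w x.1⟩

variable {X Y Z X' Y' : WT}

lemma Iso.refl (X : WT) : X.Iso X := ⟨Equiv.refl _, fun _ => rfl⟩

lemma Iso.symm (h : X.Iso Y) : Y.Iso X := by
  obtain ⟨e, he⟩ := h
  exact ⟨e.symm, fun a => by rw [← he, e.apply_symm_apply]⟩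

lemma Iso.trans (h : X.Iso Y) (h' : Y.Iso Z) : X.Iso Z := by
  obtain ⟨e, he⟩ := h
  obtain ⟨e', he'⟩ := h'
  exact ⟨e.trans e', fun a => by rw [← he, ← he']; rfl⟩

lemma prod_congr (h : X.Iso X') (h' : Y.Iso Y') : (X.prod Y).Iso (X'.prod Y') := by
  obtain ⟨e, he⟩ := h
  obtain ⟨e', he'⟩ := h'
  refine ⟨Equiv.prodCongr e e', fun a => ?_⟩
  exact congrArg₂ (· + ·) (he a.1) (he' a.2)

lemma prod_assoc (X Y Z : WT) : ((X.prod Y).prod Z).Iso (X.prod (Y.prod Z)) :=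
  ⟨Equiv.prodAssoc _ _ _, fun _ => (add_assoc _ _ _).symm⟩

lemma prod_comm (X Y : WT) : (X.prod Y).Iso (Y.prod X) :=
  ⟨Equiv.prodComm _ _, fun _ => add_comm _ _⟩

lemma prod_unit (X : WT) : X.Iso (X.prod (K [])) :=
  ⟨(Equiv.prodPUnit _).symm, fun _ => add_zero _⟩

lemma K_append (L L' : List ℤ) : (K (L ++ L')).Iso ((K L).prod (K L')) := by
  induction L with
  | nil => exact (prod_unit _).trans (prod_comm _ _)
  | cons d L ih => exact (prod_congr (Iso.refl _) ih).trans (prod_assoc _ _ _).symm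

lemma K_perm {L L' : List ℤ} (h : L.Perm L') : (K L).Iso (K L') := by
  induction h with
  | nil => exact Iso.refl _
  | cons d _ ih => exact prod_congr (Iso.refl _) ih
  | swap a b L =>
    exact (prod_assoc _ _ _).symm.trans
      ((prod_congr (prod_comm _ _) (Iso.refl _)).trans (prod_assoc _ _ _))
  | trans _ _ ih ih' => exact ih.trans ih'

lemma K_nonneg {L : List ℤ} (h : ∀ d ∈ L, 0 ≤ d) (x : (K L).α) : 0 ≤ (K L).w x := by
  induction L with
  | nil => exact le_refl _
  | cons d L ih =>
    obtain ⟨k, x⟩ := x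
    have h1 := ih (fun d hd => h d (List.mem_cons_of_mem _ hd)) x
    have h2 : 0 ≤ (geom d).w k := mul_nonneg (h d List.mem_cons_self) (Int.natCast_nonneg _)
    exact add_nonneg h2 h1

/-- Composition of factorisations of weighted types. -/
lemma chain {L L' : List ℤ} (h : X.Iso (Y.prod (K L))) (h' : Y.Iso (Z.prod (K L'))) :
    X.Iso (Z.prod (K (L' ++ L))) :=
  h.trans ((prod_congr h' (Iso.refl _)).trans
    ((prod_assoc _ _ _).trans (prod_congr (Iso.refl _) (K_append _ _).symm)))

lemma lt_congr (h : X.Iso Y) (M : ℤ) : (X.lt M).Iso (Y.lt M) := by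
  obtain ⟨e, he⟩ := h
  refine ⟨e.subtypeEquiv (fun a => by rw [he]), fun a => ?_⟩
  exact he a.1

/-- Up to weight `M`, a product only sees the part of weight `< M` of its first factor, as long as
the second factor has nonnegative weights. -/
lemma prod_lt (X : WT) {Y : WT} (hY : ∀ y, 0 ≤ Y.w y) (M : ℤ) :
    ((X.prod Y).lt M).Iso (((X.lt M).prod Y).lt M) := by
  refine ⟨⟨fun p => ⟨(⟨p.1.1, ?_⟩, p.1.2), p.2⟩, fun p => ⟨(p.1.1.1, p.1.2), p.2⟩,
    fun p => rfl, fun p => rfl⟩, fun p => rfl⟩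
  have h1 := p.2
  have h2 := hY p.1.2
  simp only [prod] at h1
  linarith

/-- Weighted types whose truncations are all isomorphic are isomorphic. -/
lemma iso_of_lt (h : ∀ n : ℕ, (X.lt n).Iso (Y.lt n)) (hX : ∀ x, 0 ≤ X.w x)
    (hY : ∀ y, 0 ≤ Y.w y) : X.Iso Y := by
  have key : ∀ n : ℤ, Nonempty ({x // X.w x = n} ≃ {y // Y.w y = n}) := by
    intro n
    obtain hn | hn := lt_or_ge n 0
    · have : IsEmpty {x // X.w x = n} := ⟨fun x => by have := hX x.1; have := x.2; omega⟩
      have : IsEmpty {y // Y.w y = n} := ⟨fun x => by have := hY x.1; have := x.2; omega⟩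
      exact ⟨Equiv.equivOfIsEmpty _ _⟩
    · obtain ⟨e, he⟩ := h (n + 1).toNat
      have hM : (((n + 1).toNat : ℕ) : ℤ) = n + 1 := Int.toNat_of_nonneg (by omega)
      -- `e` restricts to the fibers over `n`, which lie inside the truncations at `n + 1`.
      refine ⟨(Equiv.subtypeSubtypeEquivSubtype (q := fun x => X.w x = n) ?_).symm.trans
        ((e.subtypeEquiv ?_).trans
          (Equiv.subtypeSubtypeEquivSubtype (q := fun y => Y.w y = n) ?_))⟩
      · intro x hx
        rw [hx, hM]
        omega
      · intro a
        exact ⟨fun h => (he a).trans h, fun h => (he a).symm.trans h⟩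
      · intro y hy
        rw [hy, hM]
        omega
  let f := fun n => (key n).some
  refine ⟨(Equiv.sigmaFiberEquiv X.w).symm.trans ((Equiv.sigmaCongrRight f).trans
    (Equiv.sigmaFiberEquiv Y.w)), fun a => ?_⟩
  exact (f (X.w a) ⟨a, rfl⟩).2

end WT

/-! ### Partitions and the local rule -/

/-- An integer partition, as a weakly decreasing eventually zero sequence. -/
@[ext] structure Part where
  f : ℕ → ℕ
  anti : ∀ j, f (j + 1) ≤ f j
  fin : ∃ N, ∀ j, N ≤ j → f j = 0

namespace Part

/-- The sum of the parts. -/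
noncomputable def size (a : Part) : ℕ := ∑' j, a.f j

lemma size_eq (a : Part) {N : ℕ} (h : ∀ j, N ≤ j → a.f j = 0) :
    a.size = ∑ j ∈ Finset.range N, a.f j :=
  tsum_eq_sum fun j hj => h j (by simpa using hj)

/-- `a.Inter b` says that `b / a` is a horizontal strip: `b₀ ≥ a₀ ≥ b₁ ≥ a₁ ≥ ⋯`. -/
def Inter (a b : Part) : Prop := ∀ j, a.f j ≤ b.f j ∧ b.f (j + 1) ≤ a.f j

lemma Inter.size_le {a b : Part} (h : a.Inter b) : a.size ≤ b.size := by
  obtain ⟨N, hN⟩ := a.fin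
  obtain ⟨N', hN'⟩ := b.fin
  rw [a.size_eq (N := max N N') (fun j hj => hN j (by omega)),
    b.size_eq (N := max N N') (fun j hj => hN' j (by omega))]
  exact Finset.sum_le_sum fun j _ => (h j).1

lemma Inter.eq_of_size {a b : Part} (h : a.Inter b) (hs : a.size = b.size) : a = b := by
  obtain ⟨N, hN⟩ := a.fin
  obtain ⟨N', hN'⟩ := b.fin
  rw [a.size_eq (N := max N N') (fun j hj => hN j (by omega)),
    b.size_eq (N := max N N') (fun j hj => hN' j (by omega)),
    Finset.sum_eq_sum_iff_of_le fun j _ => (h j).1] at hs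
  ext j
  by_cases hj : j < max N N'
  · exact hs j (by simpa using hj)
  · rw [hN j (by omega), hN' j (by omega)]

/-- The valley `v` replacing the peak `r` between `a` and `b` in the local rule:
`v_j + r_{j+1} = min(a_j, b_j) + max(a_{j+1}, b_{j+1})`. -/
def valley (a b r : Part) (ha : a.Inter r) (hb : b.Inter r) : Part where
  f j := min (a.f j) (b.f j) + max (a.f (j + 1)) (b.f (j + 1)) - r.f (j + 1)
  anti j := by
    have := ha j; have := hb j; have := ha (j + 1); have := hb (j + 1)
    have := ha (j + 1 + 1); have := hb (j + 1 + 1)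
    omega
  fin := by
    obtain ⟨N, hN⟩ := a.fin
    refine ⟨N, fun j hj => ?_⟩
    have := ha j; have := hb j; have := ha (j + 1); have := hb (j + 1)
    have := hN j hj; have := hN (j + 1) (by omega)
    omega

/-- The parts of `peak`. -/
def peakFun (a b v : Part) (k : ℕ) : ℕ → ℕ
  | 0 => max (a.f 0) (b.f 0) + k
  | j + 1 => min (a.f j) (b.f j) + max (a.f (j + 1)) (b.f (j + 1)) - v.f j

/-- The peak replacing the valley `v` between `a` and `b`, with largest part exceeding
`max(a₀, b₀)` by `k`; inverse to `valley`. -/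
def peak (a b v : Part) (k : ℕ) (ha : v.Inter a) (hb : v.Inter b) : Part where
  f := peakFun a b v k
  anti j := by
    cases j with
    | zero => have := ha 0; have := hb 0; simp only [peakFun]; omega
    | succ j =>
      have := ha j; have := hb j; have := ha (j + 1); have := hb (j + 1)
      simp only [peakFun]
      omega
  fin := by
    obtain ⟨N, hN⟩ := a.fin
    refine ⟨N + 1, fun j hj => ?_⟩
    obtain ⟨j, rfl⟩ : ∃ i, j = i + 1 := ⟨j - 1, by omega⟩
    have := ha j; have := hb j
    have := hN j (by omega)
    have := hN (j + 1) (by omega)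
    simp only [peakFun]
    omega

lemma valley_inter (a b r : Part) (ha : a.Inter r) (hb : b.Inter r) :
    (valley a b r ha hb).Inter a ∧ (valley a b r ha hb).Inter b := by
  constructor <;> intro j <;> have := ha j <;> have := hb j <;> have := ha (j + 1) <;>
    have := hb (j + 1) <;> simp only [valley] <;> omega

lemma inter_peak (a b v : Part) (k : ℕ) (ha : v.Inter a) (hb : v.Inter b) :
    a.Inter (peak a b v k ha hb) ∧ b.Inter (peak a b v k ha hb) := by
  constructor <;> intro j <;> have := ha j <;> have := hb j <;> cases j with
  | zero => simp only [peak, peakFun]; omega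
  | succ j => have := ha (j + 1); have := hb (j + 1); have := ha j; have := hb j
              simp only [peak, peakFun]; omega

lemma peak_valley (a b r : Part) (ha : a.Inter r) (hb : b.Inter r)
    (h1 : (valley a b r ha hb).Inter a) (h2 : (valley a b r ha hb).Inter b) :
    peak a b (valley a b r ha hb) (r.f 0 - max (a.f 0) (b.f 0)) h1 h2 = r := by
  ext j
  cases j with
  | zero => have := ha 0; have := hb 0; simp only [peak, peakFun]; omega
  | succ j =>
    have := ha j; have := hb j; have := ha (j + 1); have := hb (j + 1)
    simp only [peak, peakFun, valley]; omega

lemma valley_peak (a b v : Part) (k : ℕ) (ha : v.Inter a) (hb : v.Inter b)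
    (h1 : a.Inter (peak a b v k ha hb)) (h2 : b.Inter (peak a b v k ha hb)) :
    valley a b (peak a b v k ha hb) h1 h2 = v := by
  ext j
  have := ha j; have := hb j
  simp only [peak, peakFun, valley]; omega

/-- The local rule satisfies `|r| + |v| = |a| + |b| + k`. -/
lemma size_valley (a b r : Part) (ha : a.Inter r) (hb : b.Inter r) :
    r.size + (valley a b r ha hb).size
      = a.size + b.size + (r.f 0 - max (a.f 0) (b.f 0)) := by
  obtain ⟨N, hN⟩ := r.fin
  have hA : ∀ j, N ≤ j → a.f j = 0 := fun j hj => by have := ha j; have := hN j hj; omega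
  have hB : ∀ j, N ≤ j → b.f j = 0 := fun j hj => by have := hb j; have := hN j hj; omega
  have hV : ∀ j, N ≤ j → (valley a b r ha hb).f j = 0 := fun j hj => by
    have := (valley_inter a b r ha hb).1 j; have := hA j hj; omega
  rw [r.size_eq hN, a.size_eq hA, b.size_eq hB, size_eq _ hV]
  -- The partial sums telescope, with an error term that vanishes once `n` is large.
  have key : ∀ n, (∑ j ∈ Finset.range n, r.f j) + (∑ j ∈ Finset.range n, (valley a b r ha hb).f j)
      + r.f n = (∑ j ∈ Finset.range n, a.f j) + (∑ j ∈ Finset.range n, b.f j)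
        + (r.f 0 - max (a.f 0) (b.f 0)) + max (a.f n) (b.f n) := by
    intro n
    induction n with
    | zero => have := ha 0; have := hb 0; simp; omega
    | succ n ih =>
      have := ha n; have := hb n; have := ha (n + 1); have := hb (n + 1)
      have hv : (valley a b r ha hb).f n
        = min (a.f n) (b.f n) + max (a.f (n + 1)) (b.f (n + 1)) - r.f (n + 1) := rfl
      simp only [Finset.sum_range_succ]
      omega
  have := key N
  rw [hN N le_rfl, hA N le_rfl, hB N le_rfl] at this
  simpa using this

end Part

/-! ### Paths of partitions -/

open WT

/-- `Step true a b` (an up-step) says that `b / a` is a horizontal strip, `Step false a b`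
(a down-step) that `a / b` is. -/
def Step : Bool → Part → Part → Prop
  | true, a, b => a.Inter b
  | false, a, b => b.Inter a

/-- Paths of partitions from `a` to `c` whose steps are prescribed by a word in letters `(t, y)`:
`t` is the type of the step, and the step from `b` to `b'` has weight `y * (|b'| - |b|)`. -/
noncomputable def P : List (Bool × ℤ) → Part → Part → WT
  | [], a, c => ⟨PLift (a = c), fun _ => 0⟩
  | l :: ℓ, a, c => ⟨Σ b : {b // Step l.1 a b}, (P ℓ b.1 c).α,
      fun x => l.2 * ((x.1.1.size : ℤ) - a.size) + (P ℓ x.1.1 c).w x.2⟩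

/-- Paths along `ℓ` are generated by paths along `ℓ'` times the factor `K L`. -/
def Fac (ℓ ℓ' : List (Bool × ℤ)) (L : List ℤ) : Prop :=
  ∀ a c, (P ℓ a c).Iso ((P ℓ' a c).prod (K L))

lemma Fac.refl (ℓ : List (Bool × ℤ)) : Fac ℓ ℓ [] := fun _ _ => prod_unit _

lemma Fac.trans {ℓ ℓ' ℓ'' : List (Bool × ℤ)} {L L' : List ℤ} (h : Fac ℓ ℓ' L)
    (h' : Fac ℓ' ℓ'' L') : Fac ℓ ℓ'' (L' ++ L) := fun a c => chain (h a c) (h' a c)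

/-- Pulling a constant factor out of a disjoint union. -/
def sigmaFactor {ι κ : Type} {A B : ι → Type} (e : ∀ i, A i ≃ B i × κ) :
    (Σ i, A i) ≃ (Σ i, B i) × κ where
  toFun x := (⟨x.1, (e x.1 x.2).1⟩, (e x.1 x.2).2)
  invFun y := ⟨y.1.1, (e y.1.1).symm (y.1.2, y.2)⟩
  left_inv x := by simp
  right_inv y := by simp

lemma Fac.cons (l : Bool × ℤ) {ℓ ℓ' : List (Bool × ℤ)} {L : List ℤ} (h : Fac ℓ ℓ' L) :
    Fac (l :: ℓ) (l :: ℓ') L := by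
  intro a c
  choose e he using fun b => h b c
  exact ⟨sigmaFactor fun b : {b // Step l.1 a b} => e b.1,
    fun x => (add_assoc _ _ _).trans (congrArg _ (he x.1.1 x.2))⟩

lemma Fac.append (ℓ₀ : List (Bool × ℤ)) {ℓ ℓ' : List (Bool × ℤ)} {L : List ℤ}
    (h : Fac ℓ ℓ' L) : Fac (ℓ₀ ++ ℓ) (ℓ₀ ++ ℓ') L := by
  induction ℓ₀ with
  | nil => exact h
  | cons l ℓ₀ ih => exact ih.cons l

/-- Commuting an up-step past a down-step: the bijective form of the commutation relation between
the two half-vertex operators. -/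
lemma Fac.swap (y z : ℤ) (ℓ : List (Bool × ℤ)) :
    Fac ((true, y) :: (false, z) :: ℓ) ((false, z) :: (true, y) :: ℓ) [y - z] := by
  intro a c
  have e1 : ∀ (r r' : Part) (h : r = r') (h1 : a.Inter r) (h1' : a.Inter r')
      (b : Part) (h2 : b.Inter r) (h2' : b.Inter r') (p : (P ℓ b c).α),
      (⟨⟨r, h1⟩, ⟨⟨b, h2⟩, p⟩⟩ : (P ((true, y) :: (false, z) :: ℓ) a c).α)
        = ⟨⟨r', h1'⟩, ⟨⟨b, h2'⟩, p⟩⟩ := by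
    intro r r' h
    subst h
    intros
    rfl
  have e2 : ∀ (r r' : Part) (h : r = r') (h1 : r.Inter a) (h1' : r'.Inter a)
      (b : Part) (h2 : r.Inter b) (h2' : r'.Inter b) (p : (P ℓ b c).α),
      (⟨⟨r, h1⟩, ⟨⟨b, h2⟩, p⟩⟩ : (P ((false, z) :: (true, y) :: ℓ) a c).α)
        = ⟨⟨r', h1'⟩, ⟨⟨b, h2'⟩, p⟩⟩ := by
    intro r r' h
    subst h
    intros
    rfl
  refine ⟨⟨fun x => (⟨⟨Part.valley a x.2.1.1 x.1.1 x.1.2 x.2.1.2,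
        (Part.valley_inter a x.2.1.1 x.1.1 x.1.2 x.2.1.2).1⟩,
        ⟨⟨x.2.1.1, (Part.valley_inter a x.2.1.1 x.1.1 x.1.2 x.2.1.2).2⟩, x.2.2⟩⟩,
        (x.1.1.f 0 - max (a.f 0) (x.2.1.1.f 0), ())),
      fun x => ⟨⟨Part.peak a x.1.2.1.1 x.1.1.1 x.2.1 x.1.1.2 x.1.2.1.2,
        (Part.inter_peak a x.1.2.1.1 x.1.1.1 x.2.1 x.1.1.2 x.1.2.1.2).1⟩,
        ⟨⟨x.1.2.1.1, (Part.inter_peak a x.1.2.1.1 x.1.1.1 x.2.1 x.1.1.2 x.1.2.1.2).2⟩,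
          x.1.2.2⟩⟩, ?_, ?_⟩, ?_⟩
  · rintro ⟨⟨r, hr⟩, ⟨⟨b, hb⟩, p⟩⟩
    exact e1 _ _ (Part.peak_valley a b r hr hb _ _) _ _ _ _ _ _
  · rintro ⟨⟨⟨v, hv⟩, ⟨⟨b, hb⟩, p⟩⟩, ⟨(k : ℕ), _⟩⟩
    refine Prod.ext (e2 _ _ (Part.valley_peak a b v k hv hb _ _) _ _ _ _ _ _) ?_
    refine Prod.ext ?_ rfl
    change max (a.f 0) (b.f 0) + k - max (a.f 0) (b.f 0) = k
    omega
  · rintro ⟨⟨r, hr⟩, ⟨⟨b, hb⟩, p⟩⟩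
    have h := congrArg (Nat.cast : ℕ → ℤ) (Part.size_valley a b r hr hb)
    push_cast at h
    change (z * (((Part.valley a b r hr hb).size : ℤ) - a.size) +
        (y * ((b.size : ℤ) - (Part.valley a b r hr hb).size) + (P ℓ b c).w p)) +
        ((y - z) * ((r.f 0 - max (a.f 0) (b.f 0) : ℕ) : ℤ) + 0) =
      y * ((r.size : ℤ) - a.size) + (z * ((b.size : ℤ) - r.size) + (P ℓ b c).w p)
    linear_combination (z - y) * h

/-- Moving an up-step through a block of down-steps. -/
lemma Fac.move (y : ℤ) (D : List (Bool × ℤ)) (hD : ∀ l ∈ D, l.1 = false)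
    (ℓ : List (Bool × ℤ)) :
    Fac ((true, y) :: (D ++ ℓ)) (D ++ (true, y) :: ℓ) (D.map fun l => y - l.2).reverse := by
  induction D with
  | nil => exact Fac.refl _
  | cons l D ih =>
    obtain ⟨t, z⟩ := l
    obtain rfl : t = false := hD _ List.mem_cons_self
    have h := (Fac.swap y z (D ++ ℓ)).trans
      ((ih fun l hl => hD l (List.mem_cons_of_mem _ hl)).cons (false, z))
    simpa using h

/-- Splitting off the last step of a path. -/
lemma P_snoc (ℓ : List (Bool × ℤ)) (l : Bool × ℤ) (a c : Part) :
    (P (ℓ ++ [l]) a c).Iso ⟨Σ b : {b // Step l.1 b c}, (P ℓ a b.1).α,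
      fun x => l.2 * ((c.size : ℤ) - x.1.1.size) + (P ℓ a x.1.1).w x.2⟩ := by
  induction ℓ generalizing a with
  | nil =>
    refine ⟨⟨fun x => ⟨⟨a, x.2.down ▸ x.1.2⟩, ⟨rfl⟩⟩, fun x => ⟨⟨c, x.2.down ▸ x.1.2⟩, ⟨rfl⟩⟩,
      ?_, ?_⟩, ?_⟩
    · rintro ⟨⟨b, hb⟩, ⟨h⟩⟩
      change b = c at h
      subst h
      rfl
    · rintro ⟨⟨b, hb⟩, ⟨h⟩⟩
      change a = b at h
      subst h
      rfl
    · rintro ⟨⟨b, hb⟩, ⟨h⟩⟩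
      change b = c at h
      subst h
      rfl
  | cons l' ℓ ih =>
    choose e he using ih
    refine ⟨⟨fun x => ⟨(e x.1.1 x.2).1, ⟨x.1, (e x.1.1 x.2).2⟩⟩,
      fun x => ⟨x.2.1, (e x.2.1.1).symm ⟨x.1, x.2.2⟩⟩, fun x => ?_, fun x => ?_⟩, fun x => ?_⟩
    · exact Sigma.ext rfl (heq_of_eq ((e x.1.1).symm_apply_apply x.2))
    · obtain ⟨b, ⟨b', p⟩⟩ := x
      have := (e b'.1).apply_symm_apply ⟨b, p⟩
      simp only
      rw [this]
    · have := he x.1.1 x.2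
      change l.2 * _ + (l'.2 * _ + _) = l'.2 * _ + (P (ℓ ++ [l]) x.1.1 c).w x.2
      rw [← this]
      exact add_left_comm _ _ _

/-- Closed paths along `ℓ`, with the constant term `T * |a|` for the starting point `a`. -/
noncomputable def C (T : ℤ) (ℓ : List (Bool × ℤ)) : WT :=
  ⟨Σ a, (P ℓ a a).α, fun x => T * x.1.size + (P ℓ x.1 x.1).w x.2⟩

/-- Cyclicity of the trace: carrying a letter around the cylinder adds `T` to its parameter. -/
lemma C_rotate (T : ℤ) (ℓ : List (Bool × ℤ)) (t : Bool) (y : ℤ) :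
    (C T (ℓ ++ [(t, y)])).Iso (C T ((t, y + T) :: ℓ)) := by
  choose e he using fun c => P_snoc ℓ (t, y) c c
  refine ⟨⟨fun x => ⟨(e x.1 x.2).1.1, ⟨⟨x.1, (e x.1 x.2).1.2⟩, (e x.1 x.2).2⟩⟩,
    fun x => ⟨x.2.1.1, (e x.2.1.1).symm ⟨⟨x.1, x.2.1.2⟩, x.2.2⟩⟩,
    fun x => ?_, fun x => ?_⟩, fun x => ?_⟩
  · exact Sigma.ext rfl (heq_of_eq ((e x.1).symm_apply_apply x.2))
  · obtain ⟨b, ⟨⟨c, hc⟩, p⟩⟩ := x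
    have := (e c).apply_symm_apply ⟨⟨b, hc⟩, p⟩
    simp only
    rw [this]
  · have := he x.1 x.2
    refine Eq.trans ?_ (congrArg (T * (x.1.size : ℤ) + ·) this)
    change T * ((e x.1 x.2).1.1.size : ℤ) + ((y + T) * ((x.1.size : ℤ) - (e x.1 x.2).1.1.size) +
        (P ℓ x.1 (e x.1 x.2).1.1).w (e x.1 x.2).2)
      = T * (x.1.size : ℤ) + (y * ((x.1.size : ℤ) - (e x.1 x.2).1.1.size) +
        (P ℓ x.1 (e x.1 x.2).1.1).w (e x.1 x.2).2)
    ring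

lemma C_fac (T : ℤ) {ℓ ℓ' : List (Bool × ℤ)} {L : List ℤ} (h : Fac ℓ ℓ' L) :
    (C T ℓ).Iso ((C T ℓ').prod (K L)) := by
  choose e he using fun a => h a a
  exact ⟨sigmaFactor e, fun x => (add_assoc _ _ _).trans (congrArg _ (he x.1 x.2))⟩

/-- Paths written as functions of time, constant after the last step. -/
noncomputable def Fn (ℓ : List (Bool × ℤ)) (a c : Part) : WT :=
  ⟨{μ : ℕ → Part // μ 0 = a ∧ (∀ i, ℓ.length ≤ i → μ i = c) ∧
      ∀ i < ℓ.length, Step (ℓ.getD i (true, 0)).1 (μ i) (μ (i + 1))},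
    fun μ => ∑ i ∈ Finset.range ℓ.length,
      (ℓ.getD i (true, 0)).2 * (((μ.1 (i + 1)).size : ℤ) - (μ.1 i).size)⟩

lemma P_iso_Fn (ℓ : List (Bool × ℤ)) (a c : Part) : (P ℓ a c).Iso (Fn ℓ a c) := by
  induction ℓ generalizing a with
  | nil =>
    refine ⟨⟨fun h => ⟨fun _ => a, rfl, fun _ _ => h.down, fun i hi => absurd hi (by simp)⟩,
      fun μ => ⟨μ.2.1.symm.trans (μ.2.2.1 0 le_rfl)⟩, fun _ => rfl, ?_⟩, fun _ => rfl⟩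
    rintro ⟨μ, h0, h1, h2⟩
    refine Subtype.ext (funext fun i => ?_)
    exact (h0.symm.trans (h1 0 le_rfl)).trans (h1 i (Nat.zero_le _)).symm
  | cons l ℓ ih =>
    choose e he using ih
    have e1 : ∀ (b b' : Part) (q : (Fn ℓ b c).α) (q' : (Fn ℓ b' c).α) (hb : Step l.1 a b)
        (hb' : Step l.1 a b') (_ : b = b') (_ : q.1 = q'.1),
        (⟨⟨b, hb⟩, (e b).symm q⟩ : (P (l :: ℓ) a c).α) = ⟨⟨b', hb'⟩, (e b').symm q'⟩ := by
      intro b b' q q' hb hb' h hq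
      subst h
      obtain rfl := Subtype.ext hq
      rfl
    refine ⟨⟨fun x => ⟨fun i => i.casesOn a (e x.1.1 x.2).1, rfl, ?_, ?_⟩,
      fun μ => ⟨⟨μ.1 1, ?_⟩, (e (μ.1 1)).symm ⟨fun i => μ.1 (i + 1), rfl, ?_, ?_⟩⟩,
      ?_, ?_⟩, ?_⟩
    · rintro (_ | i) hi
      · simp at hi
      · exact (e x.1.1 x.2).2.2.1 i (by simpa using hi)
    · rintro (_ | i) hi
      · have h1 : (e x.1.1 x.2).1 0 = x.1.1 := (e x.1.1 x.2).2.1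
        change Step l.1 a ((e x.1.1 x.2).1 0)
        rw [h1]
        exact x.1.2
      · exact (e x.1.1 x.2).2.2.2 i (by simpa using hi)
    · have := μ.2.2.2 0 (by simp)
      rw [μ.2.1] at this
      exact this
    · exact fun i hi => μ.2.2.1 (i + 1) (by simpa using hi)
    · exact fun i hi => μ.2.2.2 (i + 1) (by simpa using hi)
    · rintro ⟨⟨b, hb⟩, p⟩
      refine (e1 _ _ _ (e b p) _ hb (e b p).2.1 rfl).trans ?_
      rw [(e b).symm_apply_apply]
    · rintro ⟨μ, rfl, h1, h2⟩
      refine Subtype.ext (funext fun i => ?_)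
      cases i with
      | zero => rfl
      | succ i =>
        exact congrFun (congrArg Subtype.val ((e (μ 1)).apply_symm_apply _)) i
    · rintro ⟨⟨b, hb⟩, p⟩
      have h := he b p
      have h0 : (e b p).1 0 = b := (e b p).2.1
      change ∑ i ∈ Finset.range (ℓ.length + 1), _ = l.2 * ((b.size : ℤ) - a.size) + (P ℓ b c).w p
      rw [← h, Finset.sum_range_succ', add_comm]
      congr 1
      change l.2 * ((((e b p).1 0).size : ℤ) - a.size) = _
      rw [h0]

/-- Closed paths written as functions of time, constant after the last step. -/
noncomputable def CFn (T : ℤ) (ℓ : List (Bool × ℤ)) : WT :=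
  ⟨{μ : ℕ → Part // (∀ i, ℓ.length ≤ i → μ i = μ 0) ∧
      ∀ i < ℓ.length, Step (ℓ.getD i (true, 0)).1 (μ i) (μ (i + 1))},
    fun μ => T * (μ.1 0).size + ∑ i ∈ Finset.range ℓ.length,
      (ℓ.getD i (true, 0)).2 * (((μ.1 (i + 1)).size : ℤ) - (μ.1 i).size)⟩

lemma C_iso_CFn (T : ℤ) (ℓ : List (Bool × ℤ)) : (C T ℓ).Iso (CFn T ℓ) := by
  choose e he using fun a => P_iso_Fn ℓ a a
  have e1 : ∀ (b b' : Part) (q : (Fn ℓ b b).α) (q' : (Fn ℓ b' b').α) (_ : b = b')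
      (_ : q.1 = q'.1), (⟨b, (e b).symm q⟩ : (C T ℓ).α) = ⟨b', (e b').symm q'⟩ := by
    intro b b' q q' h hq
    subst h
    obtain rfl := Subtype.ext hq
    rfl
  refine ⟨⟨fun x => ⟨(e x.1 x.2).1, ?_, (e x.1 x.2).2.2.2⟩,
    fun μ => ⟨μ.1 0, (e (μ.1 0)).symm ⟨μ.1, rfl, μ.2⟩⟩, ?_, ?_⟩, ?_⟩
  · intro i hi
    rw [(e x.1 x.2).2.1]
    exact (e x.1 x.2).2.2.1 i hi
  · rintro ⟨a, p⟩
    refine (e1 _ _ _ (e a p) (e a p).2.1 rfl).trans ?_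
    rw [(e a).symm_apply_apply]
  · rintro ⟨μ, h1, h2⟩
    have h : (e (μ 0) ((e (μ 0)).symm ⟨μ, rfl, h1, h2⟩)).1 = μ :=
      congrArg Subtype.val ((e (μ 0)).apply_symm_apply _)
    exact Subtype.ext h
  · rintro ⟨a, p⟩
    have h := he a p
    have h0 : (e a p).1 0 = a := (e a p).2.1
    change T * (((e a p).1 0).size : ℤ) + _ = T * (a.size : ℤ) + (P ℓ a a).w p
    rw [← h, h0]
    rfl

/-! ### The product formula and its symmetry -/

/-- The cyclic word made of three down-blocks, each followed by an up-step. -/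
def W (D₁ D₂ D₃ : List (Bool × ℤ)) (a b c : ℤ) : List (Bool × ℤ) :=
  D₁ ++ (true, a) :: (D₂ ++ (true, b) :: (D₃ ++ [(true, c)]))

/-- The exponents picked up when every up-step of `W D₁ D₂ D₃ a b c` crosses the next block. -/
def roundList (T : ℤ) (D₁ D₂ D₃ : List (Bool × ℤ)) (a b c : ℤ) : List ℤ :=
  (D₂.map fun l => a - l.2) ++ (D₃.map fun l => b - l.2) ++ (D₁.map fun l => c + T - l.2)

/-- Moving every up-step through the next block of down-steps, the last one going around the
cylinder, gives back a word of the same shape. -/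
lemma C_round (T : ℤ) {D₁ D₂ D₃ : List (Bool × ℤ)} (h₁ : ∀ l ∈ D₁, l.1 = false)
    (h₂ : ∀ l ∈ D₂, l.1 = false) (h₃ : ∀ l ∈ D₃, l.1 = false) (a b c : ℤ) :
    (C T (W D₁ D₂ D₃ a b c)).Iso
      ((C T (W D₁ D₂ D₃ (c + T) a b)).prod (K (roundList T D₁ D₂ D₃ a b c))) := by
  have hb := Fac.append (D₁ ++ (true, a) :: D₂) (Fac.move b D₃ h₃ [(true, c)])
  have ha := Fac.append D₁ (Fac.move a D₂ h₂ (D₃ ++ [(true, b), (true, c)]))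
  have hc := Fac.move (c + T) D₁ h₁ (D₂ ++ (true, a) :: (D₃ ++ [(true, b)]))
  have hr := C_rotate T (D₁ ++ (D₂ ++ (true, a) :: (D₃ ++ [(true, b)]))) true c
  simp only [List.append_assoc, List.cons_append, List.nil_append] at ha hb hc hr
  have h := chain ((C_fac T (Fac.trans hb ha)).trans (prod_congr hr (Iso.refl _))) (C_fac T hc)
  refine h.trans (prod_congr (Iso.refl _) (K_perm ?_))
  rw [← Multiset.coe_eq_coe]
  simp only [roundList, ← Multiset.coe_add, Multiset.coe_reverse]
  abel

/-- The exponents picked up when every up-step goes once around the cylinder. -/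
def hopList (T : ℤ) (D₁ D₂ D₃ : List (Bool × ℤ)) (a b c : ℤ) : List ℤ :=
  roundList T D₁ D₂ D₃ (b + T) (c + T) a ++
    (roundList T D₁ D₂ D₃ (c + T) a b ++ roundList T D₁ D₂ D₃ a b c)

lemma C_hop (T : ℤ) {D₁ D₂ D₃ : List (Bool × ℤ)} (h₁ : ∀ l ∈ D₁, l.1 = false)
    (h₂ : ∀ l ∈ D₂, l.1 = false) (h₃ : ∀ l ∈ D₃, l.1 = false) (a b c : ℤ) :
    (C T (W D₁ D₂ D₃ a b c)).Iso
      ((C T (W D₁ D₂ D₃ (a + T) (b + T) (c + T))).prod (K (hopList T D₁ D₂ D₃ a b c))) :=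
  chain (chain (C_round T h₁ h₂ h₃ a b c) (C_round T h₁ h₂ h₃ (c + T) a b))
    (C_round T h₁ h₂ h₃ (b + T) (c + T) a)

/-- The types of the steps of the cyclic word with down-blocks of lengths `p`, `q`, `r`. -/
def up (p q r i : ℕ) : Bool := i = p ∨ i = p + q + 1 ∨ i = p + q + r + 2

/-- The cyclic word with down-blocks of lengths `p`, `q`, `r`; the `i`-th letter has the parameter
`T - 1 - i`, where `T = p + q + r + 3`, increased by `N` at the up-steps. -/
def word (p q r : ℕ) (N : ℤ) : List (Bool × ℤ) :=
  (List.range (p + q + r + 3)).map fun i : ℕ =>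
    (up p q r i, ((p + q + r + 2 - i : ℤ)) + if up p q r i then N else 0)

/-- The down-block occupying positions `s, …, s + n - 1` in a word of length `m + 1`. -/
def block (m : ℤ) (s n : ℕ) : List (Bool × ℤ) :=
  (List.range' s n).map fun i : ℕ => (false, m - i)

lemma block_false (m : ℤ) (s n : ℕ) : ∀ l ∈ block m s n, l.1 = false := by
  simp [block]

lemma word_eq (p q r : ℕ) (N : ℤ) :
    word p q r N = W (block (p + q + r + 2) 0 p) (block (p + q + r + 2) (p + 1) q)
      (block (p + q + r + 2) (p + q + 2) r) (q + r + 2 + N) (r + 1 + N) N := by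
  have hsplit : List.range (p + q + r + 3) = List.range' 0 p ++ p :: (List.range' (p + 1) q ++
      (p + q + 1) :: (List.range' (p + q + 2) r ++ [p + q + r + 2])) := by
    have e3 : List.range' (p + q + 2) r ++ [p + q + r + 2] = List.range' (p + q + 2) (r + 1) := by
      rw [← List.range'_append_1]
      simp
      omega
    have e2 : List.range' (p + 1) q ++ (p + q + 1) :: List.range' (p + q + 2) (r + 1)
        = List.range' (p + 1) (q + (r + 2)) := by
      rw [← List.range'_append_1 (s := p + 1) (m := q) (n := r + 2),
        List.range'_succ (n := r + 1)]
      simp only [show p + 1 + q = p + q + 1 by omega]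
    rw [e3, e2, List.range_eq_range', show p + q + r + 3 = p + (q + (r + 2) + 1) by omega,
      ← List.range'_append_1, List.range'_succ (n := q + (r + 2))]
    simp
  have hblock : ∀ s n, (∀ i, s ≤ i → i < s + n → up p q r i = false) →
      (List.range' s n).map (fun i => (up p q r i, ((p + q + r + 2 - i : ℤ)) +
        if up p q r i then N else 0)) = block (p + q + r + 2) s n := by
    intro s n h
    rw [block]
    refine List.map_congr_left fun i hi => ?_
    rw [List.mem_range'_1] at hi
    simp [h i hi.1 hi.2]
  have u1 : up p q r p = true := by simp [up]
  have u2 : up p q r (p + q + 1) = true := by simp [up]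
  have u3 : up p q r (p + q + r + 2) = true := by simp [up]
  rw [word, hsplit, W]
  simp only [List.map_append, List.map_cons, List.map_nil, u1, u2, u3, if_true]
  rw [hblock 0 p, hblock (p + 1) q, hblock (p + q + 2) r]
  · push_cast
    congr 3
    · ring
    · congr 2
      · congr 1
        ring
      · simp
  all_goals
    intro i h1 h2
    simp only [up, decide_eq_false_iff_not]
    omega

/-- An integer interval, as a multiset. -/
noncomputable def B (x y : ℤ) : Multiset ℤ := Multiset.Ico x y

lemma B_split {x y z : ℤ} (h1 : x ≤ y) (h2 : y < z) : B x y + {y} + B (y + 1) z = B x z := by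
  have e' : ({y} : Multiset ℤ) = Multiset.Ico y (y + 1) := by
    refine (Multiset.Nodup.ext (Multiset.nodup_singleton y) Multiset.nodup_Ico).mpr fun x => ?_
    rw [Multiset.mem_singleton, Multiset.mem_Ico]
    omega
  rw [e', B, B, B, Multiset.Ico_add_Ico_eq_Ico h1 (by omega),
    Multiset.Ico_add_Ico_eq_Ico (by omega) (by omega)]

lemma coe_map_block (m : ℤ) (s n : ℕ) (a : ℤ) :
    (Multiset.ofList (List.map (fun l : Bool × ℤ => a - l.2) (block m s n)))
      = B (a - m + s) (a - m + s + n) := by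
  refine (Multiset.Nodup.ext ?_ Multiset.nodup_Ico).mpr fun x => ?_
  · rw [Multiset.coe_nodup, block, List.map_map]
    exact (List.nodup_range' 1).map fun i j h => by simpa using h
  · simp only [block, List.map_map, Multiset.mem_coe, List.mem_map, List.mem_range'_1,
      Multiset.mem_Ico, Function.comp]
    constructor
    · rintro ⟨i, hi, rfl⟩
      omega
    · intro h
      exact ⟨(x - a + m).toNat, by omega, by omega⟩

/-- `hopList` for `word p q r N`. -/
def wordHop (p q r : ℕ) (N : ℤ) : List ℤ :=
  hopList (p + q + r + 3) (block (p + q + r + 2) 0 p) (block (p + q + r + 2) (p + 1) q)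
    (block (p + q + r + 2) (p + q + 2) r) (q + r + 2 + N) (r + 1 + N) N

/-- The exponents picked up by an up-step are all of `1, …, T - 1` (shifted by `N`) except for
the distances, measured around the cylinder, from that up-step to the other two. -/
lemma wordHop_add (p q r : ℕ) (N : ℤ) :
    (wordHop p q r N : Multiset ℤ) + ({N + q + 1} + {N + q + r + 2} +
      ({N + r + 1} + {N + r + p + 2}) + ({N + p + 1} + {N + p + q + 2})) = 3 • B (N + 1) (N + p + q + r + 3) := by
  have h1 : B (N + 1) (N + q + 1) + {N + q + 1} + B (N + q + 1 + 1) (N + q + r + 2)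
      + {N + q + r + 2} + B (N + q + r + 2 + 1) (N + p + q + r + 3)
      = B (N + 1) (N + p + q + r + 3) := by
    rw [B_split (by omega) (by omega), B_split (by omega) (by omega)]
  have h2 : B (N + 1) (N + r + 1) + {N + r + 1} + B (N + r + 1 + 1) (N + r + p + 2)
      + {N + r + p + 2} + B (N + r + p + 2 + 1) (N + p + q + r + 3)
      = B (N + 1) (N + p + q + r + 3) := by
    rw [B_split (by omega) (by omega), B_split (by omega) (by omega)]
  have h3 : B (N + 1) (N + p + 1) + {N + p + 1} + B (N + p + 1 + 1) (N + p + q + 2)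
      + {N + p + q + 2} + B (N + p + q + 2 + 1) (N + p + q + r + 3)
      = B (N + 1) (N + p + q + r + 3) := by
    rw [B_split (by omega) (by omega), B_split (by omega) (by omega)]
  have h := congrArg₂ (· + ·) (congrArg₂ (· + ·) h1 h2) h3
  rw [show (3 : ℕ) • B (N + 1) (N + p + q + r + 3) = B (N + 1) (N + p + q + r + 3)
    + B (N + 1) (N + p + q + r + 3) + B (N + 1) (N + p + q + r + 3) by abel, ← h]
  simp only [wordHop, hopList, roundList, ← Multiset.coe_add, coe_map_block]
  push_cast
  ring_nf
  abel

/-- The key symmetry: reversing the order of the blocks does not change the exponents. -/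
lemma wordHop_perm (p q r : ℕ) (N : ℤ) : (wordHop p q r N).Perm (wordHop r q p N) := by
  have h1 := wordHop_add p q r N
  have h2 := wordHop_add r q p N
  rw [← Multiset.coe_eq_coe]
  rw [show N + r + q + p + 3 = N + p + q + r + 3 by ring, ← h1] at h2
  -- The six removed distances are the same for both orders of the blocks.
  refine (add_right_cancel (h2.trans (congrArg _ ?_))).symm
  rw [show N + p + q + 2 = N + q + p + 2 by ring, show N + q + r + 2 = N + r + q + 2 by ring,
    show N + r + p + 2 = N + p + r + 2 by ring]
  abel

lemma wordHop_nonneg (p q r : ℕ) {N : ℤ} (hN : 0 ≤ N) : ∀ d ∈ wordHop p q r N, 0 ≤ d := by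
  intro d hd
  have h : d ∈ 3 • B (N + 1) (N + p + q + r + 3) := by
    rw [← wordHop_add]
    exact Multiset.mem_add.mpr (Or.inl hd)
  have := Multiset.mem_of_mem_nsmul h
  rw [B, Multiset.mem_Ico] at this
  omega

/-- The exponents picked up when all up-steps go `M` times around the cylinder. -/
def total (p q r : ℕ) : ℕ → List ℤ
  | 0 => []
  | M + 1 => wordHop p q r (M * (p + q + r + 3)) ++ total p q r M

lemma total_perm (p q r M : ℕ) : (total p q r M).Perm (total r q p M) := by
  induction M with
  | zero => exact List.Perm.refl _
  | succ M ih =>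
    have : (p + q + r + 3 : ℤ) = r + q + p + 3 := by ring
    rw [total, total, this]
    exact (wordHop_perm p q r _).append ih

lemma total_nonneg (p q r M : ℕ) : ∀ d ∈ total p q r M, 0 ≤ d := by
  induction M with
  | zero => simp [total]
  | succ M ih =>
    intro d hd
    rcases List.mem_append.mp hd with h | h
    · exact wordHop_nonneg p q r (by positivity) d h
    · exact ih d h

lemma C_total (p q r M : ℕ) :
    (C (p + q + r + 3) (word p q r 0)).Iso
      ((C (p + q + r + 3) (word p q r (M * (p + q + r + 3)))).prod (K (total p q r M))) := by
  induction M with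
  | zero => simpa [total] using prod_unit _
  | succ M ih =>
    refine chain ih ?_
    have h := C_hop (p + q + r + 3) (block_false (p + q + r + 2) 0 p)
      (block_false (p + q + r + 2) (p + 1) q) (block_false (p + q + r + 2) (p + q + 2) r)
      (q + r + 2 + M * (p + q + r + 3)) (r + 1 + M * (p + q + r + 3)) (M * (p + q + r + 3))
    rw [word_eq, word_eq]
    have e : ((M + 1 : ℕ) : ℤ) * (p + q + r + 3) = M * (p + q + r + 3) + (p + q + r + 3) := by
      push_cast
      ring
    have e1 : (q + r + 2 + (M * (p + q + r + 3) + (p + q + r + 3)) : ℤ)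
        = q + r + 2 + M * (p + q + r + 3) + (p + q + r + 3) := by ring
    have e2 : (r + 1 + (M * (p + q + r + 3) + (p + q + r + 3)) : ℤ)
        = r + 1 + M * (p + q + r + 3) + (p + q + r + 3) := by ring
    rw [e, e1, e2]
    exact h

lemma abel_sum (s : ℕ → ℤ) (n : ℕ) :
    ∑ i ∈ Finset.range n, ((n : ℤ) - 1 - i) * (s (i + 1) - s i)
      = (∑ i ∈ Finset.range n, s i) - n * s 0 := by
  induction n with
  | zero => simp
  | succ n ih =>
    have h1 : ∑ i ∈ Finset.range n, (((n + 1 : ℕ) : ℤ) - 1 - i) * (s (i + 1) - s i)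
        = ∑ i ∈ Finset.range n, ((n : ℤ) - 1 - i) * (s (i + 1) - s i) + (s n - s 0) := by
      rw [← Finset.sum_range_sub, ← Finset.sum_add_distrib]
      refine Finset.sum_congr rfl fun i _ => ?_
      push_cast
      ring
    rw [Finset.sum_range_succ, Finset.sum_range_succ, h1, ih]
    push_cast
    ring

lemma word_length (p q r : ℕ) (N : ℤ) : (word p q r N).length = p + q + r + 3 := by simp [word]

lemma word_getD (p q r : ℕ) (N : ℤ) {i : ℕ} (hi : i < p + q + r + 3) :
    (word p q r N).getD i (true, 0)
      = (up p q r i, ((p + q + r + 2 - i : ℤ)) + if up p q r i then N else 0) := by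
  simp [word, hi]

/-- Closed paths of partitions with step types `up p q r`, weighted by the total size, plus `N`
times the total increase along the up-steps. -/
noncomputable def Conf (p q r : ℕ) (N : ℤ) : WT :=
  ⟨{μ : ℕ → Part // (∀ i, p + q + r + 3 ≤ i → μ i = μ 0) ∧
      ∀ i < p + q + r + 3, Step (up p q r i) (μ i) (μ (i + 1))},
    fun μ => (∑ i ∈ Finset.range (p + q + r + 3), ((μ.1 i).size : ℤ)) +
      N * ∑ i ∈ Finset.range (p + q + r + 3),
        if up p q r i then ((μ.1 (i + 1)).size : ℤ) - (μ.1 i).size else 0⟩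

lemma C_iso_Conf (p q r : ℕ) (N : ℤ) :
    (C (p + q + r + 3) (word p q r N)).Iso (Conf p q r N) := by
  refine (C_iso_CFn _ _).trans ⟨Equiv.subtypeEquivRight fun μ => ?_, fun μ => ?_⟩
  · rw [word_length]
    refine and_congr_right fun _ => forall₂_congr fun i hi => ?_
    rw [word_getD p q r N hi]
  · have key : ∀ s : ℕ → ℤ, (∑ i ∈ Finset.range (p + q + r + 3), s i) +
          N * ∑ i ∈ Finset.range (p + q + r + 3), (if up p q r i then s (i + 1) - s i else 0)
        = (p + q + r + 3 : ℤ) * s 0 + ∑ i ∈ Finset.range (word p q r N).length,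
          ((word p q r N).getD i (true, 0)).2 * (s (i + 1) - s i) := by
      intro s
      have h := abel_sum s (p + q + r + 3)
      rw [eq_sub_iff_add_eq] at h
      rw [← h, word_length, Finset.mul_sum, add_right_comm, ← Finset.sum_add_distrib, add_comm]
      push_cast
      congr 1
      refine Finset.sum_congr rfl fun i hi => ?_
      rw [word_getD p q r N (Finset.mem_range.mp hi)]
      change _ + N * (if up p q r i then s (i + 1) - s i else 0) = _
      split_ifs <;> ring
    exact key fun i => ((μ.1 i).size : ℤ)

/-- If the total increase along the up-steps is not positive, a closed path is constant. -/
lemma Conf.const {p q r : ℕ} {N : ℤ} (μ : (Conf p q r N).α)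
    (h : ∑ i ∈ Finset.range (p + q + r + 3),
      (if up p q r i then ((μ.1 (i + 1)).size : ℤ) - (μ.1 i).size else 0) ≤ 0) :
    ∀ i, μ.1 i = μ.1 0 := by
  obtain ⟨μ, h1, h2⟩ := μ
  simp only at h ⊢
  have hup : ∀ i ∈ Finset.range (p + q + r + 3),
      0 ≤ if up p q r i then ((μ (i + 1)).size : ℤ) - (μ i).size else 0 := by
    intro i hi
    have hs := h2 i (Finset.mem_range.mp hi)
    split_ifs with hu
    · rw [hu] at hs
      have := hs.size_le
      omega
    · exact le_rfl
  have hdown : ∀ i ∈ Finset.range (p + q + r + 3),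
      0 ≤ if up p q r i then 0 else ((μ i).size : ℤ) - (μ (i + 1)).size := by
    intro i hi
    have hs := h2 i (Finset.mem_range.mp hi)
    split_ifs with hu
    · exact le_rfl
    · rw [Bool.not_eq_true] at hu
      rw [hu] at hs
      have := hs.size_le
      omega
  have htot := Finset.sum_range_sub (fun i => ((μ i).size : ℤ)) (p + q + r + 3)
  rw [h1 _ le_rfl, sub_self] at htot
  have hup0 := le_antisymm h (Finset.sum_nonneg hup)
  have hdown0 : ∑ i ∈ Finset.range (p + q + r + 3),
      (if up p q r i then 0 else ((μ i).size : ℤ) - (μ (i + 1)).size) = 0 := by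
    refine (Finset.sum_congr rfl fun i _ => ?_).trans
      ((Finset.sum_sub_distrib _ _).trans ((congrArg₂ (· - ·) hup0 htot).trans (sub_self 0)))
    split_ifs <;> ring
  rw [Finset.sum_eq_zero_iff_of_nonneg hup] at hup0
  rw [Finset.sum_eq_zero_iff_of_nonneg hdown] at hdown0
  have hstep : ∀ i < p + q + r + 3, μ (i + 1) = μ i := by
    intro i hi
    have hs := h2 i hi
    have a1 := hup0 i (Finset.mem_range.mpr hi)
    have a2 := hdown0 i (Finset.mem_range.mpr hi)
    by_cases hu : up p q r i = true
    · rw [hu] at hs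
      rw [if_pos hu] at a1
      exact (hs.eq_of_size (by omega)).symm
    · rw [if_neg hu] at a2
      rw [Bool.not_eq_true] at hu
      rw [hu] at hs
      exact hs.eq_of_size (by omega)
  intro i
  obtain hi | hi := le_or_gt (p + q + r + 3) i
  · exact h1 i hi
  · induction i with
    | zero => rfl
    | succ i ih => rw [hstep i (by omega), ih (by omega)]

/-- Below weight `M`, only constant paths survive the shift of the up-parameters by `M * T`. -/
lemma Conf_lt (p q r M : ℕ) :
    ((Conf p q r (M * (p + q + r + 3))).lt M).Iso
      (WT.lt ⟨Part, fun a => (p + q + r + 3 : ℤ) * a.size⟩ M) := by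
  have hconst : ∀ x : ((Conf p q r (M * (p + q + r + 3))).lt M).α, ∀ i, x.1.1 i = x.1.1 0 := by
    rintro ⟨μ, hμ⟩
    refine Conf.const μ ?_
    by_contra! hpos
    have h1 : (0 : ℤ) ≤ ∑ i ∈ Finset.range (p + q + r + 3), ((μ.1 i).size : ℤ) :=
      Finset.sum_nonneg fun i _ => Int.natCast_nonneg _
    change _ + _ < (M : ℤ) at hμ
    have h2 : (M : ℤ) * (p + q + r + 3) * 1 ≤ M * (p + q + r + 3) *
        ∑ i ∈ Finset.range (p + q + r + 3),
          (if up p q r i then ((μ.1 (i + 1)).size : ℤ) - (μ.1 i).size else 0) :=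
      mul_le_mul_of_nonneg_left hpos (by positivity)
    have h3 : (M : ℤ) * 1 ≤ M * (p + q + r + 3) :=
      mul_le_mul_of_nonneg_left (by omega) (by positivity)
    linarith
  have hw : ∀ μ : (Conf p q r (M * (p + q + r + 3))).α, (∀ i, μ.1 i = μ.1 0) →
      (Conf p q r (M * (p + q + r + 3))).w μ = (p + q + r + 3 : ℤ) * (μ.1 0).size := by
    intro μ h
    change (∑ i ∈ Finset.range (p + q + r + 3), ((μ.1 i).size : ℤ)) + _ * ∑ i ∈ _, _ = _
    have e : ∀ i, ((μ.1 i).size : ℤ) = (μ.1 0).size := fun i => by rw [h i]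
    simp [e]
  refine ⟨⟨fun x => ⟨x.1.1 0, ?_⟩,
    fun a => ⟨⟨fun _ => a.1, fun _ _ => rfl, fun i _ => ?_⟩, ?_⟩, fun x => ?_, fun a => rfl⟩,
    fun x => ?_⟩
  · exact (hw x.1 (hconst x)).symm.trans_lt x.2
  · have : a.1.Inter a.1 := fun j => ⟨le_rfl, a.1.anti j⟩
    cases up p q r i <;> exact this
  · exact (hw _ fun _ => rfl).trans_lt a.2
  · exact Subtype.ext (Subtype.ext (funext fun i => (hconst x i).symm))
  · exact (hw x.1 (hconst x)).symm

lemma Conf_zero_nonneg (p q r : ℕ) (μ : (Conf p q r 0).α) : 0 ≤ (Conf p q r 0).w μ := by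
  refine add_nonneg (Finset.sum_nonneg fun i _ => Int.natCast_nonneg _) ?_
  rw [zero_mul]

/-- Borodin's formula up to weight `M`: a factor for the multiples of `T`, and the factors
recorded in `total p q r M`. -/
lemma Conf_zero_lt (p q r M : ℕ) : ((Conf p q r 0).lt M).Iso
    (((WT.lt ⟨Part, fun a => (p + q + r + 3 : ℤ) * a.size⟩ M).prod
      (K (total p q r M))).lt M) := by
  have h := ((C_iso_Conf p q r 0).symm.trans (C_total p q r M)).trans
    (prod_congr (C_iso_Conf p q r _) (Iso.refl _))
  exact (lt_congr h M).trans ((prod_lt _ (K_nonneg (total_nonneg p q r M)) M).trans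
    (lt_congr (prod_congr (Conf_lt p q r M) (Iso.refl _)) M))

/-- Reversing the order of the down-blocks preserves the weight enumerator. -/
theorem Conf_reverse (p q r : ℕ) : (Conf p q r 0).Iso (Conf r q p 0) := by
  refine iso_of_lt (fun M => ?_) (Conf_zero_nonneg p q r) (Conf_zero_nonneg r q p)
  have hT : (p + q + r + 3 : ℤ) = r + q + p + 3 := by ring
  have h := Conf_zero_lt p q r M
  rw [hT] at h
  exact h.trans ((lt_congr (prod_congr (Iso.refl _) (K_perm (total_perm p q r M))) M).trans
    (Conf_zero_lt r q p M).symm)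

/-! ### Cylindric partitions as closed paths -/

section Cells

/-- The residue modulo three. -/
def row (n : ℕ) : Fin 3 := Fin.ofNat 3 n

lemma row_succ (n : ℕ) : row (n + 1) = row n + 1 := by
  refine Fin.ext ?_
  simp only [row, Fin.val_add, Fin.val_ofNat, Fin.val_one]
  omega

lemma row_add_mul (n k : ℕ) : row (n + 3 * k) = row n := by
  refine Fin.ext ?_
  simp only [row, Fin.val_ofNat]
  omega

lemma row_val (i : Fin 3) : row i.1 = i := by
  refine Fin.ext ?_
  simp only [row, Fin.val_ofNat]
  omega

variable (c : Fin 3 → ℕ)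

/-- The horizontal offset of the `n`-th row, when the rows of a cylindric partition of profile `c`
are repeated with period three: the column condition compares the entry in column `j` of one row
with the entry in column `j + c` of the next, and the extra `1` per row makes room for one up-step
of the closed path. -/
def Q : ℕ → ℕ
  | 0 => 0
  | n + 1 => Q n + 1 + c (row (n + 1))

/-- The number of up-steps before time `s`. -/
def U (s : ℕ) : ℕ :=
  (if c 0 < s then 1 else 0) + (if c 0 + c 2 + 1 < s then 1 else 0) +
    if c 0 + c 2 + c 1 + 2 < s then 1 else 0

/-- The cell (row and column) of a cylindric partition that holds the `m`-th part of the `s`-th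
partition on the corresponding closed path. The shifts by `3` in the row and by
`T = c 0 + c 1 + c 2 + 3` in the column compensate each other and keep the subtractions in `ℕ`
from truncating when `s ≤ T`. -/
def cell (s m : ℕ) : Fin 3 × ℕ :=
  (row (m + 3 - U c s), s + Q c (m + 3 - U c s) - (c 0 + c 2 + c 1 + 3))

lemma Q_add (n : ℕ) : Q c (n + 3) = Q c n + (c 0 + c 2 + c 1 + 3) := by
  induction n with
  | zero =>
    change 0 + 1 + c 1 + 1 + c 2 + 1 + c 0 = 0 + (c 0 + c 2 + c 1 + 3)
    omega
  | succ n ih =>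
    have h : row (n + 3 + 1) = row (n + 1) := row_add_mul (n + 1) 1
    have hQ : ∀ n, Q c (n + 1) = Q c n + 1 + c (row (n + 1)) := fun _ => rfl
    rw [show n + 1 + 3 = (n + 3) + 1 by omega, hQ (n + 3), hQ n, ih, h]
    omega

lemma Q_add_mul (n k : ℕ) : Q c (n + 3 * k) = Q c n + (c 0 + c 2 + c 1 + 3) * k := by
  induction k with
  | zero => simp
  | succ k ih => rw [mul_add, mul_add, mul_one, mul_one, ← add_assoc, Q_add, ih, add_assoc]

lemma Q_mono : Monotone (Q c) :=
  monotone_nat_of_le_succ fun n => by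
    rw [Q]
    omega

lemma le_Q (n : ℕ) : n ≤ Q c n := by
  induction n with
  | zero => exact le_rfl
  | succ n ih =>
    rw [Q]
    omega

lemma Q_zero : Q c 0 = 0 := rfl
lemma Q_one : Q c 1 = 1 + c 1 := congrArg (· + c 1) (zero_add 1)
lemma Q_two : Q c 2 = 1 + c 1 + 1 + c 2 := congrArg (· + 1 + c 2) (Q_one c)

lemma U_le (s : ℕ) : U c s ≤ 3 := by
  unfold U
  split_ifs <;> omega

lemma U_succ (s : ℕ) : U c (s + 1) = U c s + if up (c 0) (c 2) (c 1) s then 1 else 0 := by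
  simp only [U, up, decide_eq_true_eq]
  split_ifs <;> omega

/-- The columns of the cells are not truncated. -/
lemma le_col {s : ℕ} (hs : s ≤ c 0 + c 2 + c 1 + 3) (m : ℕ) :
    c 0 + c 2 + c 1 + 3 ≤ s + Q c (m + 3 - U c s) := by
  have h := Q_mono c (show 3 - U c s ≤ m + 3 - U c s by omega)
  have h3 : Q c 3 = _ := Q_add c 0
  have h0 := Q_zero c
  have h1 := Q_one c
  have h2 := Q_two c
  have hU : U c s = 0 ∨ U c s = 1 ∧ c 0 < s ∨ U c s = 2 ∧ c 0 + c 2 + 1 < s ∨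
      U c s = 3 ∧ c 0 + c 2 + c 1 + 2 < s := by
    unfold U
    split_ifs <;> omega
  rcases hU with hU | ⟨hU, _⟩ | ⟨hU, _⟩ | ⟨hU, _⟩ <;> rw [hU] at h ⊢ <;>
    simp only [Nat.sub_zero, Nat.sub_self, Nat.reduceSub] at h ⊢ <;> omega

lemma cell_period (m : ℕ) : cell c (c 0 + c 2 + c 1 + 3) m = cell c 0 m := by
  have h1 : U c (c 0 + c 2 + c 1 + 3) = 3 := by
    simp only [U]
    split_ifs <;> omega
  have h2 : U c 0 = 0 := by simp [U]
  rw [cell, cell, h1, h2, Nat.add_sub_cancel, Nat.sub_zero, Q_add]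
  refine Prod.ext (row_add_mul m 1).symm ?_
  simp only
  omega

/-- Going one step forward in time moves a cell to the right. -/
lemma cell_succ {s : ℕ} (hs : s < c 0 + c 2 + c 1 + 3) (m : ℕ) :
    cell c (s + 1) (m + if up (c 0) (c 2) (c 1) s then 1 else 0)
      = ((cell c s m).1, (cell c s m).2 + 1) := by
  have h1 := U_succ c s
  have h2 := U_le c (s + 1)
  have h3 := le_col c hs.le m
  have e : (m + if up (c 0) (c 2) (c 1) s then 1 else 0) + 3 - U c (s + 1) = m + 3 - U c s := by
    omega
  rw [cell, e]
  refine Prod.ext rfl ?_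
  simp only [cell]
  omega

/-- Going one step back in time moves a cell to the cell of the next row that it is
compared with. -/
lemma cell_pred {s : ℕ} (hs : s < c 0 + c 2 + c 1 + 3) (m : ℕ) :
    cell c s (m + if up (c 0) (c 2) (c 1) s then 0 else 1)
      = ((cell c (s + 1) m).1 + 1,
        (cell c (s + 1) m).2 + c ((cell c (s + 1) m).1 + 1)) := by
  have h1 := U_succ c s
  have h2 := U_le c (s + 1)
  have h3 := le_col c (show s + 1 ≤ _ from hs) m
  have e : (m + if up (c 0) (c 2) (c 1) s then 0 else 1) + 3 - U c s
      = m + 3 - U c (s + 1) + 1 := by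
    split_ifs at h1 ⊢ <;> omega
  have e' := row_succ (m + 3 - U c (s + 1))
  rw [cell, e]
  refine Prod.ext e' ?_
  simp only [cell]
  rw [Q, e']
  omega

/-- Every cell is visited exactly once. -/
lemma cell_bijective : Function.Bijective
    fun x : Fin (c 0 + c 2 + c 1 + 3) × ℕ => cell c x.1 x.2 := by
  constructor
  · rintro ⟨⟨s, hs⟩, m⟩ ⟨⟨s', hs'⟩, m'⟩ h
    have h1 := congrArg Prod.fst h
    have h2 := congrArg Prod.snd h
    simp only [cell] at h1 h2
    have h3 := le_col c hs.le m
    have h4 := le_col c hs'.le m'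
    have hU := U_le c s
    have hU' := U_le c s'
    replace h1 : m + 3 - U c s ≡ m' + 3 - U c s' [MOD 3] := congrArg Fin.val h1
    have key : ∀ s s' n n' : ℕ, s < c 0 + c 2 + c 1 + 3 → n ≤ n' → n ≡ n' [MOD 3] →
        s + Q c n = s' + Q c n' → n = n' := by
      intro s s' n n' hs hn hmod hQ
      obtain ⟨k, hk⟩ := (Nat.modEq_iff_dvd' hn).mp hmod
      obtain rfl : n' = n + 3 * k := by omega
      rw [Q_add_mul] at hQ
      cases k with
      | zero => rfl
      | succ k =>
        rw [mul_add] at hQ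
        omega
    have hn : m + 3 - U c s = m' + 3 - U c s' := by
      obtain hle | hle := le_total (m + 3 - U c s) (m' + 3 - U c s')
      · exact key s s' _ _ hs hle h1 (by omega)
      · exact (key s' s _ _ hs' hle h1.symm (by omega)).symm
    have hss : s = s' := by
      rw [hn] at h2 h3
      omega
    subst hss
    obtain rfl : m = m' := by omega
    rfl
  · rintro ⟨i, j⟩
    have hQ : Q c i.1 ≤ c 0 + c 2 + c 1 + 3 ∧ (i.1 = 0 ∧ Q c i.1 = 0 ∨
        i.1 = 1 ∧ Q c i.1 = 1 + c 1 ∨ i.1 = 2 ∧ Q c i.1 = 1 + c 1 + 1 + c 2) := by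
      have h0 := Q_zero c
      have h1 := Q_one c
      have h2 := Q_two c
      obtain h | h | h : i.1 = 0 ∨ i.1 = 1 ∨ i.1 = 2 := by omega
      all_goals rw [h]; omega
    have hdiv := Nat.mod_add_div (j + (c 0 + c 2 + c 1 + 3) - Q c i.1) (c 0 + c 2 + c 1 + 3)
    have hs := Nat.mod_lt (j + (c 0 + c 2 + c 1 + 3) - Q c i.1)
      (show 0 < c 0 + c 2 + c 1 + 3 by omega)
    set s := (j + (c 0 + c 2 + c 1 + 3) - Q c i.1) % (c 0 + c 2 + c 1 + 3)
    set k := (j + (c 0 + c 2 + c 1 + 3) - Q c i.1) / (c 0 + c 2 + c 1 + 3)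
    have hU : 3 ≤ i.1 + 3 * k + U c s := by
      obtain hk | hk := Nat.eq_zero_or_pos k
      · rw [hk, mul_zero] at hdiv
        unfold U
        split_ifs <;> omega
      · omega
    refine ⟨(⟨s, hs⟩, i.1 + 3 * k + U c s - 3), ?_⟩
    have e : i.1 + 3 * k + U c s - 3 + 3 - U c s = i.1 + 3 * k := by omega
    simp only [cell]
    rw [e, Q_add_mul]
    refine Prod.ext ((row_add_mul i.1 k).trans (row_val i)) ?_
    simp only
    omega

/-- The bijection `cell` between times in one period and positions, and cells. -/
noncomputable def cellEquiv : Fin (c 0 + c 2 + c 1 + 3) × ℕ ≃ Fin 3 × ℕ :=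
  Equiv.ofBijective _ (cell_bijective c)

lemma exists_cell (x : Fin 3 × ℕ) : ∃ s < c 0 + c 2 + c 1 + 3, ∃ m, cell c s m = x := by
  obtain ⟨⟨s, m⟩, h⟩ := (cell_bijective c).2 x
  exact ⟨s.1, s.2, m, h⟩

/-- Every cell is visited once at a time in `1, …, T` as well. -/
lemma exists_cell_succ (x : Fin 3 × ℕ) :
    ∃ s < c 0 + c 2 + c 1 + 3, ∃ m, cell c (s + 1) m = x := by
  obtain ⟨s, hs, m, h⟩ := exists_cell c x
  cases s with
  | zero => exact ⟨c 0 + c 2 + c 1 + 2, by omega, m, (cell_period c m).trans h⟩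
  | succ s => exact ⟨s, by omega, m, h⟩

variable {c}

/-- The row and column conditions on a cylindric partition, read off along the closed path. -/
lemma fwd_inter (Λ : CylindricPartition 3 c) {s : ℕ} (hs : s < c 0 + c 2 + c 1 + 3) (m : ℕ) :
    Λ.part (cell c (s + 1) (m + if up (c 0) (c 2) (c 1) s then 1 else 0)).1
        (cell c (s + 1) (m + if up (c 0) (c 2) (c 1) s then 1 else 0)).2
      ≤ Λ.part (cell c s m).1 (cell c s m).2 ∧
    Λ.part (cell c s (m + if up (c 0) (c 2) (c 1) s then 0 else 1)).1
        (cell c s (m + if up (c 0) (c 2) (c 1) s then 0 else 1)).2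
      ≤ Λ.part (cell c (s + 1) m).1 (cell c (s + 1) m).2 := by
  rw [cell_succ c hs, cell_pred c hs]
  exact ⟨Λ.antitone _ (Nat.le_succ _), Λ.cyl _ _⟩

/-- The `s`-th partition, for `s` in one period, on the closed path of a cylindric partition. -/
def fwdPart (Λ : CylindricPartition 3 c) (s : Fin (c 0 + c 2 + c 1 + 3)) : Part where
  f m := Λ.part (cell c s m).1 (cell c s m).2
  anti m := by
    have h1 := (fwd_inter Λ s.2 m).1
    have h2 := (fwd_inter Λ s.2 m).2
    have h3 := (fwd_inter Λ s.2 (m + 1)).1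
    have h4 := (fwd_inter Λ s.2 (m + 1)).2
    split_ifs at h1 h2 h3 h4
    · exact h4.trans h1
    · exact h2.trans h1
  fin := by
    choose N hN using Λ.finite_support
    refine ⟨N 0 + N 1 + N 2 + (c 0 + c 2 + c 1 + 3), fun m hm => hN _ _ ?_⟩
    have h1 : ∀ i, N i ≤ N 0 + N 1 + N 2 := by
      intro i
      fin_cases i <;> simp <;> omega
    have h2 := h1 (cell c s m).1
    have h3 := le_Q c (m + 3 - U c s)
    have h4 := U_le c s
    refine h2.trans ?_
    simp only [cell]
    omega

/-- The closed path of a cylindric partition. -/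
def fwd (Λ : CylindricPartition 3 c) (s : ℕ) : Part :=
  if h : s < c 0 + c 2 + c 1 + 3 then fwdPart Λ ⟨s, h⟩ else fwdPart Λ ⟨0, by omega⟩

lemma fwd_f (Λ : CylindricPartition 3 c) {s : ℕ} (hs : s ≤ c 0 + c 2 + c 1 + 3) (m : ℕ) :
    (fwd Λ s).f m = Λ.part (cell c s m).1 (cell c s m).2 := by
  unfold fwd
  split_ifs with h
  · rfl
  · obtain rfl : s = c 0 + c 2 + c 1 + 3 := by omega
    rw [cell_period]
    rfl

lemma fwd_step (Λ : CylindricPartition 3 c) {s : ℕ} (hs : s < c 0 + c 2 + c 1 + 3) :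
    Step (up (c 0) (c 2) (c 1) s) (fwd Λ s) (fwd Λ (s + 1)) := by
  have h := fwd_inter Λ hs
  cases hu : up (c 0) (c 2) (c 1) s <;> intro m <;>
    rw [fwd_f Λ hs.le, fwd_f Λ hs, fwd_f Λ (by omega)] <;> simpa [hu, and_comm] using h m

/-- The entry of a closed path at a cell. -/
noncomputable def bwdPart (μ : ℕ → Part) (x : Fin 3 × ℕ) : ℕ :=
  (μ ((cellEquiv c).symm x).1).f ((cellEquiv c).symm x).2

lemma bwdPart_cell (μ : (Conf (c 0) (c 2) (c 1) 0).α) {s : ℕ} (hs : s ≤ c 0 + c 2 + c 1 + 3)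
    (m : ℕ) : bwdPart (c := c) μ.1 (cell c s m) = (μ.1 s).f m := by
  have h : ∀ s : Fin (c 0 + c 2 + c 1 + 3), bwdPart (c := c) μ.1 (cell c s m) = (μ.1 s).f m := by
    intro s
    have e : (cellEquiv c).symm (cell c s m) = (s, m) := (cellEquiv c).symm_apply_apply (s, m)
    rw [bwdPart, e]
  obtain hs | rfl := hs.lt_or_eq
  · exact h ⟨s, hs⟩
  · rw [cell_period, μ.2.1 _ le_rfl]
    exact h ⟨0, by omega⟩

lemma conf_step (μ : (Conf (c 0) (c 2) (c 1) 0).α) {s : ℕ} (hs : s < c 0 + c 2 + c 1 + 3)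
    (m : ℕ) :
    (μ.1 (s + 1)).f (m + if up (c 0) (c 2) (c 1) s then 1 else 0) ≤ (μ.1 s).f m ∧
    (μ.1 s).f (m + if up (c 0) (c 2) (c 1) s then 0 else 1) ≤ (μ.1 (s + 1)).f m := by
  have h := μ.2.2 s hs
  cases hu : up (c 0) (c 2) (c 1) s <;> rw [hu] at h
  · exact ⟨(h m).1, (h m).2⟩
  · exact ⟨(h m).2, (h m).1⟩

/-- The cylindric partition of a closed path. -/
noncomputable def bwd (μ : (Conf (c 0) (c 2) (c 1) 0).α) : CylindricPartition 3 c where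
  part i j := bwdPart (c := c) μ.1 (i, j)
  antitone i := antitone_nat_of_succ_le fun j => by
    obtain ⟨s, hs, m, h⟩ := exists_cell c (i, j)
    have h1 := cell_succ c hs m
    rw [h] at h1
    simp only at h1
    rw [← h, ← h1, bwdPart_cell μ hs.le, bwdPart_cell μ hs]
    exact (conf_step μ hs m).1
  finite_support i := by
    choose N hN using fun s => (μ.1 s).fin
    obtain ⟨M, hM⟩ : ∃ M, ∀ s < c 0 + c 2 + c 1 + 3, N s ≤ M :=
      ⟨(Finset.range (c 0 + c 2 + c 1 + 3)).sup N, fun s hs =>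
        Finset.le_sup (f := N) (Finset.mem_range.mpr hs)⟩
    refine ⟨Q c (M + 3), fun j hj => ?_⟩
    obtain ⟨s, hs, m, h⟩ := exists_cell c (i, j)
    rw [← h, bwdPart_cell μ hs.le]
    refine hN s m ((hM s hs).trans ?_)
    by_contra! hm
    have h1 := congrArg Prod.snd h
    simp only [cell] at h1
    have h2 := Q_mono c (show m + 3 - U c s ≤ M + 3 by omega)
    have h3 := le_Q c (M + 3)
    omega
  cyl i j := by
    obtain ⟨s, hs, m, h⟩ := exists_cell_succ c (i, j)
    have h1 := cell_pred c hs m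
    rw [h] at h1
    simp only at h1
    rw [← h, ← h1, bwdPart_cell μ hs.le, bwdPart_cell μ hs]
    exact (conf_step μ hs m).2

lemma part_ext {Λ Λ' : CylindricPartition 3 c} (h : ∀ i j, Λ.part i j = Λ'.part i j) :
    Λ = Λ' := by
  cases Λ
  cases Λ'
  congr
  funext i j
  exact h i j

lemma size_eq_sum (Λ : CylindricPartition 3 c) :
    Λ.size = ∑ s ∈ Finset.range (c 0 + c 2 + c 1 + 3), (fwd Λ s).size := by
  choose N hN using Λ.finite_support
  have hsum : Summable fun x : Fin 3 × ℕ => Λ.part x.1 x.2 := by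
    refine summable_of_hasFiniteSupport
      ((Finset.univ ×ˢ Finset.range (Finset.univ.sup N)).finite_toSet.subset fun x hx => ?_)
    by_contra hx'
    refine hx (hN _ _ ((Finset.le_sup (Finset.mem_univ x.1)).trans ?_))
    simpa using hx'
  have hrow : ∀ (f : ℕ → ℕ) (n : ℕ), (∀ j, n ≤ j → f j = 0) → Summable f := by
    intro f n h
    refine summable_of_hasFiniteSupport ((Finset.range n).finite_toSet.subset fun j hj => ?_)
    by_contra hj'
    exact hj (h j (by simpa using hj'))
  have hsum' := (cellEquiv c).summable_iff.mpr hsum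
  rw [CylindricPartition.size, ← hsum.tsum_prod' fun i => hrow _ _ (hN i),
    ← (cellEquiv c).tsum_eq, Finset.sum_range]
  refine (hsum'.tsum_prod' fun s => ?_).trans ((tsum_fintype _).trans ?_)
  · obtain ⟨n, hn⟩ := (fwdPart Λ s).fin
    exact hrow _ n hn
  · refine Finset.sum_congr rfl fun s _ => ?_
    rw [fwd, dif_pos s.2]
    rfl

/-- Cylindric partitions of profile `c`, weighted by their size. -/
noncomputable def Cyl (c : Fin 3 → ℕ) : WT := ⟨CylindricPartition 3 c, fun Λ => (Λ.size : ℤ)⟩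

/-- Cylindric partitions of profile `c` are closed paths of partitions. -/
theorem Cyl_iso (c : Fin 3 → ℕ) : (Cyl c).Iso (Conf (c 0) (c 2) (c 1) 0) := by
  have hper : ∀ Λ : CylindricPartition 3 c, ∀ i, c 0 + c 2 + c 1 + 3 ≤ i → fwd Λ i = fwd Λ 0 := by
    intro Λ i hi
    rw [fwd, fwd, dif_neg (by omega), dif_pos (by omega)]
  refine ⟨⟨fun Λ => ⟨fwd Λ, hper Λ, fun s hs => fwd_step Λ hs⟩, bwd,
    fun Λ => ?_, fun μ => ?_⟩, fun (Λ : CylindricPartition 3 c) => ?_⟩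
  · refine part_ext fun i j => ?_
    obtain ⟨s, hs, m, h⟩ := exists_cell c (i, j)
    change bwdPart (c := c) (fwd Λ) (i, j) = _
    rw [← h]
    refine (bwdPart_cell ⟨fwd Λ, hper Λ, fun s hs => fwd_step Λ hs⟩ hs.le m).trans
      ((fwd_f Λ hs.le m).trans ?_)
    rw [h]
  · have key : ∀ s ≤ c 0 + c 2 + c 1 + 3, fwd (bwd μ) s = μ.1 s := by
      intro s hs
      refine Part.ext (funext fun m => ?_)
      rw [fwd_f _ hs]
      exact bwdPart_cell μ hs m
    refine Subtype.ext (funext fun s => ?_)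
    obtain hs | hs := le_or_gt s (c 0 + c 2 + c 1 + 3)
    · exact key s hs
    · exact (hper _ s hs.le).trans ((key 0 (Nat.zero_le _)).trans (μ.2.1 s hs.le).symm)
  · have h : (∑ s ∈ Finset.range (c 0 + c 2 + c 1 + 3), ((fwd Λ s).size : ℤ)) = (Λ.size : ℤ) := by
      rw [size_eq_sum, Nat.cast_sum]
    refine Eq.trans ?_ h
    change _ + 0 * _ = _
    rw [zero_mul, add_zero]
    rfl

end Cells

end CylSwap

/-- For positive `c₁, c₂, c₃`, the generating functions of cylindric partitions of profiles
`(c₁, c₂, c₃)` and `(c₂, c₁, c₃)` at `z = 1` coincide. -/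
theorem cylGF_swap (c₁ c₂ c₃ : ℕ) (h₁ : 0 < c₁) (h₂ : 0 < c₂) (h₃ : 0 < c₃) :
    cylGF 3 ![c₁, c₂, c₃] = cylGF 3 ![c₂, c₁, c₃] := by
  have h : (CylSwap.Cyl ![c₁, c₂, c₃]).Iso (CylSwap.Cyl ![c₂, c₁, c₃]) :=
    (CylSwap.Cyl_iso ![c₁, c₂, c₃]).trans
      ((CylSwap.Conf_reverse c₁ c₃ c₂).trans (CylSwap.Cyl_iso ![c₂, c₁, c₃]).symm)
  obtain ⟨(e : CylindricPartition 3 ![c₁, c₂, c₃] ≃ CylindricPartition 3 ![c₂, c₁, c₃]), he⟩ := h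
  rw [cylGF, cylGF, ← e.tsum_eq]
  refine tsum_congr fun Λ => congrArg (PowerSeries.X ^ ·) ?_
  exact (Int.ofNat_inj.mp (he Λ)).symm
end

section
/- First new modulus-8 A_2 Rogers–Ramanujan identity: the quadruple sum over n_1,n_2,n_3,n_4 ≥ 0 of q^(n_1^2+n_2^2+n_3^2+n_4^2+n_1+n_2+n_3+n_4-n_1n_2+n_2n_4)/(q;q)_{n_1} · [n_1 choose n_2]_q [n_1 choose n_4]_q [n_2 choose n_3]_q equals 1/((q^2,q^3,q^3,q^4,q^4,q^5,q^5,q^6; q^8)_∞). -/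
/-!
The identity is the limit `N → ∞` of a polynomial-type identity `r500 t N = wP t N 1 1`.

*Sum side.* `r500 t N` is the quadruple sum with an extra factor `1 / (t;t)_{N - n₁}`. It is one of
seven sums, indexed by the profiles `(c₀, c₁, c₂)` with `c₀ + c₁ + c₂ = 5` up to rotation. All of
them are combinations of the sums `Sq t N a b c d` with an arbitrary linear form in the exponent,
and these satisfy the contiguous relations `rel1`, `rel2`, `rel3`, `rel4`, `rel12`: multiplying the
summand by a factor `1 - t ^ k` lowers the index of a Pochhammer symbol, after which a summation
variable can be shifted. Linear combinations of these relations express the seven sums at `N - 1`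
through the seven sums at `N`.

*Product side.* `wP t N A B` is a double sum over the triples of integers `(g₁, g₂, g₃)` with
`g₁ + g₂ + g₃ = 0`, carrying a character modulo `3` and the factor `∏ 1 / (t;t)_{N + gᵢ}`.
Expanding `∏ (1 - t ^ (N + gᵢ))` expresses `wP t (N - 1) A B` through `wP t N` at `(A, B)` and
at its six neighbours (`wP_sub_one`). The rotation of the triple (`wP_rot`) and a reflection
(`wP_wall`) bring the neighbours that leave the alcove back into it, and the result is the same
system of seven recurrences.

*Uniqueness.* For `t = T` in the field of formal Laurent series, the difference of two solutions
that agree at `N - 1` is `T ^ N` times a combination of such differences with coefficients without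
negative powers of `T`, hence it vanishes to every order (`eq_zero_of_contract`). As all sums are
`1` for `N = 0`, the two sides agree.

*Limit.* For `N → ∞` this gives `(∑ fS) (T;T)_∞² = ∑ wS`, where `∑ fS` is the quadruple sum and
`∑ wS` is a binary theta series. The product of `∑ wS` with a suitable unary theta series is a
product of three unary theta series (`wS_mul`), by a linear change of the three summation
variables and the cancellation of one residue class modulo `3`. The Jacobi triple product
(`jS_eq`, obtained from its finite form `jT_prod`) turns all unary series into products. Finally,
convergence in the Laurent series field implies coefficientwise convergence of power series
(`exists_tendsto`).
-/

open scoped Finset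

/-- The formal variable `q`. -/
noncomputable def q : PowerSeries ℚ := PowerSeries.X

/-- The q-Pochhammer symbol `(q;q)_n = ∏_{k=0}^{n-1} (1 - q·q^k)`. -/
noncomputable def qPoch (n : ℕ) : PowerSeries ℚ :=
  ∏ k ∈ Finset.range n, (1 - q ^ (k + 1))

/-- The Gaussian binomial coefficient `[m choose k]_q`, zero unless `k ≤ m`. -/
noncomputable def qBinom (m k : ℕ) : PowerSeries ℚ :=
  if k ≤ m then qPoch m * (qPoch k * qPoch (m - k))⁻¹ else 0

/-! ### Truncated sums and their contiguous relations -/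

section Field

variable {K : Type*} [Field K]

/-- The reciprocal `1 / (t;t)_n` of a Pochhammer symbol, for `n : ℤ`; it is zero for `n < 0`. -/
noncomputable def ip (t : K) (n : ℤ) : K :=
  if 0 ≤ n then (∏ k ∈ Finset.range n.toNat, (1 - t ^ (k + 1)))⁻¹ else 0

/-- The Pochhammer symbol `(t;t)_{n-1}` for `n ≥ 1`, extended by zero to `n ≤ 0`. -/
noncomputable def pn (t : K) (n : ℤ) : K :=
  if 1 ≤ n then ∏ k ∈ Finset.range (n - 1).toNat, (1 - t ^ (k + 1)) else 0

variable {t : K}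

lemma ip_neg {n : ℤ} (h : n < 0) : ip t n = 0 := by
  simp [ip, not_le.2 h]

lemma ip_zero : ip t 0 = 1 := by simp [ip]

lemma ip_natCast (n : ℕ) : ip t n = (∏ k ∈ Finset.range n, (1 - t ^ (k + 1)))⁻¹ := by
  simp [ip]

lemma ip_nonneg_of_ne {n : ℤ} (h : ip t n ≠ 0) : 0 ≤ n := by
  by_contra h'
  exact h (ip_neg (not_le.1 h'))

lemma pn_nonpos {n : ℤ} (h : n ≤ 0) : pn t n = 0 := by
  simp [pn, show ¬ (1 ≤ n) by omega]

lemma pn_one : pn t 1 = 1 := by simp [pn]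

lemma pn_natCast (n : ℕ) : pn t (n + 1) = ∏ k ∈ Finset.range n, (1 - t ^ (k + 1)) := by
  simp [pn]

lemma mul_ip (ht1 : ∀ n : ℕ, t ^ (n + 1) ≠ 1) (n : ℤ) :
    (1 - t ^ n) * ip t n = ip t (n - 1) := by
  rcases lt_trichotomy n 0 with h | rfl | h
  · rw [ip_neg h, ip_neg (by omega), mul_zero]
  · rw [ip_neg (n := 0 - 1) (by omega)]; simp
  · obtain ⟨m, rfl⟩ : ∃ m : ℕ, n = m + 1 := ⟨(n - 1).toNat, by omega⟩
    have e : (m : ℤ) + 1 = ((m + 1 : ℕ) : ℤ) := by push_cast; rfl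
    rw [add_sub_cancel_right, e, ip_natCast, ip_natCast, Finset.prod_range_succ, zpow_natCast]
    have : 1 - t ^ (m + 1) ≠ 0 := sub_ne_zero.2 (ht1 m).symm
    rw [mul_inv]
    field_simp

lemma mul_pn (n : ℤ) : pn t (n + 1) = (1 - t ^ n) * pn t n + if n = 0 then 1 else 0 := by
  rcases lt_trichotomy n 0 with h | rfl | h
  · rw [pn_nonpos (by omega), pn_nonpos (by omega), if_neg (by omega)]; simp
  · simp [pn_one, pn_nonpos]
  · obtain ⟨m, rfl⟩ : ∃ m : ℕ, n = m + 1 := ⟨(n - 1).toNat, by omega⟩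
    have e : (m : ℤ) + 1 = ((m + 1 : ℕ) : ℤ) := by push_cast; rfl
    rw [if_neg (by omega), pn_natCast, e, pn_natCast, Finset.prod_range_succ, zpow_natCast]
    ring

/-- The exponent of `t` in the summand: a quadratic form plus the linear form given by
`(a, b, c, d)`. -/
def qf (a b c d n1 n2 n3 n4 : ℤ) : ℤ :=
  n1 ^ 2 + n2 ^ 2 + n3 ^ 2 + n4 ^ 2 - n1 * n2 + n2 * n4 + a * n1 + b * n2 + c * n3 + d * n4

/-- The part of the summand of the quadruple sum that does not involve the Pochhammer symbol of
`n₁`, with the linear form `a n₁ + b n₂ + c n₃ + d n₄` in the exponent. -/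
noncomputable def core (t : K) (N a b c d : ℤ) (n : ℤ × ℤ × ℤ × ℤ) : K :=
  t ^ qf a b c d n.1 n.2.1 n.2.2.1 n.2.2.2
    * ip t (n.1 - n.2.1) * ip t (n.2.1 - n.2.2.1) * ip t n.2.2.1 * ip t n.2.2.2
    * ip t (n.1 - n.2.2.2) * ip t (N - n.1)

/-- The truncated quadruple sum with `(t;t)_{n₁-1}` (and `n₁ ≥ 1`). -/
noncomputable def Sp (t : K) (N a b c d : ℤ) : K :=
  ∑ᶠ n : ℤ × ℤ × ℤ × ℤ, pn t n.1 * core t N a b c d n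

/-- The truncated quadruple sum with `(t;t)_{n₁}` (and `n₁ ≥ 0`). -/
noncomputable def Sq (t : K) (N a b c d : ℤ) : K :=
  ∑ᶠ n : ℤ × ℤ × ℤ × ℤ, pn t (n.1 + 1) * core t N a b c d n

lemma core_ne_zero {N a b c d : ℤ} {n : ℤ × ℤ × ℤ × ℤ} (h : core t N a b c d n ≠ 0) :
    0 ≤ n.2.2.2 ∧ n.2.2.2 ≤ n.1 ∧ 0 ≤ n.2.2.1 ∧ n.2.2.1 ≤ n.2.1 ∧ n.2.1 ≤ n.1 ∧ n.1 ≤ N := by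
  simp only [core, ne_eq, mul_eq_zero, not_or] at h
  obtain ⟨⟨⟨⟨⟨⟨-, h1⟩, h2⟩, h3⟩, h4⟩, h5⟩, h6⟩ := h
  have := ip_nonneg_of_ne h1
  have := ip_nonneg_of_ne h2
  have := ip_nonneg_of_ne h3
  have := ip_nonneg_of_ne h4
  have := ip_nonneg_of_ne h5
  have := ip_nonneg_of_ne h6
  omega

lemma core_support (N a b c d : ℤ) : (core t N a b c d).HasFiniteSupport := by
  refine ((Finset.Icc (0 : ℤ) N) ×ˢ (Finset.Icc (0 : ℤ) N) ×ˢ (Finset.Icc (0 : ℤ) N) ×ˢ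
    (Finset.Icc (0 : ℤ) N)).finite_toSet.subset fun n hn => ?_
  have := core_ne_zero (Function.mem_support.1 hn)
  simp only [Finset.coe_product, Finset.coe_Icc, Set.mem_prod, Set.mem_Icc]
  omega

lemma mul_core_support (w : ℤ × ℤ × ℤ × ℤ → K) (N a b c d : ℤ) :
    Function.HasFiniteSupport fun n => w n * core t N a b c d n :=
  (core_support (t := t) N a b c d).subset fun _ hn => right_ne_zero_of_mul hn

/-- Two finitely supported families that agree up to a constant factor and a translation have
proportional sums. -/
lemma finsum_shift {ι : Type*} [AddGroup ι] {f g : ι → K} (e : ι) (r : K)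
    (h : ∀ n, f n = r * g (n - e)) : ∑ᶠ n, f n = r * ∑ᶠ n, g n := by
  rw [mul_finsum, ← finsum_comp_equiv (Equiv.subRight e) (f := fun n => r * g n)]
  exact finsum_congr fun n => by simpa using h n

/-- Both sides are the sum with the extra factor `1 - t ^ (n₂ - n₃)`; on the right, `n₂` is shifted by
one and the factor is traded for `1 - t ^ (n₁ - n₂)`. -/
lemma rel2 (ht : t ≠ 0) (ht1 : ∀ n : ℕ, t ^ (n + 1) ≠ 1) (N a b c d : ℤ) :
    Sp t N a b c d - Sp t N a (b + 1) (c - 1) d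
      = t ^ (1 + b) * (Sp t N (a - 1) (b + 2) c (d + 1) - Sp t N a (b + 1) c (d + 1)) := by
  simp only [Sp]
  rw [← finsum_sub_distrib (mul_core_support _ _ _ _ _ _) (mul_core_support _ _ _ _ _ _),
    ← finsum_sub_distrib (mul_core_support _ _ _ _ _ _) (mul_core_support _ _ _ _ _ _)]
  refine finsum_shift (0, 1, 0, 0) _ fun n => ?_
  obtain ⟨n1, n2, n3, n4⟩ := n
  simp only [core, Prod.mk_sub_mk, sub_zero]
  have e1 := mul_ip ht1 (n2 - n3)
  have e2 := mul_ip ht1 (n1 - n2 + 1)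
  rw [show n1 - n2 + 1 - 1 = n1 - n2 by ring] at e2
  rw [show n1 - (n2 - 1) = n1 - n2 + 1 by ring, show n2 - 1 - n3 = n2 - n3 - 1 by ring]
  have h1 : t ^ qf a (b + 1) (c - 1) d n1 n2 n3 n4
      = t ^ qf a b c d n1 n2 n3 n4 * t ^ (n2 - n3) := by
    rw [← zpow_add₀ ht]; congr 1; simp only [qf]; ring
  have h2 : t ^ (1 + b) * t ^ qf (a - 1) (b + 2) c (d + 1) n1 (n2 - 1) n3 n4
      = t ^ qf a b c d n1 n2 n3 n4 := by
    rw [← zpow_add₀ ht]; congr 1; simp only [qf]; ring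
  have h3 : t ^ (1 + b) * t ^ qf a (b + 1) c (d + 1) n1 (n2 - 1) n3 n4
      = t ^ qf a b c d n1 n2 n3 n4 * t ^ (n1 - n2 + 1) := by
    rw [← zpow_add₀ ht, ← zpow_add₀ ht]; congr 1; simp only [qf]; ring
  set w := pn t n1 * ip t n3 * ip t n4 * ip t (n1 - n4) * ip t (N - n1)
  linear_combination (w * t ^ qf a b c d n1 n2 n3 n4 * ip t (n1 - n2)) * e1
    - (w * t ^ qf a b c d n1 n2 n3 n4 * ip t (n2 - n3 - 1)) * e2
    - (w * ip t (n1 - n2) * ip t (n2 - n3)) * h1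
    - (w * ip t (n1 - n2 + 1) * ip t (n2 - n3 - 1)) * (h2 - h3)

/-- Both sides are the sum with the extra factor `1 - t ^ n₃`; on the right, `n₃` is shifted by one
and the factor is traded for `1 - t ^ (n₂ - n₃)`. -/
lemma rel3 (ht : t ≠ 0) (ht1 : ∀ n : ℕ, t ^ (n + 1) ≠ 1) (N a b c d : ℤ) :
    Sp t N a b c d - Sp t N a b (c + 1) d
      = t ^ (1 + c) * (Sp t N a b (c + 2) d - Sp t N a (b + 1) (c + 1) d) := by
  simp only [Sp]
  rw [← finsum_sub_distrib (mul_core_support _ _ _ _ _ _) (mul_core_support _ _ _ _ _ _),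
    ← finsum_sub_distrib (mul_core_support _ _ _ _ _ _) (mul_core_support _ _ _ _ _ _)]
  refine finsum_shift (0, 0, 1, 0) _ fun n => ?_
  obtain ⟨n1, n2, n3, n4⟩ := n
  simp only [core, Prod.mk_sub_mk, sub_zero]
  have e1 := mul_ip ht1 n3
  have e2 := mul_ip ht1 (n2 - n3 + 1)
  rw [show n2 - n3 + 1 - 1 = n2 - n3 by ring] at e2
  rw [show n2 - (n3 - 1) = n2 - n3 + 1 by ring]
  have h1 : t ^ qf a b (c + 1) d n1 n2 n3 n4
      = t ^ qf a b c d n1 n2 n3 n4 * t ^ n3 := by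
    rw [← zpow_add₀ ht]; congr 1; simp only [qf]; ring
  have h2 : t ^ (1 + c) * t ^ qf a b (c + 2) d n1 n2 (n3 - 1) n4
      = t ^ qf a b c d n1 n2 n3 n4 := by
    rw [← zpow_add₀ ht]; congr 1; simp only [qf]; ring
  have h3 : t ^ (1 + c) * t ^ qf a (b + 1) (c + 1) d n1 n2 (n3 - 1) n4
      = t ^ qf a b c d n1 n2 n3 n4 * t ^ (n2 - n3 + 1) := by
    rw [← zpow_add₀ ht, ← zpow_add₀ ht]; congr 1; simp only [qf]; ring
  set w := pn t n1 * ip t (n1 - n2) * ip t n4 * ip t (n1 - n4) * ip t (N - n1)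
  linear_combination (w * t ^ qf a b c d n1 n2 n3 n4 * ip t (n2 - n3)) * e1
    - (w * t ^ qf a b c d n1 n2 n3 n4 * ip t (n3 - 1)) * e2
    - (w * ip t (n2 - n3) * ip t n3) * h1
    - (w * ip t (n2 - n3 + 1) * ip t (n3 - 1)) * (h2 - h3)

/-- Both sides are the sum with the extra factor `1 - t ^ n₄`; on the right, `n₄` is shifted by one
and the factor is traded for `1 - t ^ (n₁ - n₄)`. -/
lemma rel4 (ht : t ≠ 0) (ht1 : ∀ n : ℕ, t ^ (n + 1) ≠ 1) (N a b c d : ℤ) :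
    Sp t N a b c d - Sp t N a b c (d + 1)
      = t ^ (1 + d) * (Sp t N a (b + 1) c (d + 2) - Sp t N (a + 1) (b + 1) c (d + 1)) := by
  simp only [Sp]
  rw [← finsum_sub_distrib (mul_core_support _ _ _ _ _ _) (mul_core_support _ _ _ _ _ _),
    ← finsum_sub_distrib (mul_core_support _ _ _ _ _ _) (mul_core_support _ _ _ _ _ _)]
  refine finsum_shift (0, 0, 0, 1) _ fun n => ?_
  obtain ⟨n1, n2, n3, n4⟩ := n
  simp only [core, Prod.mk_sub_mk, sub_zero]
  have e1 := mul_ip ht1 n4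
  have e2 := mul_ip ht1 (n1 - n4 + 1)
  rw [show n1 - n4 + 1 - 1 = n1 - n4 by ring] at e2
  rw [show n1 - (n4 - 1) = n1 - n4 + 1 by ring]
  have h1 : t ^ qf a b c (d + 1) n1 n2 n3 n4
      = t ^ qf a b c d n1 n2 n3 n4 * t ^ n4 := by
    rw [← zpow_add₀ ht]; congr 1; simp only [qf]; ring
  have h2 : t ^ (1 + d) * t ^ qf a (b + 1) c (d + 2) n1 n2 n3 (n4 - 1)
      = t ^ qf a b c d n1 n2 n3 n4 := by
    rw [← zpow_add₀ ht]; congr 1; simp only [qf]; ring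
  have h3 : t ^ (1 + d) * t ^ qf (a + 1) (b + 1) c (d + 1) n1 n2 n3 (n4 - 1)
      = t ^ qf a b c d n1 n2 n3 n4 * t ^ (n1 - n4 + 1) := by
    rw [← zpow_add₀ ht, ← zpow_add₀ ht]; congr 1; simp only [qf]; ring
  set w := pn t n1 * ip t (n1 - n2) * ip t (n2 - n3) * ip t n3 * ip t (N - n1)
  linear_combination (w * t ^ qf a b c d n1 n2 n3 n4 * ip t (n1 - n4)) * e1
    - (w * t ^ qf a b c d n1 n2 n3 n4 * ip t (n4 - 1)) * e2
    - (w * ip t (n1 - n4) * ip t n4) * h1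
    - (w * ip t (n1 - n4 + 1) * ip t (n4 - 1)) * (h2 - h3)

/-- Both sides are the sum with the extra factor `(1 - t ^ (n₁ - n₂)) (1 - t ^ (n₁ - n₄))`; on the
right, `n₁` is shifted by one, which turns `(t;t)_{n₁-1}` into `(t;t)_{n₁}`, and the factor is traded
for `1 - t ^ (N - n₁)`. -/
lemma rel1 (ht : t ≠ 0) (ht1 : ∀ n : ℕ, t ^ (n + 1) ≠ 1) (N a b c d : ℤ) :
    Sp t N a b c d - Sp t N (a + 1) (b - 1) c d
        - (Sp t N (a + 1) b c (d - 1) - Sp t N (a + 2) (b - 1) c (d - 1))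
      = t ^ (1 + a) * (Sq t N (a + 2) (b - 1) c d - t ^ N * Sq t N (a + 1) (b - 1) c d) := by
  simp only [Sp, Sq]
  rw [mul_finsum, ← finsum_sub_distrib (mul_core_support _ _ _ _ _ _) (mul_core_support _ _ _ _ _ _),
    ← finsum_sub_distrib (mul_core_support _ _ _ _ _ _) (mul_core_support _ _ _ _ _ _),
    ← finsum_sub_distrib ((mul_core_support _ _ _ _ _ _).fun_sub (mul_core_support _ _ _ _ _ _))
      ((mul_core_support _ _ _ _ _ _).fun_sub (mul_core_support _ _ _ _ _ _)),
    ← finsum_sub_distrib (mul_core_support _ _ _ _ _ _) ((mul_core_support _ _ _ _ _ _).mul_right _)]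
  refine finsum_shift (1, 0, 0, 0) _ fun n => ?_
  obtain ⟨n1, n2, n3, n4⟩ := n
  simp only [core, Prod.mk_sub_mk, sub_zero]
  have e1 := mul_ip ht1 (n1 - n2)
  have e2 := mul_ip ht1 (n1 - n4)
  have e3 := mul_ip ht1 (N - n1 + 1)
  rw [show N - n1 + 1 - 1 = N - n1 by ring] at e3
  rw [show N - (n1 - 1) = N - n1 + 1 by ring, show n1 - 1 - n2 = n1 - n2 - 1 by ring,
    show n1 - 1 - n4 = n1 - n4 - 1 by ring, sub_add_cancel]
  have h1 : t ^ qf (a + 1) (b - 1) c d n1 n2 n3 n4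
      = t ^ qf a b c d n1 n2 n3 n4 * t ^ (n1 - n2) := by
    rw [← zpow_add₀ ht]; congr 1; simp only [qf]; ring
  have h1' : t ^ qf (a + 1) b c (d - 1) n1 n2 n3 n4
      = t ^ qf a b c d n1 n2 n3 n4 * t ^ (n1 - n4) := by
    rw [← zpow_add₀ ht]; congr 1; simp only [qf]; ring
  have h1'' : t ^ qf (a + 2) (b - 1) c (d - 1) n1 n2 n3 n4
      = t ^ qf a b c d n1 n2 n3 n4 * t ^ (n1 - n2) * t ^ (n1 - n4) := by
    rw [← zpow_add₀ ht, ← zpow_add₀ ht]; congr 1; simp only [qf]; ring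
  have h2 : t ^ (1 + a) * t ^ qf (a + 2) (b - 1) c d (n1 - 1) n2 n3 n4
      = t ^ qf a b c d n1 n2 n3 n4 := by
    rw [← zpow_add₀ ht]; congr 1; simp only [qf]; ring
  have h3 : t ^ (1 + a) * (t ^ N * t ^ qf (a + 1) (b - 1) c d (n1 - 1) n2 n3 n4)
      = t ^ qf a b c d n1 n2 n3 n4 * t ^ (N - n1 + 1) := by
    rw [← zpow_add₀ ht, ← zpow_add₀ ht, ← zpow_add₀ ht]; congr 1; simp only [qf]; ring
  set w := pn t n1 * ip t (n2 - n3) * ip t n3 * ip t n4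
  rw [h1, h1', h1'']
  linear_combination
    (w * t ^ qf a b c d n1 n2 n3 n4 * ip t (N - n1) * (1 - t ^ (n1 - n4)) * ip t (n1 - n4)) * e1
    + (w * t ^ qf a b c d n1 n2 n3 n4 * ip t (N - n1) * ip t (n1 - n2 - 1)) * e2
    - (w * t ^ qf a b c d n1 n2 n3 n4 * ip t (n1 - n2 - 1) * ip t (n1 - n4 - 1)) * e3
    - (w * ip t (n1 - n2 - 1) * ip t (n1 - n4 - 1) * ip t (N - n1 + 1)) * (h2 - h3)

/-- Both sides are the sum with the extra factor `(1 - t ^ (n₂ - n₃)) (1 - t ^ (n₁ - n₄))`; on the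
right, `n₁` and `n₂` are both shifted by one, which turns `(t;t)_{n₁-1}` into `(t;t)_{n₁}`, and the
factor is traded for `1 - t ^ (N - n₁)`. -/
lemma rel12 (ht : t ≠ 0) (ht1 : ∀ n : ℕ, t ^ (n + 1) ≠ 1) (N a b c d : ℤ) :
    Sp t N a b c d - Sp t N a (b + 1) (c - 1) d
        - (Sp t N (a + 1) b c (d - 1) - Sp t N (a + 1) (b + 1) (c - 1) (d - 1))
      = t ^ (1 + a + b) * (Sq t N (a + 1) (b + 1) c (d + 1)
        - t ^ N * Sq t N a (b + 1) c (d + 1)) := by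
  simp only [Sp, Sq]
  rw [mul_finsum, ← finsum_sub_distrib (mul_core_support _ _ _ _ _ _) (mul_core_support _ _ _ _ _ _),
    ← finsum_sub_distrib (mul_core_support _ _ _ _ _ _) (mul_core_support _ _ _ _ _ _),
    ← finsum_sub_distrib ((mul_core_support _ _ _ _ _ _).fun_sub (mul_core_support _ _ _ _ _ _))
      ((mul_core_support _ _ _ _ _ _).fun_sub (mul_core_support _ _ _ _ _ _)),
    ← finsum_sub_distrib (mul_core_support _ _ _ _ _ _) ((mul_core_support _ _ _ _ _ _).mul_right _)]
  refine finsum_shift (1, 1, 0, 0) _ fun n => ?_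
  obtain ⟨n1, n2, n3, n4⟩ := n
  simp only [core, Prod.mk_sub_mk, sub_zero]
  have e1 := mul_ip ht1 (n2 - n3)
  have e2 := mul_ip ht1 (n1 - n4)
  have e3 := mul_ip ht1 (N - n1 + 1)
  rw [show N - n1 + 1 - 1 = N - n1 by ring] at e3
  rw [show N - (n1 - 1) = N - n1 + 1 by ring, show n1 - 1 - (n2 - 1) = n1 - n2 by ring,
    show n2 - 1 - n3 = n2 - n3 - 1 by ring, show n1 - 1 - n4 = n1 - n4 - 1 by ring, sub_add_cancel]
  have h1 : t ^ qf a (b + 1) (c - 1) d n1 n2 n3 n4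
      = t ^ qf a b c d n1 n2 n3 n4 * t ^ (n2 - n3) := by
    rw [← zpow_add₀ ht]; congr 1; simp only [qf]; ring
  have h1' : t ^ qf (a + 1) b c (d - 1) n1 n2 n3 n4
      = t ^ qf a b c d n1 n2 n3 n4 * t ^ (n1 - n4) := by
    rw [← zpow_add₀ ht]; congr 1; simp only [qf]; ring
  have h1'' : t ^ qf (a + 1) (b + 1) (c - 1) (d - 1) n1 n2 n3 n4
      = t ^ qf a b c d n1 n2 n3 n4 * t ^ (n2 - n3) * t ^ (n1 - n4) := by
    rw [← zpow_add₀ ht, ← zpow_add₀ ht]; congr 1; simp only [qf]; ring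
  have h2 : t ^ (1 + a + b) * t ^ qf (a + 1) (b + 1) c (d + 1) (n1 - 1) (n2 - 1) n3 n4
      = t ^ qf a b c d n1 n2 n3 n4 := by
    rw [← zpow_add₀ ht]; congr 1; simp only [qf]; ring
  have h3 : t ^ (1 + a + b) * (t ^ N * t ^ qf a (b + 1) c (d + 1) (n1 - 1) (n2 - 1) n3 n4)
      = t ^ qf a b c d n1 n2 n3 n4 * t ^ (N - n1 + 1) := by
    rw [← zpow_add₀ ht, ← zpow_add₀ ht, ← zpow_add₀ ht]; congr 1; simp only [qf]; ring
  set w := pn t n1 * ip t (n1 - n2) * ip t n3 * ip t n4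
  rw [h1, h1', h1'']
  linear_combination
    (w * t ^ qf a b c d n1 n2 n3 n4 * ip t (N - n1) * (1 - t ^ (n1 - n4)) * ip t (n1 - n4)) * e1
    + (w * t ^ qf a b c d n1 n2 n3 n4 * ip t (N - n1) * ip t (n2 - n3 - 1)) * e2
    - (w * t ^ qf a b c d n1 n2 n3 n4 * ip t (n2 - n3 - 1) * ip t (n1 - n4 - 1)) * e3
    - (w * ip t (n2 - n3 - 1) * ip t (n1 - n4 - 1) * ip t (N - n1 + 1)) * (h2 - h3)

/-- The sum with `(t;t)_{n₁}` in terms of the sum with `(t;t)_{n₁-1}`; the extra term comes from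
`n₁ = 0`. -/
lemma Sq_eq (ht : t ≠ 0) (N a b c d : ℤ) :
    Sq t N a b c d = Sp t N a b c d - Sp t N (a + 1) b c d + ip t N := by
  have h0 : ∑ᶠ n : ℤ × ℤ × ℤ × ℤ, (if n.1 = 0 then 1 else 0) * core t N a b c d n = ip t N := by
    rw [finsum_eq_single _ (0, 0, 0, 0)]
    · simp [core, qf, ip_zero]
    · rintro ⟨n1, n2, n3, n4⟩ hn
      by_contra h
      have h1 := core_ne_zero (right_ne_zero_of_mul h)
      have h2 : n1 = 0 := by
        by_contra h'
        exact left_ne_zero_of_mul h (if_neg h')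
      apply hn
      simp only at h1
      simp only [Prod.mk.injEq]
      omega
  rw [← h0]
  simp only [Sp, Sq]
  rw [← finsum_sub_distrib (mul_core_support _ _ _ _ _ _) (mul_core_support _ _ _ _ _ _),
    ← finsum_add_distrib ((mul_core_support _ _ _ _ _ _).fun_sub (mul_core_support _ _ _ _ _ _))
      (mul_core_support _ _ _ _ _ _)]
  refine finsum_congr fun ⟨n1, n2, n3, n4⟩ => ?_
  simp only [core]
  have h1 : t ^ qf (a + 1) b c d n1 n2 n3 n4 = t ^ qf a b c d n1 n2 n3 n4 * t ^ n1 := by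
    rw [← zpow_add₀ ht]; congr 1; simp only [qf]; ring
  rw [h1, mul_pn]
  ring

lemma Sq_sub_one (ht : t ≠ 0) (ht1 : ∀ n : ℕ, t ^ (n + 1) ≠ 1) (N a b c d : ℤ) :
    Sq t (N - 1) a b c d = Sq t N a b c d - t ^ N * Sq t N (a - 1) b c d := by
  simp only [Sq]
  rw [mul_finsum,
    ← finsum_sub_distrib (mul_core_support _ _ _ _ _ _) ((mul_core_support _ _ _ _ _ _).mul_right _)]
  refine finsum_congr fun ⟨n1, n2, n3, n4⟩ => ?_
  simp only [core]
  have e := mul_ip ht1 (N - n1)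
  have h1 : t ^ N * t ^ qf (a - 1) b c d n1 n2 n3 n4
      = t ^ qf a b c d n1 n2 n3 n4 * t ^ (N - n1) := by
    rw [← zpow_add₀ ht, ← zpow_add₀ ht]; congr 1; simp only [qf]; ring
  rw [show N - 1 - n1 = N - n1 - 1 by ring, ← e]
  linear_combination (pn t (n1 + 1) * ip t (n1 - n2) * ip t (n2 - n3) * ip t n3 * ip t n4
    * ip t (n1 - n4) * ip t (N - n1)) * h1

lemma Sq_zero (a b c d : ℤ) : Sq t 0 a b c d = 1 := by
  rw [Sq, finsum_eq_single _ (0, 0, 0, 0)]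
  · simp [core, qf, ip_zero, pn_one]
  · rintro ⟨n1, n2, n3, n4⟩ hn
    by_contra h
    have h1 := core_ne_zero (right_ne_zero_of_mul h)
    apply hn
    simp only at h1
    simp only [Prod.mk.injEq]
    omega

/-! ### The seven sum sides

The last three sums are combinations of several `Sq`, chosen so that the seven recurrences close.
Each recurrence is obtained by writing all `Sq t (N - 1)` through `Sq t N`, all `Sq t N` through
`Sp t N`, and then taking a linear combination of contiguous relations, with coefficients that are
polynomials in `t ^ N`.
-/

/-- The sum side attached to the profile `(5, 0, 0)`. -/
noncomputable def r500 (t : K) (N : ℤ) : K := Sq t N 1 1 1 1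
/-- The sum side attached to the profile `(4, 1, 0)`. -/
noncomputable def r410 (t : K) (N : ℤ) : K := Sq t N 0 1 1 1
/-- The sum side attached to the profile `(3, 1, 1)`. -/
noncomputable def r311 (t : K) (N : ℤ) : K := Sq t N 0 0 1 0
/-- The sum side attached to the profile `(2, 2, 1)`. -/
noncomputable def r221 (t : K) (N : ℤ) : K := Sq t N 0 0 0 0
/-- The sum side attached to the profile `(3, 2, 0)`. -/
noncomputable def r320 (t : K) (N : ℤ) : K := Sq t N 0 0 0 (-1) + Sq t N 1 0 1 0 - Sq t N 0 0 0 0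
/-- The sum side attached to the profile `(3, 0, 2)`. -/
noncomputable def r302 (t : K) (N : ℤ) : K :=
  Sq t N 1 (-1) 1 (-1) + Sq t N 1 0 0 0 - Sq t N 1 0 0 (-1)
/-- The sum side attached to the profile `(4, 0, 1)`. -/
noncomputable def r401 (t : K) (N : ℤ) : K := Sq t N (-1) 1 1 1 - r320 t N + t ^ N * Sq t N 0 0 1 0

lemma r500_rec (ht : t ≠ 0) (ht1 : ∀ n : ℕ, t ^ (n + 1) ≠ 1) (N : ℤ) :
    r500 t (N - 1) = r500 t N - t ^ N * r410 t N := by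
  simp only [r500, r410, Sq_sub_one ht ht1, Int.reduceSub]

lemma r410_rec (ht : t ≠ 0) (ht1 : ∀ n : ℕ, t ^ (n + 1) ≠ 1) (N : ℤ) :
    r410 t (N - 1) = r410 t N - t ^ N * (r320 t N + r401 t N) + (t ^ N) ^ 2 * r311 t N := by
  simp only [r410, r401, r311, Sq_sub_one ht ht1, Int.reduceSub]
  ring

lemma r311_rec (ht : t ≠ 0) (ht1 : ∀ n : ℕ, t ^ (n + 1) ≠ 1) (N : ℤ) :
    r311 t (N - 1) = r311 t N - t ^ N * (r221 t N + r302 t N + r410 t N)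
      + (t ^ N) ^ 2 * (r221 t N + r320 t N + r401 t N) - (t ^ N) ^ 3 * r311 t N := by
  have h1 := rel2 ht ht1 N 1 (-1) 1 0
  have h2 := rel2 ht ht1 N 2 (-1) 1 (-1)
  have h3 := rel4 ht ht1 N 0 0 1 (-1)
  have h4 := rel4 ht ht1 N 1 (-1) 1 (-1)
  have h5 := rel1 ht ht1 N (-1) 1 0 0
  have h6 := rel12 ht ht1 N (-1) 0 1 0
  simp only [r410, r401, r311, r221, r302, r320, Sq_sub_one ht ht1, Sq_eq ht, Int.reduceSub,
    Int.reduceAdd, Int.reduceNeg, zpow_zero] at *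
  generalize t ^ N = y at *
  linear_combination y * h1 - y * h2 - y * h3 + y * h4 - y * h5 - y * h6

/-- The recurrence for `r320` in the form that is independent of `N - 1`. -/
lemma r320_aux (ht : t ≠ 0) (ht1 : ∀ n : ℕ, t ^ (n + 1) ≠ 1) (N : ℤ) :
    r302 t N + r311 t N - t ^ N * r221 t N
      = Sq t N (-1) 0 0 (-1) + Sq t N 0 0 1 0 - Sq t N (-1) 0 0 0 := by
  have h0 := r311_rec ht ht1 N
  have h1 := rel2 ht ht1 N 0 (-1) 0 (-1)
  have h2 := rel2 ht ht1 N 0 (-1) 0 0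
  have h3 := rel3 ht ht1 N 0 0 (-1) (-1)
  have h4 := rel3 ht ht1 N 0 0 (-1) 0
  have h5 := rel4 ht ht1 N (-1) 0 0 (-1)
  have h6 := rel4 ht ht1 N 0 (-1) 0 (-1)
  have h7 := rel12 ht ht1 N (-1) 0 1 0
  have hy : t ^ N ≠ 0 := zpow_ne_zero _ ht
  apply mul_left_cancel₀ hy
  simp only [r410, r401, r311, r221, r302, r320, Sq_sub_one ht ht1, Sq_eq ht, Int.reduceSub,
    Int.reduceAdd, Int.reduceNeg, zpow_zero] at *
  generalize t ^ N = y at *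
  linear_combination h0 - y * h1 + y * h2 - y * h3 + y * h4 - y * h5 + y * h6 + y * h7

lemma r320_rec (ht : t ≠ 0) (ht1 : ∀ n : ℕ, t ^ (n + 1) ≠ 1) (N : ℤ) :
    r320 t (N - 1) = r320 t N - t ^ N * (r302 t N + r311 t N) + (t ^ N) ^ 2 * r221 t N := by
  have h := r320_aux ht ht1 N
  simp only [r320, Sq_sub_one ht ht1, Int.reduceSub] at *
  linear_combination t ^ N * h

lemma r401_rec (ht : t ≠ 0) (ht1 : ∀ n : ℕ, t ^ (n + 1) ≠ 1) (N : ℤ) :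
    r401 t (N - 1) = r401 t N - t ^ N * (r311 t N + r500 t N) + (t ^ N) ^ 2 * r410 t N := by
  have h1 := rel2 ht ht1 N (-1) (-1) 1 (-1)
  have h2 := rel2 ht ht1 N (-1) (-1) 1 0
  have h3 := rel2 ht ht1 N 0 (-1) 1 (-1)
  have h4 := rel2 ht ht1 N 0 (-1) 1 0
  have h5 := rel4 ht ht1 N (-1) (-1) 1 (-1)
  have h6 := rel4 ht ht1 N (-1) 1 1 (-1)
  have h7 := rel4 ht ht1 N 0 (-1) 1 (-1)
  have h8 := rel4 ht ht1 N 0 0 1 (-1)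
  have h9 := rel1 ht ht1 N (-2) 1 1 0
  have h10 := rel1 ht ht1 N (-1) 2 1 1
  simp only [r500, r410, r401, r311, r320, Sq_sub_one ht ht1, Sq_eq ht, Int.reduceSub,
    Int.reduceAdd, Int.reduceNeg, zpow_zero, zpow_neg_one, zpow_sub_one₀ ht] at *
  generalize t ^ N = y at *
  linear_combination -y * h1 + y * h2 + y * h3 - y * h4 + y * h5 - y * h6 - y * h7 + y * h8
    - y * h9 - y * h10

lemma r302_rec (ht : t ≠ 0) (ht1 : ∀ n : ℕ, t ^ (n + 1) ≠ 1) (N : ℤ) :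
    r302 t (N - 1) = r302 t N - t ^ N * (r221 t N + r401 t N) + (t ^ N) ^ 2 * r311 t N := by
  have h1 := rel2 ht ht1 N 0 (-1) 1 0
  have h2 := rel2 ht ht1 N 1 (-1) 1 0
  have h3 := rel4 ht ht1 N 0 (-1) 1 (-1)
  have h4 := rel4 ht ht1 N 1 (-1) 1 (-1)
  simp only [r401, r311, r302, r221, r320, Sq_sub_one ht ht1, Sq_eq ht, Int.reduceSub,
    Int.reduceAdd, Int.reduceNeg, zpow_zero] at *
  generalize t ^ N = y at *
  linear_combination -y * h1 + y * h2 - y * h3 + y * h4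

lemma r221_rec (ht : t ≠ 0) (ht1 : ∀ n : ℕ, t ^ (n + 1) ≠ 1) (N : ℤ) :
    r221 t (N - 1) = r221 t N - t ^ N * (r311 t N + r221 t N + r320 t N)
      + (t ^ N) ^ 2 * (r221 t N + r302 t N + r311 t N) - (t ^ N) ^ 3 * r221 t N := by
  have h0 := r320_aux ht ht1 N
  have h1 := rel2 ht ht1 N 1 (-1) 0 (-1)
  have h2 := rel2 ht ht1 N 1 (-1) 0 0
  have h3 := rel3 ht ht1 N 0 0 (-1) 0
  have h4 := rel3 ht ht1 N 1 0 (-1) 0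
  have h5 := rel3 ht ht1 N 2 0 (-1) 0
  have h6 := rel4 ht ht1 N (-1) 0 0 (-1)
  have h7 := rel4 ht ht1 N 0 0 0 (-1)
  have h8 := rel4 ht ht1 N 1 (-1) 0 (-1)
  have h9 := rel4 ht ht1 N 1 0 0 (-1)
  have h10 := rel1 ht ht1 N (-1) 1 (-1) 0
  have h11 := rel12 ht ht1 N (-1) 0 0 0
  simp only [r311, r302, r221, r320, Sq_sub_one ht ht1, Sq_eq ht, Int.reduceSub,
    Int.reduceAdd, Int.reduceNeg, zpow_zero] at *
  generalize t ^ N = y at *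
  linear_combination -y ^ 2 * h0 - y * h1 + y * h2 + (y ^ 2 - y) * h3 - y ^ 2 * h4 + y * h5
    - y ^ 2 * h6 + y ^ 2 * h7 + y * h8 - y * h9 - y * h10 - y * h11

lemma r_zero : r500 t 0 = 1 ∧ r410 t 0 = 1 ∧ r311 t 0 = 1 ∧ r221 t 0 = 1 ∧ r320 t 0 = 1
    ∧ r302 t 0 = 1 ∧ r401 t 0 = 1 := by
  simp [r500, r410, r311, r221, r320, r302, r401, Sq_zero]

/-! ### The Weyl-type double sum -/

/-- The nontrivial character modulo `3`, with values in `K`. -/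
def ch (K : Type*) [Field K] (n : ℤ) : K := if n % 3 = 1 then 1 else if n % 3 = 2 then -1 else 0

/-- The exponent `8 e + (A + B) g₁ + B g₂`, where `3 e = g₁² + g₂² + g₁ g₂ - 2 g₁ - g₂`. The
division by `3` is exact whenever `ch (g₂ - g₁ + 1) ≠ 0`. -/
def we (A B g1 g2 : ℤ) : ℤ :=
  8 * ((g1 ^ 2 + g2 ^ 2 + g1 * g2 - 2 * g1 - g2) / 3) + (A + B) * g1 + B * g2

lemma ch_neg (n : ℤ) : ch K (-n) = -ch K n := by
  unfold ch
  rcases (by omega : n % 3 = 0 ∨ n % 3 = 1 ∨ n % 3 = 2) with h | h | h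
  · rw [if_neg (by omega), if_neg (by omega), if_neg (by omega), if_neg (by omega), neg_zero]
  · rw [if_neg (by omega), if_pos (by omega), if_pos h]
  · rw [if_pos (by omega), if_neg (by omega), if_pos h, neg_neg]

lemma ch_add_three (n k : ℤ) : ch K (n + 3 * k) = ch K n := by
  unfold ch
  rw [show (n + 3 * k) % 3 = n % 3 by omega]

/-- The division by `3` in the exponent `we` is exact on the support of the character. -/
lemma three_mul_div {g1 g2 : ℤ} (h : ch K (g2 - g1 + 1) ≠ 0) :
    3 * ((g1 ^ 2 + g2 ^ 2 + g1 * g2 - 2 * g1 - g2) / 3)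
      = g1 ^ 2 + g2 ^ 2 + g1 * g2 - 2 * g1 - g2 := by
  apply Int.mul_ediv_cancel'
  have h2 : (g2 - g1 + 1) % 3 ≠ 0 := by
    intro h0
    apply h
    simp [ch, h0]
  obtain ⟨k, hk | hk⟩ : ∃ k, g2 = g1 + 3 * k ∨ g2 = g1 + 3 * k + 1 :=
    ⟨(g2 - g1) / 3, by omega⟩
  · exact ⟨g1 ^ 2 + 3 * g1 * k + 3 * k ^ 2 - g1 - k, by rw [hk]; ring⟩
  · exact ⟨g1 ^ 2 + 3 * g1 * k + 3 * k ^ 2 + k, by rw [hk]; ring⟩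

/-- The summand of the double sum `wP`. -/
noncomputable def wT (t : K) (N A B : ℤ) (g : ℤ × ℤ) : K :=
  ch K (g.2 - g.1 + 1) * t ^ we A B g.1 g.2
    * (ip t (N + g.1) * ip t (N + g.2) * ip t (N - g.1 - g.2))

/-- The Weyl-type double sum, for the profile `(7 - A - B, A - 1, B - 1)`. -/
noncomputable def wP (t : K) (N A B : ℤ) : K := ∑ᶠ g : ℤ × ℤ, wT t N A B g

lemma wT_ne_zero {N A B : ℤ} {g : ℤ × ℤ} (h : wT t N A B g ≠ 0) :
    -N ≤ g.1 ∧ -N ≤ g.2 ∧ g.1 + g.2 ≤ N := by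
  have h1 := right_ne_zero_of_mul h
  have h2 := ip_nonneg_of_ne (right_ne_zero_of_mul h1)
  have h3 := ip_nonneg_of_ne (right_ne_zero_of_mul (left_ne_zero_of_mul h1))
  have h4 := ip_nonneg_of_ne (left_ne_zero_of_mul (left_ne_zero_of_mul h1))
  omega

lemma wT_support (N A B : ℤ) : (wT t N A B).HasFiniteSupport := by
  refine ((Finset.Icc (-N) (2 * N)) ×ˢ (Finset.Icc (-N) (2 * N))).finite_toSet.subset
    fun g hg => ?_
  have := wT_ne_zero (Function.mem_support.1 hg)
  simp only [Finset.coe_product, Finset.coe_Icc, Set.mem_prod, Set.mem_Icc]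
  omega

lemma wP_zero (A B : ℤ) : wP t 0 A B = 1 := by
  rw [wP, finsum_eq_single _ (0, 0)]
  · simp [wT, we, ch, ip_zero]
  · rintro ⟨g1, g2⟩ hg
    by_contra h
    have := wT_ne_zero h
    apply hg
    simp only at this
    simp only [Prod.mk.injEq]
    omega

/-- The expansion of `(1 - t ^ (N + g₁)) (1 - t ^ (N + g₂)) (1 - t ^ (N - g₁ - g₂))` in the summand. -/
lemma wP_sub_one (ht : t ≠ 0) (ht1 : ∀ n : ℕ, t ^ (n + 1) ≠ 1) (N A B : ℤ) :
    wP t (N - 1) A B = wP t N A B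
      - t ^ N * (wP t N (A + 1) B + wP t N (A - 1) (B + 1) + wP t N A (B - 1))
      + (t ^ N) ^ 2 * (wP t N A (B + 1) + wP t N (A + 1) (B - 1) + wP t N (A - 1) B)
      - (t ^ N) ^ 3 * wP t N A B := by
  have hs := fun A B => wT_support (t := t) N A B
  have h1 (c : K) (A B : ℤ) : Function.HasFiniteSupport fun g => c * wT t N A B g :=
    (hs A B).mul_right _
  have h3 (c : K) (A B A' B' A'' B'' : ℤ) : Function.HasFiniteSupport
      fun g => c * (wT t N A B g + wT t N A' B' g + wT t N A'' B'' g) :=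
    (((hs A B).fun_add (hs A' B')).fun_add (hs A'' B'')).mul_right _
  simp only [wP]
  rw [← finsum_add_distrib (hs _ _) (hs _ _), ← finsum_add_distrib (hs _ _) (hs _ _),
    ← finsum_add_distrib ((hs _ _).fun_add (hs _ _)) (hs _ _),
    ← finsum_add_distrib ((hs _ _).fun_add (hs _ _)) (hs _ _),
    mul_finsum, mul_finsum, mul_finsum,
    ← finsum_sub_distrib (hs _ _) (h3 _ _ _ _ _ _ _),
    ← finsum_add_distrib ((hs _ _).fun_sub (h3 _ _ _ _ _ _ _)) (h3 _ _ _ _ _ _ _),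
    ← finsum_sub_distrib (((hs _ _).fun_sub (h3 _ _ _ _ _ _ _)).fun_add (h3 _ _ _ _ _ _ _))
      (h1 _ _ _)]
  refine finsum_congr fun ⟨g1, g2⟩ => ?_
  simp only [wT]
  have e1 := mul_ip ht1 (N + g1)
  have e2 := mul_ip ht1 (N + g2)
  have e3 := mul_ip ht1 (N - g1 - g2)
  rw [show N - 1 + g1 = N + g1 - 1 by ring, show N - 1 + g2 = N + g2 - 1 by ring,
    show N - 1 - g1 - g2 = N - g1 - g2 - 1 by ring, ← e1, ← e2, ← e3]
  have h1 : t ^ we (A + 1) B g1 g2 = t ^ we A B g1 g2 * t ^ g1 := by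
    rw [← zpow_add₀ ht]; congr 1; simp only [we]; ring
  have h2 : t ^ we (A - 1) (B + 1) g1 g2 = t ^ we A B g1 g2 * t ^ g2 := by
    rw [← zpow_add₀ ht]; congr 1; simp only [we]; ring
  have h3 : t ^ we A (B - 1) g1 g2 = t ^ we A B g1 g2 * t ^ (-g1 - g2) := by
    rw [← zpow_add₀ ht]; congr 1; simp only [we]; ring
  have h12 : t ^ we A (B + 1) g1 g2 = t ^ we A B g1 g2 * t ^ g1 * t ^ g2 := by
    rw [← zpow_add₀ ht, ← zpow_add₀ ht]; congr 1; simp only [we]; ring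
  have h13 : t ^ we (A + 1) (B - 1) g1 g2 = t ^ we A B g1 g2 * t ^ g1 * t ^ (-g1 - g2) := by
    rw [← zpow_add₀ ht, ← zpow_add₀ ht]; congr 1; simp only [we]; ring
  have h23 : t ^ we (A - 1) B g1 g2 = t ^ we A B g1 g2 * t ^ g2 * t ^ (-g1 - g2) := by
    rw [← zpow_add₀ ht, ← zpow_add₀ ht]; congr 1; simp only [we]; ring
  have h123 : t ^ g1 * t ^ g2 * t ^ (-g1 - g2) = 1 := by
    rw [← zpow_add₀ ht, ← zpow_add₀ ht, show g1 + g2 + (-g1 - g2) = 0 by ring, zpow_zero]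
  rw [h1, h2, h3, h12, h13, h23, show N - g1 - g2 = N + (-g1 - g2) by ring, zpow_add₀ ht N g1,
    zpow_add₀ ht N g2, zpow_add₀ ht N (-g1 - g2)]
  linear_combination (-ch K (g2 - g1 + 1) * t ^ we A B g1 g2 * ip t (N + g1) * ip t (N + g2)
    * ip t (N + (-g1 - g2)) * (t ^ N) ^ 3) * h123

/-- Cyclic symmetry: the rotation `(A, B, C) ↦ (B, C, A)` for `A + B + C = 8` corresponds to the
rotation of the triple `(g₁, g₂, -g₁ - g₂)`. -/
lemma wP_rot (N A B : ℤ) : wP t N A B = wP t N B (8 - A - B) := by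
  have hb : Function.Bijective fun g : ℤ × ℤ => (g.2, -g.1 - g.2) := by
    refine Function.bijective_iff_has_inverse.2 ⟨fun g => (-g.1 - g.2, g.1), ?_, ?_⟩
    · exact fun ⟨a, b⟩ => Prod.ext (by dsimp only; ring) rfl
    · exact fun ⟨a, b⟩ => Prod.ext rfl (by dsimp only; ring)
  rw [wP, wP]
  conv_rhs => rw [← finsum_comp _ hb]
  refine finsum_congr fun ⟨g1, g2⟩ => ?_
  simp only [wT]
  have hc : ch K (-g1 - g2 - g2 + 1) = ch K (g2 - g1 + 1) := by
    rw [← ch_add_three (-g1 - g2 - g2 + 1) g2]; congr 1; ring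
  rw [hc]
  by_cases h : ch K (g2 - g1 + 1) = 0
  · simp [h]
  · have h1 := three_mul_div h
    have h2 := three_mul_div (hc ▸ h)
    have h3 : we A B g1 g2 = we B (8 - A - B) g2 (-g1 - g2) := by
      simp only [we]
      linarith
    rw [h3, show N - g2 - (-g1 - g2) = N + g1 by ring, show N + (-g1 - g2) = N - g1 - g2 by ring]
    ring

/-- Vanishing on a wall of the alcove: the reflection in that wall changes the sign of the
summand of the difference of the two sides. -/
lemma wP_wall [CharZero K] (ht : t ≠ 0) (ht1 : ∀ n : ℕ, t ^ (n + 1) ≠ 1) (N B : ℤ) :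
    wP t N 0 B = t ^ N * wP t N 1 B := by
  rw [← sub_eq_zero, wP, wP, mul_finsum,
    ← finsum_sub_distrib (wT_support _ _ _) ((wT_support _ _ _).mul_right _)]
  have hb : Function.Bijective fun g : ℤ × ℤ => (g.2 + 1, g.1 - 1) := by
    refine Function.bijective_iff_has_inverse.2 ⟨fun g => (g.2 + 1, g.1 - 1), ?_, ?_⟩ <;>
    · rintro ⟨a, b⟩
      simp
  have key : ∀ g1 g2 : ℤ, wT t N 0 B (g1, g2) - t ^ N * wT t N 1 B (g1, g2)
      = ch K (g2 - g1 + 1) * t ^ we 0 B g1 g2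
        * (ip t (N + g1 - 1) * ip t (N + g2) * ip t (N - g1 - g2)) := by
    intro g1 g2
    simp only [wT]
    have h1 : t ^ N * t ^ we 1 B g1 g2 = t ^ we 0 B g1 g2 * t ^ (N + g1) := by
      rw [← zpow_add₀ ht, ← zpow_add₀ ht]; congr 1; simp only [we]; ring
    rw [← mul_ip ht1 (N + g1)]
    linear_combination (-ch K (g2 - g1 + 1) * (ip t (N + g1) * ip t (N + g2) * ip t (N - g1 - g2)))
      * h1
  rw [← self_eq_neg, ← finsum_neg_distrib]
  conv_lhs => rw [← finsum_comp _ hb]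
  refine finsum_congr fun ⟨g1, g2⟩ => ?_
  rw [key, key]
  have hc : ch K (g1 - 1 - (g2 + 1) + 1) = -ch K (g2 - g1 + 1) := by
    rw [← ch_neg]; congr 1; ring
  rw [hc]
  by_cases h : ch K (g2 - g1 + 1) = 0
  · simp [h]
  · have h1 := three_mul_div h
    have h2 := three_mul_div (K := K) (g1 := g2 + 1) (g2 := g1 - 1) (by rw [hc]; exact neg_ne_zero.2 h)
    have h3 : we 0 B (g2 + 1) (g1 - 1) = we 0 B g1 g2 := by
      simp only [we]
      linarith
    rw [h3, show N + (g2 + 1) - 1 = N + g2 by ring, show N + (g1 - 1) = N + g1 - 1 by ring,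
      show N - (g2 + 1) - (g1 - 1) = N - g1 - g2 by ring]
    ring

/-! ### The seven double sums and their recurrences -/

/-- Rotation of the labels that occur in the recurrences to the representatives `(1, 1)`, `(2, 1)`,
`(2, 2)`, `(3, 2)`, `(3, 1)`, `(1, 3)`, `(1, 2)`. -/
lemma wP_reps (N : ℤ) : wP t N 1 4 = wP t N 3 1 ∧ wP t N 4 1 = wP t N 1 3
    ∧ wP t N 2 3 = wP t N 3 2 ∧ wP t N 3 3 = wP t N 3 2 ∧ wP t N 4 2 = wP t N 2 2 := by
  have r (A B C : ℤ) (h : A + B + C = 8) : wP t N A B = wP t N B C := by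
    rw [wP_rot, show 8 - A - B = C by omega]
  refine ⟨?_, r 4 1 3 (by norm_num), ?_, r 3 3 2 (by norm_num), r 4 2 2 (by norm_num)⟩
  · rw [r 1 4 3 (by norm_num), r 4 3 1 (by norm_num)]
  · rw [r 2 3 3 (by norm_num), r 3 3 2 (by norm_num)]

section Recurrences
variable [CharZero K]

/-- The values on the walls of the alcove that occur in the recurrences. -/
lemma wP_wall' (ht : t ≠ 0) (ht1 : ∀ n : ℕ, t ^ (n + 1) ≠ 1) (N : ℤ) :
    wP t N 0 1 = t ^ N * wP t N 1 1 ∧ wP t N 0 2 = t ^ N * wP t N 1 2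
    ∧ wP t N 0 3 = t ^ N * wP t N 1 3 ∧ wP t N 0 4 = t ^ N * wP t N 3 1
    ∧ wP t N 1 0 = (t ^ N) ^ 2 * wP t N 1 1 ∧ wP t N 2 0 = t ^ N * wP t N 1 1
    ∧ wP t N 3 0 = t ^ N * wP t N 2 1 ∧ wP t N 4 0 = t ^ N * wP t N 3 1 := by
  have w := wP_wall (t := t) ht ht1 N
  have r (A B C : ℤ) (h : A + B + C = 8) : wP t N A B = wP t N B C := by
    rw [wP_rot, show 8 - A - B = C by omega]
  have r2 (A B C : ℤ) (h : A + B + C = 8) : wP t N A B = wP t N C A := by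
    rw [r A B C h, r B C A (by omega)]
  refine ⟨w 1, w 2, w 3, ?_, ?_, ?_, ?_, ?_⟩
  · rw [w 4, r2 1 4 3 (by norm_num)]
  · rw [r 1 0 7 (by norm_num), w 7, r 1 7 0 (by norm_num), r 7 0 1 (by norm_num), w 1]; ring
  · rw [r 2 0 6 (by norm_num), w 6, r2 1 6 1 (by norm_num)]
  · rw [r 3 0 5 (by norm_num), w 5, r2 1 5 2 (by norm_num)]
  · rw [r 4 0 4 (by norm_num), w 4, r2 1 4 3 (by norm_num)]

set_option linter.unusedSimpArgs false

lemma wP500_rec (ht : t ≠ 0) (ht1 : ∀ n : ℕ, t ^ (n + 1) ≠ 1) (N : ℤ) :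
    wP t (N - 1) 1 1 = wP t N 1 1 - t ^ N * wP t N 2 1 := by
  obtain ⟨h1, h2, h3, h4, h5, h6, h7, h8⟩ := wP_wall' ht ht1 N
  obtain ⟨k1, k2, k3, k4, k5⟩ := wP_reps (t := t) N
  rw [wP_sub_one ht ht1]
  simp only [Int.reduceAdd, Int.reduceSub, h1, h2, h3, h4, h5, h6, h7, h8, k1, k2, k3, k4, k5]
  ring

lemma wP410_rec (ht : t ≠ 0) (ht1 : ∀ n : ℕ, t ^ (n + 1) ≠ 1) (N : ℤ) :
    wP t (N - 1) 2 1 = wP t N 2 1 - t ^ N * (wP t N 3 1 + wP t N 1 2) + (t ^ N) ^ 2 * wP t N 2 2 := by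
  obtain ⟨h1, h2, h3, h4, h5, h6, h7, h8⟩ := wP_wall' ht ht1 N
  obtain ⟨k1, k2, k3, k4, k5⟩ := wP_reps (t := t) N
  rw [wP_sub_one ht ht1]
  simp only [Int.reduceAdd, Int.reduceSub, h1, h2, h3, h4, h5, h6, h7, h8, k1, k2, k3, k4, k5]
  ring

lemma wP311_rec (ht : t ≠ 0) (ht1 : ∀ n : ℕ, t ^ (n + 1) ≠ 1) (N : ℤ) :
    wP t (N - 1) 2 2 = wP t N 2 2 - t ^ N * (wP t N 3 2 + wP t N 1 3 + wP t N 2 1)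
      + (t ^ N) ^ 2 * (wP t N 3 2 + wP t N 3 1 + wP t N 1 2) - (t ^ N) ^ 3 * wP t N 2 2 := by
  obtain ⟨h1, h2, h3, h4, h5, h6, h7, h8⟩ := wP_wall' ht ht1 N
  obtain ⟨k1, k2, k3, k4, k5⟩ := wP_reps (t := t) N
  rw [wP_sub_one ht ht1]
  simp only [Int.reduceAdd, Int.reduceSub, h1, h2, h3, h4, h5, h6, h7, h8, k1, k2, k3, k4, k5]

lemma wP320_rec (ht : t ≠ 0) (ht1 : ∀ n : ℕ, t ^ (n + 1) ≠ 1) (N : ℤ) :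
    wP t (N - 1) 3 1 = wP t N 3 1 - t ^ N * (wP t N 1 3 + wP t N 2 2) + (t ^ N) ^ 2 * wP t N 3 2 := by
  obtain ⟨h1, h2, h3, h4, h5, h6, h7, h8⟩ := wP_wall' ht ht1 N
  obtain ⟨k1, k2, k3, k4, k5⟩ := wP_reps (t := t) N
  rw [wP_sub_one ht ht1]
  simp only [Int.reduceAdd, Int.reduceSub, h1, h2, h3, h4, h5, h6, h7, h8, k1, k2, k3, k4, k5]
  ring

lemma wP401_rec (ht : t ≠ 0) (ht1 : ∀ n : ℕ, t ^ (n + 1) ≠ 1) (N : ℤ) :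
    wP t (N - 1) 1 2 = wP t N 1 2 - t ^ N * (wP t N 2 2 + wP t N 1 1) + (t ^ N) ^ 2 * wP t N 2 1 := by
  obtain ⟨h1, h2, h3, h4, h5, h6, h7, h8⟩ := wP_wall' ht ht1 N
  obtain ⟨k1, k2, k3, k4, k5⟩ := wP_reps (t := t) N
  rw [wP_sub_one ht ht1]
  simp only [Int.reduceAdd, Int.reduceSub, h1, h2, h3, h4, h5, h6, h7, h8, k1, k2, k3, k4, k5]
  ring

lemma wP302_rec (ht : t ≠ 0) (ht1 : ∀ n : ℕ, t ^ (n + 1) ≠ 1) (N : ℤ) :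
    wP t (N - 1) 1 3 = wP t N 1 3 - t ^ N * (wP t N 3 2 + wP t N 1 2) + (t ^ N) ^ 2 * wP t N 2 2 := by
  obtain ⟨h1, h2, h3, h4, h5, h6, h7, h8⟩ := wP_wall' ht ht1 N
  obtain ⟨k1, k2, k3, k4, k5⟩ := wP_reps (t := t) N
  rw [wP_sub_one ht ht1]
  simp only [Int.reduceAdd, Int.reduceSub, h1, h2, h3, h4, h5, h6, h7, h8, k1, k2, k3, k4, k5]
  ring

lemma wP221_rec (ht : t ≠ 0) (ht1 : ∀ n : ℕ, t ^ (n + 1) ≠ 1) (N : ℤ) :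
    wP t (N - 1) 3 2 = wP t N 3 2 - t ^ N * (wP t N 2 2 + wP t N 3 2 + wP t N 3 1)
      + (t ^ N) ^ 2 * (wP t N 3 2 + wP t N 1 3 + wP t N 2 2) - (t ^ N) ^ 3 * wP t N 3 2 := by
  obtain ⟨h1, h2, h3, h4, h5, h6, h7, h8⟩ := wP_wall' ht ht1 N
  obtain ⟨k1, k2, k3, k4, k5⟩ := wP_reps (t := t) N
  rw [wP_sub_one ht ht1]
  simp only [Int.reduceAdd, Int.reduceSub, h1, h2, h3, h4, h5, h6, h7, h8, k1, k2, k3, k4, k5]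

end Recurrences

end Field

/-! ### Uniqueness of the solution of the recurrences -/

/-- The generator `T` of the field of formal Laurent series. -/
noncomputable def tL : LaurentSeries ℚ := HahnSeries.single 1 1

lemma tL_pow (n : ℕ) : tL ^ n = HahnSeries.single (n : ℤ) 1 := by
  simp [tL, HahnSeries.single_pow]

lemma tL_ne_zero : tL ≠ 0 := by simp [tL]

lemma tL_pow_ne_one (n : ℕ) : tL ^ (n + 1) ≠ 1 := by
  rw [tL_pow]
  intro h
  have := congrArg (fun x : LaurentSeries ℚ => x.coeff 0) h
  simp only [HahnSeries.coeff_one, if_true] at this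
  rw [HahnSeries.coeff_single_of_ne (by push_cast; omega)] at this
  exact zero_ne_one this

instance : CharZero (LaurentSeries ℚ) := algebraRat.charZero _

/-- The Laurent series all of whose coefficients below `k` vanish. -/
def VL (k : ℤ) : AddSubgroup (LaurentSeries ℚ) where
  carrier := {x | ∀ n < k, x.coeff n = 0}
  add_mem' hx hy n hn := by
    rw [HahnSeries.coeff_add, hx n hn, hy n hn, add_zero]
  zero_mem' n _ := rfl
  neg_mem' hx n hn := by
    rw [HahnSeries.coeff_neg, hx n hn, neg_zero]

lemma VL_mono {k l : ℤ} (h : k ≤ l) : VL l ≤ VL k := fun _ hx n hn => hx n (by omega)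

lemma mul_mem_VL (N : ℕ) {k : ℤ} {x : LaurentSeries ℚ} (hx : x ∈ VL k) :
    tL ^ ((N : ℤ) + 1) * x ∈ VL (k + 1) := by
  intro n hn
  have e : (N : ℤ) + 1 = ((N + 1 : ℕ) : ℤ) := by push_cast; rfl
  rw [e, zpow_natCast, tL_pow]
  obtain ⟨m, rfl⟩ : ∃ m, n = m + ((N + 1 : ℕ) : ℤ) := ⟨n - ((N + 1 : ℕ) : ℤ), by ring⟩
  rw [HahnSeries.coeff_single_mul_add, hx m (by push_cast at hn; omega), mul_zero]

lemma exists_mem_VL (x : LaurentSeries ℚ) : ∃ k, x ∈ VL k :=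
  ⟨x.order, fun _ hn => HahnSeries.coeff_eq_zero_of_lt_order hn⟩

/-- A finite family of Laurent series whose vanishing orders can be improved simultaneously is
zero. -/
lemma eq_zero_of_contract {ι : Type*} [Finite ι] (D : ι → LaurentSeries ℚ)
    (h : ∀ k, (∀ i, D i ∈ VL k) → ∀ i, D i ∈ VL (k + 1)) (i : ι) : D i = 0 := by
  choose k hk using fun i => exists_mem_VL (D i)
  obtain ⟨m, hm⟩ := (Set.finite_range k).bddBelow
  have key : ∀ n : ℕ, ∀ i, D i ∈ VL (m + n) := by
    intro n
    induction n with
    | zero => exact fun i => VL_mono (by simpa using hm ⟨i, rfl⟩) (hk i)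
    | succ n ih => simpa [add_assoc] using h _ ih
  ext n
  exact key (n + 1 - m).toNat i n (by omega)

/-- The seven differences between the quadruple sums and the double sums. -/
noncomputable def dL (N : ℤ) : Fin 7 → LaurentSeries ℚ :=
  ![r500 tL N - wP tL N 1 1, r410 tL N - wP tL N 2 1, r311 tL N - wP tL N 2 2,
    r221 tL N - wP tL N 3 2, r320 tL N - wP tL N 3 1, r302 tL N - wP tL N 1 3,
    r401 tL N - wP tL N 1 2]

lemma dL_eq_zero (N : ℕ) : ∀ i, dL N i = 0 := by
  induction N with
  | zero =>
    have h := r_zero (t := tL)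
    simp [dL, Fin.forall_fin_succ, h, wP_zero]
  | succ N ih =>
    apply eq_zero_of_contract
    intro k hk
    have ht := tL_ne_zero
    have ht1 := tL_pow_ne_one
    have hN : ((N + 1 : ℕ) : ℤ) - 1 = N := by push_cast; ring
    have a1 := r500_rec ht ht1 (N + 1 : ℕ)
    have a2 := r410_rec ht ht1 (N + 1 : ℕ)
    have a3 := r311_rec ht ht1 (N + 1 : ℕ)
    have a4 := r221_rec ht ht1 (N + 1 : ℕ)
    have a5 := r320_rec ht ht1 (N + 1 : ℕ)
    have a6 := r302_rec ht ht1 (N + 1 : ℕ)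
    have a7 := r401_rec ht ht1 (N + 1 : ℕ)
    have b1 := wP500_rec ht ht1 (N + 1 : ℕ)
    have b2 := wP410_rec ht ht1 (N + 1 : ℕ)
    have b3 := wP311_rec ht ht1 (N + 1 : ℕ)
    have b4 := wP221_rec ht ht1 (N + 1 : ℕ)
    have b5 := wP320_rec ht ht1 (N + 1 : ℕ)
    have b6 := wP302_rec ht ht1 (N + 1 : ℕ)
    have b7 := wP401_rec ht ht1 (N + 1 : ℕ)
    rw [hN] at a1 a2 a3 a4 a5 a6 a7 b1 b2 b3 b4 b5 b6 b7
    have hm : ∀ x l, x ∈ VL l → tL ^ ((N + 1 : ℕ) : ℤ) * x ∈ VL (l + 1) := by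
      intro x l hx
      simpa using mul_mem_VL N hx
    generalize tL ^ ((N + 1 : ℕ) : ℤ) = y at *
    have hm2 : ∀ x, x ∈ VL k → y ^ 2 * x ∈ VL (k + 1) := by
      intro x hx
      rw [pow_two, mul_assoc]
      exact VL_mono (by omega) (hm _ _ (hm _ _ hx))
    have hm3 : ∀ x, x ∈ VL k → y ^ 3 * x ∈ VL (k + 1) := by
      intro x hx
      rw [pow_succ', mul_assoc]
      exact VL_mono (by omega) (hm _ _ (hm2 _ hx))
    simp only [dL, Fin.forall_fin_succ, IsEmpty.forall_iff, and_true,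
      Matrix.cons_val_zero, Matrix.cons_val_succ] at ih hk ⊢
    obtain ⟨i1, i2, i3, i4, i5, i6, i7⟩ := ih
    obtain ⟨k1, k2, k3, k4, k5, k6, k7⟩ := hk
    set M : ℤ := ((N + 1 : ℕ) : ℤ)
    refine ⟨?_, ?_, ?_, ?_, ?_, ?_, ?_⟩
    · rw [show r500 tL M - wP tL M 1 1 = y * (r410 tL M - wP tL M 2 1) by
        linear_combination i1 - a1 + b1]
      exact hm _ _ k2
    · rw [show r410 tL M - wP tL M 2 1 = y * ((r320 tL M - wP tL M 3 1) + (r401 tL M - wP tL M 1 2))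
        - y ^ 2 * (r311 tL M - wP tL M 2 2) by
        linear_combination i2 - a2 + b2]
      exact sub_mem (hm _ _ (add_mem k5 k7)) (hm2 _ k3)
    · rw [show r311 tL M - wP tL M 2 2 = y * ((r221 tL M - wP tL M 3 2) + (r302 tL M - wP tL M 1 3) + (r410 tL M - wP tL M 2 1))
        - y ^ 2 * ((r221 tL M - wP tL M 3 2) + (r320 tL M - wP tL M 3 1) + (r401 tL M - wP tL M 1 2))
        + y ^ 3 * (r311 tL M - wP tL M 2 2) by
        linear_combination i3 - a3 + b3]
      exact add_mem (sub_mem (hm _ _ (add_mem (add_mem k4 k6) k2)) (hm2 _ (add_mem (add_mem k4 k5) k7))) (hm3 _ k3)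
    · rw [show r221 tL M - wP tL M 3 2 = y * ((r311 tL M - wP tL M 2 2) + (r221 tL M - wP tL M 3 2) + (r320 tL M - wP tL M 3 1))
        - y ^ 2 * ((r221 tL M - wP tL M 3 2) + (r302 tL M - wP tL M 1 3) + (r311 tL M - wP tL M 2 2))
        + y ^ 3 * (r221 tL M - wP tL M 3 2) by
        linear_combination i4 - a4 + b4]
      exact add_mem (sub_mem (hm _ _ (add_mem (add_mem k3 k4) k5)) (hm2 _ (add_mem (add_mem k4 k6) k3))) (hm3 _ k4)
    · rw [show r320 tL M - wP tL M 3 1 = y * ((r302 tL M - wP tL M 1 3) + (r311 tL M - wP tL M 2 2))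
        - y ^ 2 * (r221 tL M - wP tL M 3 2) by
        linear_combination i5 - a5 + b5]
      exact sub_mem (hm _ _ (add_mem k6 k3)) (hm2 _ k4)
    · rw [show r302 tL M - wP tL M 1 3 = y * ((r221 tL M - wP tL M 3 2) + (r401 tL M - wP tL M 1 2))
        - y ^ 2 * (r311 tL M - wP tL M 2 2) by
        linear_combination i6 - a6 + b6]
      exact sub_mem (hm _ _ (add_mem k4 k7)) (hm2 _ k3)
    · rw [show r401 tL M - wP tL M 1 2 = y * ((r311 tL M - wP tL M 2 2) + (r500 tL M - wP tL M 1 1))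
        - y ^ 2 * (r410 tL M - wP tL M 2 1) by
        linear_combination i7 - a7 + b7]
      exact sub_mem (hm _ _ (add_mem k3 k1)) (hm2 _ k2)

theorem r500_eq_wP (N : ℕ) : r500 tL N = wP tL N 1 1 := by
  simpa [dL, sub_eq_zero] using dL_eq_zero N 0

/-! ### The topology of the field of Laurent series -/

open Topology Filter

lemma mem_VL_iff {k : ℤ} {x : LaurentSeries ℚ} : x ∈ VL k ↔ Valued.v x ≤ WithZero.exp (-k) :=
  (LaurentSeries.valuation_le_iff_coeff_lt_eq_zero (K := ℚ)).symm

lemma VL_mul_mem {k l : ℤ} {x y : LaurentSeries ℚ} (hx : x ∈ VL k) (hy : y ∈ VL l) :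
    x * y ∈ VL (k + l) := by
  rw [mem_VL_iff] at *
  rw [map_mul, neg_add, WithZero.exp_add]
  exact mul_le_mul' hx hy

lemma VL_mul_mem' {k : ℤ} {x y : LaurentSeries ℚ} (hx : x ∈ VL k) (hy : y ∈ VL 0) :
    x * y ∈ VL k := by
  simpa using VL_mul_mem hx hy

lemma one_mem_VL : (1 : LaurentSeries ℚ) ∈ VL 0 := by
  rw [mem_VL_iff]; simp

lemma not_one_mem_VL : (1 : LaurentSeries ℚ) ∉ VL 1 := by
  intro h
  simpa using h 0 (by norm_num)

lemma tL_zpow_mem (n : ℤ) : tL ^ n ∈ VL n := by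
  have h : (tL ^ n : LaurentSeries ℚ) = HahnSeries.single n 1 :=
    (RatFunc.single_zpow n).symm
  rw [h]
  exact fun m hm => HahnSeries.coeff_single_of_ne hm.ne

lemma VL_mem_nhds (k : ℤ) : (VL k : Set (LaurentSeries ℚ)) ∈ 𝓝 0 := by
  have h1 : (VL 0 : Set (LaurentSeries ℚ)) ∈ 𝓝 0 := by
    have := (Valued.isOpen_integer (LaurentSeries ℚ)).mem_nhds (zero_mem _)
    filter_upwards [this] with x hx
    have := (Valuation.mem_integer_iff _ _).1 hx
    exact mem_VL_iff.2 (by simpa using this)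
  have h2 : Tendsto (fun x => tL ^ (-k) * x) (𝓝 0) (𝓝 0) := by
    have := (continuous_const_mul (tL ^ (-k))).tendsto 0
    rwa [mul_zero] at this
  filter_upwards [h2 h1] with x hx
  have := VL_mul_mem (tL_zpow_mem k) hx
  rwa [← mul_assoc, ← zpow_add₀ tL_ne_zero, add_neg_cancel, zpow_zero, one_mul, add_zero] at this

lemma exists_VL_subset {s : Set (LaurentSeries ℚ)} (hs : s ∈ 𝓝 0) :
    ∃ k, (VL k : Set (LaurentSeries ℚ)) ⊆ s := by
  obtain ⟨γ, hγ⟩ := Valued.mem_nhds_zero.1 hs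
  simp_rw [Valuation.restrict_lt_iff_lt_embedding] at hγ
  set e := MonoidWithZeroHom.ValueGroup₀.embedding γ.1 with he
  have he0 : e ≠ 0 := by simp [he]
  refine ⟨1 - e.log, fun x hx => hγ ?_⟩
  refine lt_of_le_of_lt (mem_VL_iff.1 hx) ?_
  conv_rhs => rw [← WithZero.exp_log he0]
  rw [WithZero.exp_lt_exp]
  omega

lemma isOpen_VL (k : ℤ) : IsOpen (VL k : Set (LaurentSeries ℚ)) :=
  (VL k).isOpen_of_mem_nhds (VL_mem_nhds k)

lemma isClosed_VL (k : ℤ) : IsClosed (VL k : Set (LaurentSeries ℚ)) :=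
  (VL k).isClosed_of_isOpen (isOpen_VL k)

instance : NonarchimedeanAddGroup (LaurentSeries ℚ) where
  is_nonarchimedean _ hU :=
    let ⟨k, hk⟩ := exists_VL_subset hU
    ⟨⟨VL k, isOpen_VL k⟩, hk⟩

lemma tendsto_iff_VL {α : Type*} {F : Filter α} {f : α → LaurentSeries ℚ} {a : LaurentSeries ℚ} :
    Tendsto f F (𝓝 a) ↔ ∀ k, ∀ᶠ x in F, f x - a ∈ VL k := by
  rw [← tendsto_sub_nhds_zero_iff]
  constructor
  · exact fun h k => h (VL_mem_nhds k)
  · intro h s hs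
    obtain ⟨k, hk⟩ := exists_VL_subset hs
    filter_upwards [h k] with x hx using hk hx

lemma summable_of_VL {ι : Type*} {f : ι → LaurentSeries ℚ} (h : ∀ k, {i | f i ∉ VL k}.Finite) :
    Summable f := by
  apply NonarchimedeanAddGroup.summable_of_tendsto_cofinite_zero
  rw [tendsto_iff_VL]
  exact fun k => by simpa [Filter.eventually_cofinite] using h k

lemma tsum_mem_VL {ι : Type*} {f : ι → LaurentSeries ℚ} {k : ℤ} (h : ∀ i, f i ∈ VL k) :
    ∑' i, f i ∈ VL k := by
  by_cases hf : Summable f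
  · exact (isClosed_VL k).mem_of_tendsto hf.hasSum (Eventually.of_forall fun s =>
      sum_mem fun i _ => h i)
  · rw [tsum_eq_zero_of_not_summable hf]; exact zero_mem _

/-- Interchange of limit and summation: a null family weighted by uniformly bounded weights that
converge pointwise. -/
lemma tendsto_tsum_mul {ι : Type*} {f : ι → LaurentSeries ℚ} (h : ∀ k, {i | f i ∉ VL k}.Finite)
    {w : ℕ → ι → LaurentSeries ℚ} {c : LaurentSeries ℚ} (hw : ∀ N i, w N i ∈ VL 0)
    (hc : ∀ i, Tendsto (fun N => w N i) atTop (𝓝 c)) :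
    Tendsto (fun N => ∑' i, f i * w N i) atTop (𝓝 ((∑' i, f i) * c)) := by
  rcases isEmpty_or_nonempty ι with hi | ⟨⟨i0⟩⟩
  · simp
  have hc0 : c ∈ VL 0 := (isClosed_VL 0).mem_of_tendsto (hc i0) (Eventually.of_forall fun N => hw N i0)
  have hsum : ∀ N, Summable fun i => f i * w N i := fun N => summable_of_VL fun k =>
    (h k).subset fun i hi h' => hi (VL_mul_mem' h' (hw N i))
  have hsum' : Summable fun i => f i * c := (summable_of_VL h).mul_right c
  rw [tendsto_iff_VL]
  intro k
  have hev : ∀ᶠ N in atTop, ∀ i ∈ (h k).toFinset, f i * w N i - f i * c ∈ VL k := by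
    rw [Filter.eventually_all_finset]
    exact fun i _ => tendsto_iff_VL.1 ((hc i).const_mul (f i)) k
  filter_upwards [hev] with N hN
  rw [← tsum_mul_right, ← (hsum N).tsum_sub hsum']
  refine tsum_mem_VL fun i => ?_
  by_cases hi : f i ∈ VL k
  · exact sub_mem (VL_mul_mem' hi (hw N i)) (VL_mul_mem' hi hc0)
  · exact hN i (by simpa using hi)

/-! ### Infinite products -/

/-- The partial products of `∏ (1 - T ^ (a k + b))`. -/
noncomputable def pp (a b m : ℕ) : LaurentSeries ℚ := ∏ k ∈ Finset.range m, (1 - tL ^ (a * k + b))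

/-- The infinite product `∏ (1 - T ^ (a k + b))`. The limit exists for `a, b > 0` by
`tendsto_pp`. -/
noncomputable def LL (a b : ℕ) : LaurentSeries ℚ := limUnder atTop (pp a b)

lemma tL_pow_mem (n : ℕ) : tL ^ n ∈ VL n := by
  simpa using tL_zpow_mem n

lemma pp_sub_one_mem (a : ℕ) {b : ℕ} (hb : 0 < b) (m : ℕ) : pp a b m - 1 ∈ VL 1 := by
  induction m with
  | zero => simp [pp, zero_mem]
  | succ m ih =>
    rw [pp, Finset.prod_range_succ, ← pp]
    have h : tL ^ (a * m + b) ∈ VL 1 := VL_mono (by push_cast; nlinarith) (tL_pow_mem _)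
    have h2 := VL_mul_mem h ih
    rw [show pp a b m * (1 - tL ^ (a * m + b)) - 1
      = (pp a b m - 1) - tL ^ (a * m + b) * (pp a b m - 1) - tL ^ (a * m + b) by ring]
    exact sub_mem (sub_mem ih (VL_mono (by norm_num) h2)) h

lemma mem_VL_of_sub_one {x : LaurentSeries ℚ} (h : x - 1 ∈ VL 1) : x ∈ VL 0 := by
  rw [← sub_add_cancel x 1]
  exact add_mem (VL_mono (by norm_num) h) one_mem_VL

lemma inv_mem_VL {x : LaurentSeries ℚ} (h : x - 1 ∈ VL 1) : x⁻¹ ∈ VL 0 := by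
  have h1 : Valued.v x = 1 := by
    have := Valuation.map_one_add_of_lt (v := Valued.v) (x := x - 1)
      (lt_of_le_of_lt (mem_VL_iff.1 h) (by rw [← WithZero.exp_zero, WithZero.exp_lt_exp]; norm_num))
    simpa using this
  rw [mem_VL_iff, map_inv₀, h1]
  simp

lemma tendsto_pp {a b : ℕ} (ha : 0 < a) (hb : 0 < b) :
    Tendsto (pp a b) atTop (𝓝 (LL a b)) := by
  have : CauchySeq (pp a b) := by
    apply NonarchimedeanAddGroup.cauchySeq_of_tendsto_sub_nhds_zero
    rw [tendsto_iff_VL]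
    intro k
    filter_upwards [eventually_ge_atTop k.toNat] with m hm
    rw [sub_zero, pp, Finset.prod_range_succ, ← pp,
      show pp a b m * (1 - tL ^ (a * m + b)) - pp a b m = -(tL ^ (a * m + b) * pp a b m) by ring]
    exact neg_mem (VL_mono (by push_cast; nlinarith [Int.self_le_toNat k])
      (VL_mul_mem' (tL_pow_mem _) (mem_VL_of_sub_one (pp_sub_one_mem a hb m))))
  exact this.tendsto_limUnder

lemma LL_ne_zero {a b : ℕ} (ha : 0 < a) (hb : 0 < b) : LL a b ≠ 0 := by
  have h : LL a b - 1 ∈ VL 1 := (isClosed_VL 1).mem_of_tendsto ((tendsto_pp ha hb).sub_const 1)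
    (Eventually.of_forall fun m => pp_sub_one_mem a hb m)
  intro h0
  rw [h0, zero_sub] at h
  exact not_one_mem_VL (by simpa using neg_mem h)

lemma ip_eq_pp (a n : ℕ) : ip (tL ^ a) n = (pp a a n)⁻¹ := by
  rw [ip_natCast, pp]
  congr 1
  refine Finset.prod_congr rfl fun k _ => ?_
  rw [← pow_mul]; ring_nf

lemma ip_mem_VL {a : ℕ} (ha : 0 < a) (n : ℤ) : ip (tL ^ a) n ∈ VL 0 := by
  rcases lt_or_ge n 0 with h | h
  · rw [ip_neg h]; exact zero_mem _
  · lift n to ℕ using h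
    rw [ip_eq_pp]
    exact inv_mem_VL (pp_sub_one_mem a ha n)

lemma tendsto_ip {a : ℕ} (ha : 0 < a) (c : ℤ) :
    Tendsto (fun N : ℕ => ip (tL ^ a) (N + c)) atTop (𝓝 (LL a a)⁻¹) := by
  have h1 : Tendsto (fun N : ℕ => ((N : ℤ) + c).toNat) atTop atTop := by
    refine tendsto_atTop.2 fun b => ?_
    filter_upwards [eventually_ge_atTop (b + (-c).toNat)] with N hN
    omega
  have h2 := ((tendsto_pp ha ha).inv₀ (LL_ne_zero ha ha)).comp h1
  refine h2.congr' ?_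
  filter_upwards [eventually_ge_atTop (-c).toNat] with N hN
  simp only [Function.comp]
  rw [← ip_eq_pp]
  congr 1
  omega

/-- Splitting a product according to residue classes. -/
lemma LL_split {a b : ℕ} (ha : 0 < a) (hb : 0 < b) {r : ℕ} (hr : 0 < r) :
    LL a b = ∏ j ∈ Finset.range r, LL (a * r) (a * j + b) := by
  have h1 : Tendsto (fun m => ∏ j ∈ Finset.range r, pp (a * r) (a * j + b) m) atTop
      (𝓝 (∏ j ∈ Finset.range r, LL (a * r) (a * j + b))) :=
    tendsto_finsetProd _ fun j _ => tendsto_pp (by positivity) (by positivity)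
  have h2 := (tendsto_pp ha hb).comp (tendsto_id.const_mul_atTop' hr)
  refine tendsto_nhds_unique (h2.congr fun m => ?_) h1
  simp only [Function.comp, id]
  induction m with
  | zero => simp [pp]
  | succ m ih =>
    have : pp a b (r * (m + 1)) = pp a b (r * m)
        * ∏ j ∈ Finset.range r, (1 - tL ^ (a * r * m + (a * j + b))) := by
      rw [pp, mul_add, mul_one, Finset.prod_range_add, ← pp]
      congr 1
      refine Finset.prod_congr rfl fun j _ => ?_
      ring_nf
    rw [this, ih, ← Finset.prod_mul_distrib]
    refine Finset.prod_congr rfl fun j _ => ?_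
    rw [pp, pp, Finset.prod_range_succ]

/-! ### The Jacobi triple product -/

/-- The binomial coefficient `j (j - 1) / 2` for `j : ℤ`. -/
def cz (j : ℤ) : ℤ := j * (j - 1) / 2

lemma two_mul_cz (j : ℤ) : 2 * cz j = j * (j - 1) := by
  rw [cz]
  apply Int.mul_ediv_cancel'
  have := Int.even_mul_pred_self j
  exact this.two_dvd

lemma cz_add_one (j : ℤ) : cz (j + 1) = cz j + j := by
  have h1 := two_mul_cz j
  have h2 := two_mul_cz (j + 1)
  linarith [show (j + 1) * (j + 1 - 1) = j * (j - 1) + 2 * j by ring]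

section Field

variable {K : Type*} [Field K]

/-- The summand of the finite form of the Jacobi triple product. -/
noncomputable def jT (Q z : K) (m j : ℤ) : K := Q ^ cz j * z ^ j * (ip Q (m - j) * ip Q (m + j))

lemma jT_support (Q z : K) (m : ℤ) : (jT Q z m).HasFiniteSupport := by
  refine (Finset.Icc (-m) m).finite_toSet.subset fun j hj => ?_
  have h := right_ne_zero_of_mul (Function.mem_support.1 hj)
  have h1 := ip_nonneg_of_ne (left_ne_zero_of_mul h)
  have h2 := ip_nonneg_of_ne (right_ne_zero_of_mul h)
  simp only [Finset.coe_Icc, Set.mem_Icc]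
  omega

/-- The recurrence in `m` behind the finite Jacobi triple product: the factor
`(1 + z Q ^ m) (1 + Q ^ (m + 1) / z)` is expanded and `z`, `z⁻¹` are absorbed by shifting `j`. -/
lemma jT_rec {Q z : K} (hQ : Q ≠ 0) (hQ1 : ∀ n : ℕ, Q ^ (n + 1) ≠ 1) (hz : z ≠ 0) (m : ℤ) :
    (∑ᶠ j, jT Q z (m + 1) j) * ((1 - Q ^ (2 * m + 1)) * (1 - Q ^ (2 * m + 2)))
      = (1 + z * Q ^ m) * (1 + Q ^ (m + 1) / z) * ∑ᶠ j, jT Q z m j := by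
  have e1 : z * Q ^ m * ∑ᶠ j, jT Q z m j = ∑ᶠ j, z * Q ^ m * jT Q z m (j - 1) := by
    rw [mul_finsum]
    exact (finsum_comp_equiv (Equiv.subRight (1 : ℤ)) (f := fun j => z * Q ^ m * jT Q z m j)).symm
  have e2 : Q ^ (m + 1) / z * ∑ᶠ j, jT Q z m j
      = ∑ᶠ j, Q ^ (m + 1) / z * jT Q z m (j + 1) := by
    rw [mul_finsum]
    exact (finsum_comp_equiv (Equiv.addRight (1 : ℤ))
      (f := fun j => Q ^ (m + 1) / z * jT Q z m j)).symm
  have e3 : (1 + z * Q ^ m) * (1 + Q ^ (m + 1) / z)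
      = (1 + Q ^ (2 * m + 1)) + z * Q ^ m + Q ^ (m + 1) / z := by
    simp only [two_mul, zpow_add₀ hQ, zpow_one]
    field_simp
    ring
  have s1 : Function.HasFiniteSupport fun j => z * Q ^ m * jT Q z m (j - 1) :=
    ((jT_support Q z m).comp_of_injective (sub_left_injective (b := 1))).mul_right _
  have s2 : Function.HasFiniteSupport fun j => Q ^ (m + 1) / z * jT Q z m (j + 1) :=
    ((jT_support Q z m).comp_of_injective (add_left_injective 1)).mul_right _
  have s0 : Function.HasFiniteSupport fun j => (1 + Q ^ (2 * m + 1)) * jT Q z m j :=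
    (jT_support Q z m).mul_right _
  rw [e3, add_mul, add_mul, e1, e2, mul_finsum, ← finsum_add_distrib s0 s1,
    ← finsum_add_distrib (s0.fun_add s1) s2, mul_comm, mul_finsum]
  refine finsum_congr fun j => ?_
  simp only [jT]
  have a1 := mul_ip hQ1 (m + 1 - j)
  have a2 := mul_ip hQ1 (m + 1 + j)
  have a3 := mul_ip hQ1 (m - j)
  have a4 := mul_ip hQ1 (m + j)
  rw [show m + 1 - j - 1 = m - j by ring] at a1
  rw [show m + 1 + j - 1 = m + j by ring] at a2
  rw [show m - (j - 1) = m + 1 - j by ring, show m + (j - 1) = m + j - 1 by ring,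
    show m - (j + 1) = m - j - 1 by ring, show m + (j + 1) = m + 1 + j by ring, ← a3, ← a4,
    ← a1, ← a2]
  have c1 : Q ^ cz (j + 1) = Q ^ cz j * Q ^ j := by rw [cz_add_one, zpow_add₀ hQ]
  have c2 : Q ^ cz j = Q ^ cz (j - 1) * Q ^ j / Q := by
    have := cz_add_one (j - 1)
    rw [sub_add_cancel] at this
    rw [this, zpow_add₀ hQ, zpow_sub_one₀ hQ]; ring
  have z1 : z ^ (j + 1) = z ^ j * z := zpow_add_one₀ hz j
  have z2 : z ^ (j - 1) = z ^ j * z⁻¹ := zpow_sub_one₀ hz j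
  rw [c1, c2, z1, z2, show 2 * m + 1 = m + m + 1 by ring, show 2 * m + 2 = m + m + 1 + 1 by ring]
  simp only [zpow_add₀ hQ, zpow_sub₀ hQ, zpow_one]
  have hj : Q ^ j ≠ 0 := zpow_ne_zero _ hQ
  field_simp
  ring

/-- The finite form of the Jacobi triple product. -/
lemma jT_prod {Q z : K} (hQ : Q ≠ 0) (hQ1 : ∀ n : ℕ, Q ^ (n + 1) ≠ 1) (hz : z ≠ 0) (m : ℕ) :
    ∑ᶠ j, jT Q z m j = (∏ k ∈ Finset.range m, ((1 + z * Q ^ k) * (1 + Q ^ (k + 1) / z)))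
      * ip Q (2 * m) := by
  induction m with
  | zero =>
    rw [finsum_eq_single _ 0]
    · simp [jT, cz, ip_zero]
    · intro j hj
      simp only [jT]
      rcases lt_or_gt_of_ne hj with h | h
      · rw [ip_neg (n := _ + j) (by push_cast; omega)]; simp
      · rw [ip_neg (n := _ - j) (by push_cast; omega)]; simp
  | succ m ih =>
    have h := jT_rec hQ hQ1 hz m
    have a1 := mul_ip hQ1 (2 * m + 1)
    have a2 := mul_ip hQ1 (2 * m + 2)
    rw [show (2 * m + 1 - 1 : ℤ) = 2 * m by ring] at a1
    rw [show (2 * m + 2 - 1 : ℤ) = 2 * m + 1 by ring] at a2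
    have n1 : 1 - Q ^ (2 * (m : ℤ) + 1) ≠ 0 :=
      sub_ne_zero.2 (by exact_mod_cast (hQ1 (2 * m)).symm)
    have n2 : 1 - Q ^ (2 * (m : ℤ) + 2) ≠ 0 :=
      sub_ne_zero.2 (by exact_mod_cast (hQ1 (2 * m + 1)).symm)
    apply mul_right_cancel₀ (mul_ne_zero n1 n2)
    rw [ih, ← a1, ← a2] at h
    rw [Finset.prod_range_succ]
    push_cast
    rw [h, show (2 * (m + 1) : ℤ) = 2 * m + 2 by ring]
    have p1 : Q ^ ((m : ℤ) + 1) = Q ^ (m + 1) := by exact_mod_cast zpow_natCast Q (m + 1)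
    rw [p1, zpow_natCast]
    ring

lemma one_add_mul_div_neg {x y : K} (hy : y ≠ 0) : 1 + x * y / -y = 1 - x := by
  field_simp
  ring

end Field

/-- The theta series `∑ (-1)^j T ^ (A j (j-1) / 2 + B j)`. -/
noncomputable def jS (A B : ℕ) : LaurentSeries ℚ :=
  ∑' j : ℤ, (-1) ^ j * tL ^ (A * cz j + B * j)

lemma neg_one_zpow_mem (j : ℤ) : (-1 : LaurentSeries ℚ) ^ j ∈ VL 0 := by
  rcases Int.even_or_odd j with h | h
  · rw [h.neg_one_zpow]; exact one_mem_VL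
  · rw [h.neg_one_zpow]; exact neg_mem one_mem_VL

lemma jS_null {A B : ℕ} (hB : 0 < B) (hAB : B < A) (k : ℤ) :
    {j : ℤ | (-1) ^ j * tL ^ (A * cz j + B * j) ∉ VL k}.Finite := by
  refine (Finset.Icc (-k) k).finite_toSet.subset fun j hj => ?_
  have h1 : ¬ k ≤ A * cz j + B * j := by
    intro h
    refine hj (VL_mono h ?_)
    rw [mul_comm ((-1) ^ j)]
    exact VL_mul_mem' (tL_zpow_mem _) (neg_one_zpow_mem j)
  have h2 := two_mul_cz j
  have hA : (B : ℤ) + 1 ≤ A := by exact_mod_cast hAB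
  have hB : (1 : ℤ) ≤ B := by exact_mod_cast hB
  simp only [Finset.coe_Icc, Set.mem_Icc]
  rcases le_or_gt 0 j with h | h
  · have hc : 0 ≤ cz j := by
      rcases eq_or_lt_of_le h with rfl | h
      · simp [cz]
      · nlinarith
    constructor <;> nlinarith
  · have hc : -j ≤ cz j := by nlinarith
    constructor <;> nlinarith

/-- The Jacobi triple product, as the limit `m → ∞` of `jT_prod` with `Q = T ^ A` and `z = -T ^ B`. -/
theorem jS_eq {A B : ℕ} (hB : 0 < B) (hAB : B < A) :
    jS A B = LL A A * LL A B * LL A (A - B) := by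
  have hA : 0 < A := by omega
  have hQ : tL ^ A ≠ 0 := pow_ne_zero _ tL_ne_zero
  have hQ1 : ∀ n : ℕ, (tL ^ A) ^ (n + 1) ≠ 1 := by
    intro n
    obtain ⟨k, hk⟩ : ∃ k, A * (n + 1) = k + 1 := ⟨A * (n + 1) - 1, by
      have : 0 < A * (n + 1) := by positivity
      omega⟩
    rw [← pow_mul, hk]
    exact tL_pow_ne_one k
  have hz : -tL ^ B ≠ 0 := neg_ne_zero.2 (pow_ne_zero _ tL_ne_zero)
  have h1 := tendsto_tsum_mul (jS_null hB hAB)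
    (w := fun m j => ip (tL ^ A) (m + -j) * ip (tL ^ A) (m + j)) (c := (LL A A)⁻¹ * (LL A A)⁻¹)
    (fun N i => VL_mul_mem' (ip_mem_VL hA _) (ip_mem_VL hA _))
    (fun i => (tendsto_ip hA _).mul (tendsto_ip hA _))
  have h2 : Tendsto (fun m : ℕ => pp A B m * pp A (A - B) m * ip (tL ^ A) ((2 * m : ℕ) + 0)) atTop
      (𝓝 (LL A B * LL A (A - B) * (LL A A)⁻¹)) :=
    ((tendsto_pp hA hB).mul (tendsto_pp hA (by omega))).mul
      ((tendsto_ip hA 0).comp (tendsto_id.const_mul_atTop' two_pos))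
  have h3 : jS A B * ((LL A A)⁻¹ * (LL A A)⁻¹) = LL A B * LL A (A - B) * (LL A A)⁻¹ := by
    refine tendsto_nhds_unique (h1.congr fun m => ?_) h2
    have h := jT_prod hQ hQ1 hz m
    have e1 : ∀ j : ℤ, (-1) ^ j * tL ^ (A * cz j + B * j)
        * (ip (tL ^ A) (m + -j) * ip (tL ^ A) (m + j)) = jT (tL ^ A) (-tL ^ B) m j := by
      intro j
      rw [jT, neg_eq_neg_one_mul (tL ^ B), mul_zpow, ← zpow_natCast, ← zpow_natCast, ← zpow_mul,
        ← zpow_mul, zpow_add₀ tL_ne_zero, sub_eq_add_neg]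
      ring
    rw [tsum_congr e1, tsum_eq_finsum (jT_support _ _ _), h, pp, pp, ← Finset.prod_mul_distrib]
    congr 1
    · refine Finset.prod_congr rfl fun k _ => ?_
      congr 1
      · rw [← pow_mul, pow_add]; ring
      · have : (tL ^ A) ^ (k + 1) = tL ^ (A * k + (A - B)) * tL ^ B := by
          rw [← pow_mul, ← pow_add]; congr 1; rw [mul_add, mul_one]; omega
        rw [this]
        exact one_add_mul_div_neg (pow_ne_zero _ tL_ne_zero)
  have hL := LL_ne_zero hA hA
  field_simp at h3
  exact h3

/-! ### Factorisation of the Weyl-type theta series -/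

instance : NonarchimedeanRing (LaurentSeries ℚ) where
  is_nonarchimedean := NonarchimedeanAddGroup.is_nonarchimedean

/-- The limit of the summand of `wP` for `A = B = 1`, up to the Pochhammer symbols. -/
noncomputable def wS (g : ℤ × ℤ) : LaurentSeries ℚ :=
  ch (LaurentSeries ℚ) (g.2 - g.1 + 1) * tL ^ we 1 1 g.1 g.2

lemma ch_mem_VL (n : ℤ) : ch (LaurentSeries ℚ) n ∈ VL 0 := by
  unfold ch
  split_ifs
  · exact one_mem_VL
  · exact neg_mem one_mem_VL
  · exact zero_mem _

lemma wS_null (k : ℤ) : {g | wS g ∉ VL k}.Finite := by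
  refine ((Finset.Icc (-(3 * k + 12)) (3 * k + 12)) ×ˢ
    (Finset.Icc (-(3 * k + 12)) (3 * k + 12))).finite_toSet.subset fun ⟨g1, g2⟩ hg => ?_
  have h0 : ch (LaurentSeries ℚ) (g2 - g1 + 1) ≠ 0 := by
    intro h
    apply hg
    rw [wS, h, zero_mul]
    exact zero_mem _
  have h1 : ¬ k ≤ we 1 1 g1 g2 := by
    intro h
    apply hg
    rw [wS, mul_comm]
    exact VL_mono h (VL_mul_mem' (tL_zpow_mem _) (ch_mem_VL _))
  have h2 := three_mul_div h0
  have h3 : 8 * (g1 ^ 2 + g2 ^ 2 + g1 * g2) - 10 * g1 - 5 * g2 < 3 * k := by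
    simp only [we] at h1
    omega
  simp only [Finset.coe_product, Finset.coe_Icc, Set.mem_prod, Set.mem_Icc]
  have q1 := sq_nonneg (g1 + g2)
  have q2 := sq_nonneg (8 * g1 - 9)
  have q3 := sq_nonneg (8 * g1 - 11)
  have q4 := sq_nonneg (8 * g2 - 4)
  have q5 := sq_nonneg (8 * g2 - 6)
  refine ⟨⟨?_, ?_⟩, ⟨?_, ?_⟩⟩ <;> nlinarith

/-- The reindexing of triples: `s = 2 g₁ + g₂` and the summation index are combined into the third
index according to the residue of `s` modulo `3`. -/
def kap (s j : ℤ) : ℤ := if s % 3 = 0 then s / 3 - j else if s % 3 = 1 then s / 3 + j else j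

/-- The inverse of `kap s`. -/
def kapi (s c : ℤ) : ℤ := if s % 3 = 0 then s / 3 - c else if s % 3 = 1 then c - s / 3 else c

/-- The bijection `((g₁, g₂), j) ↦ ((a, b), c)` with `a + c = g₁` and `b + c = g₁ + g₂`. -/
def sig : (ℤ × ℤ) × ℤ ≃ (ℤ × ℤ) × ℤ where
  toFun x := ((x.1.1 - kap (2 * x.1.1 + x.1.2) x.2,
    x.1.1 + x.1.2 - kap (2 * x.1.1 + x.1.2) x.2), kap (2 * x.1.1 + x.1.2) x.2)
  invFun y := ((y.1.1 + y.2, y.1.2 - y.1.1),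
    kapi (2 * (y.1.1 + y.2) + (y.1.2 - y.1.1)) y.2)
  left_inv := by
    rintro ⟨⟨g1, g2⟩, j⟩
    refine Prod.ext (Prod.ext (by dsimp only; ring) (by dsimp only; ring)) ?_
    dsimp only
    rw [show 2 * (g1 - kap (2 * g1 + g2) j + kap (2 * g1 + g2) j)
      + (g1 + g2 - kap (2 * g1 + g2) j - (g1 - kap (2 * g1 + g2) j)) = 2 * g1 + g2 by ring]
    unfold kap kapi
    split_ifs <;> ring
  right_inv := by
    rintro ⟨⟨a, b⟩, c⟩
    have h : kap (2 * (a + c) + (b - a)) (kapi (2 * (a + c) + (b - a)) c) = c := by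
      unfold kap kapi
      split_ifs <;> ring
    dsimp only
    rw [h]
    refine Prod.ext (Prod.ext (by dsimp only; ring) (by dsimp only; ring)) rfl

/-- The reflection under which the unwanted part of the triple sum is antisymmetric. -/
def tau : (ℤ × ℤ) × ℤ ≃ (ℤ × ℤ) × ℤ :=
  Function.Involutive.toPerm (fun x => (x.1, if (2 * x.1.1 + x.1.2) % 3 = 2 then
      2 * ((2 * x.1.1 + x.1.2) / 3) + 1 - x.2 else x.2)) (by
    rintro ⟨g, j⟩
    dsimp only
    split_ifs <;> simp)

/-- The summand of `jS`. -/
noncomputable def jF (A B : ℕ) (j : ℤ) : LaurentSeries ℚ := (-1) ^ j * tL ^ (A * cz j + B * j)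

lemma neg_one_zpow_eq_of_even {i j : ℤ} (h : Even (i - j)) :
    (-1 : LaurentSeries ℚ) ^ i = (-1) ^ j := by
  rw [show i = j + (i - j) by ring, zpow_add₀ (by norm_num), h.neg_one_zpow, mul_one]

lemma jF_mul (a b c : ℤ) : jF 8 1 a * jF 8 1 b * jF 8 2 c
    = (-1) ^ (a + b + c) * tL ^ (8 * (cz a + cz b + cz c) + a + b + 2 * c) := by
  have h : (-1 : LaurentSeries ℚ) ≠ 0 := by norm_num
  simp only [jF]
  rw [show 8 * (cz a + cz b + cz c) + a + b + 2 * c = ((8 : ℕ) * cz a + (1 : ℕ) * a)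
    + ((8 : ℕ) * cz b + (1 : ℕ) * b) + ((8 : ℕ) * cz c + (2 : ℕ) * c) by push_cast; ring,
    zpow_add₀ tL_ne_zero (_ + _) (_ + _), zpow_add₀ tL_ne_zero (_ + _) (_ + _), zpow_add₀ h,
    zpow_add₀ h]
  ring

/-- On the two residue classes of `2 g₁ + g₂` modulo `3` where the character does not vanish, `sig`
matches the summands of the two sides of `wS_mul`. -/
lemma sig_good (x : (ℤ × ℤ) × ℤ) (hx : (2 * x.1.1 + x.1.2) % 3 ≠ 2) :
    jF 8 1 (sig x).1.1 * jF 8 1 (sig x).1.2 * jF 8 2 (sig x).2 = wS x.1 * jF 24 8 x.2 := by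
  obtain ⟨⟨g1, g2⟩, j⟩ := x
  rw [jF_mul]
  simp only [sig, Equiv.coe_fn_mk, wS, jF]
  simp only at hx
  have hr := Int.emod_add_ediv_mul (2 * g1 + g2) 3
  obtain ⟨r, hr'⟩ : ∃ r, r = (2 * g1 + g2) / 3 := ⟨_, rfl⟩
  have hc : ch (LaurentSeries ℚ) (g2 - g1 + 1) ≠ 0 := by
    unfold ch
    rcases (by omega : (g2 - g1 + 1) % 3 = 1 ∨ (g2 - g1 + 1) % 3 = 2) with h | h <;> simp [h]
  have h3 := three_mul_div hc
  have hj := two_mul_cz j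
  rcases (by omega : (2 * g1 + g2) % 3 = 0 ∨ (2 * g1 + g2) % 3 = 1) with h | h
  · have hk : kap (2 * g1 + g2) j = r - j := by rw [kap, if_pos h, hr']
    have hc1 : ch (LaurentSeries ℚ) (g2 - g1 + 1) = 1 := by rw [ch, if_pos (by omega)]
    obtain rfl : g2 = 3 * r - 2 * g1 := by omega
    rw [hk, hc1, mul_mul_mul_comm, one_mul, ← zpow_add₀ tL_ne_zero]
    congr 1
    · apply neg_one_zpow_eq_of_even
      exact ⟨r, by ring⟩
    · congr 1
      have p1 := two_mul_cz (g1 - (r - j))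
      have p2 := two_mul_cz (g1 + (3 * r - 2 * g1) - (r - j))
      have p3 := two_mul_cz (r - j)
      simp only [we]
      push_cast
      linarith
  · have hk : kap (2 * g1 + g2) j = r + j := by rw [kap, if_neg (by omega), if_pos h, hr']
    have hc1 : ch (LaurentSeries ℚ) (g2 - g1 + 1) = -1 := by
      rw [ch, if_neg (by omega), if_pos (by omega)]
    obtain rfl : g2 = 3 * r + 1 - 2 * g1 := by omega
    rw [hk, hc1, mul_mul_mul_comm, ← zpow_add₀ tL_ne_zero, ← zpow_one_add₀ (by norm_num)]
    congr 1
    · apply neg_one_zpow_eq_of_even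
      exact ⟨r - j, by ring⟩
    · congr 1
      have p1 := two_mul_cz (g1 - (r + j))
      have p2 := two_mul_cz (g1 + (3 * r + 1 - 2 * g1) - (r + j))
      have p3 := two_mul_cz (r + j)
      simp only [we]
      push_cast
      linarith

lemma neg_mul_eq_neg_one_mul' {K : Type*} [Field K] (a b : K) : -(a * b) = -1 * a * b := by ring

/-- On the residue class of `2 g₁ + g₂` modulo `3` where the character vanishes, `tau` changes the sign
of the summand of the product of three theta series. -/
lemma sig_bad (x : (ℤ × ℤ) × ℤ) (hx : (2 * x.1.1 + x.1.2) % 3 = 2) :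
    jF 8 1 (sig (tau x)).1.1 * jF 8 1 (sig (tau x)).1.2 * jF 8 2 (sig (tau x)).2
      = -(jF 8 1 (sig x).1.1 * jF 8 1 (sig x).1.2 * jF 8 2 (sig x).2) := by
  obtain ⟨⟨g1, g2⟩, j⟩ := x
  simp only at hx
  rw [jF_mul, jF_mul]
  have ht : tau ((g1, g2), j) = ((g1, g2), 2 * ((2 * g1 + g2) / 3) + 1 - j) := by
    change (_, if _ then _ else _) = _
    rw [if_pos hx]
  rw [ht]
  simp only [sig, Equiv.coe_fn_mk]
  obtain ⟨r, hr'⟩ : ∃ r, r = (2 * g1 + g2) / 3 := ⟨_, rfl⟩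
  have hk (i : ℤ) : kap (2 * g1 + g2) i = i := by
    rw [kap, if_neg (by omega), if_neg (by omega)]
  rw [hk, hk, ← hr']
  obtain rfl : g2 = 3 * r + 2 - 2 * g1 := by omega
  rw [neg_mul_eq_neg_one_mul', ← zpow_one_add₀ (by norm_num)]
  congr 1
  · apply neg_one_zpow_eq_of_even
    exact ⟨j - r - 1, by ring⟩
  · congr 1
    have p1 := two_mul_cz (g1 - (2 * r + 1 - j))
    have p2 := two_mul_cz (g1 + (3 * r + 2 - 2 * g1) - (2 * r + 1 - j))
    have p3 := two_mul_cz (2 * r + 1 - j)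
    have p4 := two_mul_cz (g1 - j)
    have p5 := two_mul_cz (g1 + (3 * r + 2 - 2 * g1) - j)
    have p6 := two_mul_cz j
    linarith

lemma hasSum_of_eq_zero {ι : Type*} {f : ι → LaurentSeries ℚ} (h : ∀ x, f x = 0) :
    HasSum f 0 := by
  rw [funext h]
  exact hasSum_zero

/-- The binary theta series as a quotient of unary theta series. -/
theorem wS_mul : (∑' g, wS g) * jS 24 8 = jS 8 1 * jS 8 1 * jS 8 2 := by
  have s81 := (summable_of_VL (jS_null (A := 8) (B := 1) (by norm_num) (by norm_num))).hasSum
  have s82 := (summable_of_VL (jS_null (A := 8) (B := 2) (by norm_num) (by norm_num))).hasSum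
  have s24 := (summable_of_VL (jS_null (A := 24) (B := 8) (by norm_num) (by norm_num))).hasSum
  have h1 := (s81.mul_of_nonarchimedean s81).mul_of_nonarchimedean s82
  have h2 := (summable_of_VL wS_null).hasSum.mul_of_nonarchimedean s24
  rw [← sig.hasSum_iff] at h1
  have h3 := h1.sub h2
  -- Symmetrising the difference under `tau` makes every summand vanish.
  have h4 := h3
  rw [← tau.hasSum_iff] at h4
  have h5 := h4.add h3
  have h6 : ∀ x, jF 8 1 (sig x).1.1 * jF 8 1 (sig x).1.2 * jF 8 2 (sig x).2 - wS x.1 * jF 24 8 x.2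
      = if (2 * x.1.1 + x.1.2) % 3 = 2 then
        jF 8 1 (sig x).1.1 * jF 8 1 (sig x).1.2 * jF 8 2 (sig x).2 else 0 := by
    intro x
    split_ifs with h
    · have : ch (LaurentSeries ℚ) (x.1.2 - x.1.1 + 1) = 0 := by
        rw [ch, if_neg (by omega), if_neg (by omega)]
      rw [wS, this, zero_mul, zero_mul, sub_zero]
    · rw [sig_good x h, sub_self]
  have h7 : ∀ x, jF 8 1 (sig (tau x)).1.1 * jF 8 1 (sig (tau x)).1.2 * jF 8 2 (sig (tau x)).2
      - wS (tau x).1 * jF 24 8 (tau x).2 + (jF 8 1 (sig x).1.1 * jF 8 1 (sig x).1.2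
        * jF 8 2 (sig x).2 - wS x.1 * jF 24 8 x.2) = 0 := by
    intro x
    rw [h6, h6]
    have ht : (tau x).1 = x.1 := rfl
    rw [ht]
    split_ifs with h
    · rw [sig_bad x h]
      exact neg_add_cancel _
    · exact add_zero _
  have h8 := h5.unique (hasSum_of_eq_zero h7)
  change jS 8 1 * jS 8 1 * jS 8 2 - (∑' g, wS g) * jS 24 8
      + (jS 8 1 * jS 8 1 * jS 8 2 - (∑' g, wS g) * jS 24 8) = 0 at h8
  rw [add_self_eq_zero, sub_eq_zero] at h8
  exact h8.symm

/-! ### The limiting identity in the field of Laurent series -/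

/-- The limit of the summand of `Sq` for `a = b = c = d = 1`, up to a Pochhammer symbol. -/
noncomputable def fS (n : ℤ × ℤ × ℤ × ℤ) : LaurentSeries ℚ :=
  pn tL (n.1 + 1) * (tL ^ qf 1 1 1 1 n.1 n.2.1 n.2.2.1 n.2.2.2
    * ip tL (n.1 - n.2.1) * ip tL (n.2.1 - n.2.2.1) * ip tL n.2.2.1 * ip tL n.2.2.2
    * ip tL (n.1 - n.2.2.2))

lemma ip_tL_mem_VL (n : ℤ) : ip tL n ∈ VL 0 := by
  simpa using ip_mem_VL one_pos n

lemma pn_tL (n : ℕ) : pn tL (n + 1) = pp 1 1 n := by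
  rw [pn_natCast, pp]
  simp only [one_mul]

lemma pn_tL_mem_VL (n : ℤ) : pn tL n ∈ VL 0 := by
  rcases le_or_gt n 0 with h | h
  · rw [pn_nonpos h]; exact zero_mem _
  · obtain ⟨m, rfl⟩ : ∃ m : ℕ, n = m + 1 := ⟨(n - 1).toNat, by omega⟩
    rw [pn_tL]
    exact mem_VL_of_sub_one (pp_sub_one_mem 1 one_pos m)

lemma fS_mem_VL (n : ℤ × ℤ × ℤ × ℤ) : fS n ∈ VL (qf 1 1 1 1 n.1 n.2.1 n.2.2.1 n.2.2.2) := by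
  rw [fS, mul_comm]
  exact VL_mul_mem' (VL_mul_mem' (VL_mul_mem' (VL_mul_mem' (VL_mul_mem' (VL_mul_mem'
    (tL_zpow_mem _) (ip_tL_mem_VL _)) (ip_tL_mem_VL _)) (ip_tL_mem_VL _)) (ip_tL_mem_VL _))
    (ip_tL_mem_VL _)) (pn_tL_mem_VL _)

lemma fS_ne_zero {n : ℤ × ℤ × ℤ × ℤ} (h : fS n ≠ 0) :
    0 ≤ n.2.2.2 ∧ n.2.2.2 ≤ n.1 ∧ 0 ≤ n.2.2.1 ∧ n.2.2.1 ≤ n.2.1 ∧ n.2.1 ≤ n.1 := by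
  simp only [fS, ne_eq, mul_eq_zero, not_or] at h
  obtain ⟨-, ⟨⟨⟨⟨-, h1⟩, h2⟩, h3⟩, h4⟩, h5⟩ := h
  have := ip_nonneg_of_ne h1
  have := ip_nonneg_of_ne h2
  have := ip_nonneg_of_ne h3
  have := ip_nonneg_of_ne h4
  have := ip_nonneg_of_ne h5
  omega

lemma fS_null (k : ℤ) : {n | fS n ∉ VL k}.Finite := by
  refine ((Finset.Icc (0 : ℤ) k) ×ˢ (Finset.Icc (0 : ℤ) k) ×ˢ (Finset.Icc (0 : ℤ) k) ×ˢ
    (Finset.Icc (0 : ℤ) k)).finite_toSet.subset fun n hn => ?_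
  have h0 : fS n ≠ 0 := fun h => hn (h ▸ zero_mem _)
  have h1 := fS_ne_zero h0
  have h2 : ¬ k ≤ qf 1 1 1 1 n.1 n.2.1 n.2.2.1 n.2.2.2 := fun h => hn (VL_mono h (fS_mem_VL n))
  obtain ⟨n1, n2, n3, n4⟩ := n
  simp only [qf] at h1 h2 ⊢
  simp only [Finset.coe_product, Finset.coe_Icc, Set.mem_prod, Set.mem_Icc]
  obtain ⟨p1, p2, p3, p4, p5⟩ := h1
  have q1 : 0 ≤ n2 * n4 := mul_nonneg (by omega) p1
  have q2 : n1 + n2 + n3 + n4 < k := by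
    nlinarith [sq_nonneg (n1 - n2), sq_nonneg n3, sq_nonneg n4, sq_nonneg n1, sq_nonneg n2]
  omega

lemma r500_eq_tsum (N : ℤ) : r500 tL N = ∑' n, fS n * ip tL (N + -n.1) := by
  have h : ∀ n, fS n * ip tL (N + -n.1) = pn tL (n.1 + 1) * core tL N 1 1 1 1 n := by
    intro n
    rw [fS, core, ← sub_eq_add_neg]
    ring
  rw [tsum_congr h, tsum_eq_finsum (mul_core_support _ _ _ _ _ _)]
  rfl

lemma wP_eq_tsum (N : ℤ) : wP tL N 1 1
    = ∑' g, wS g * (ip tL (N + g.1) * ip tL (N + g.2) * ip tL (N + (-g.1 - g.2))) := by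
  have h : ∀ g : ℤ × ℤ, wS g * (ip tL (N + g.1) * ip tL (N + g.2) * ip tL (N + (-g.1 - g.2)))
      = wT tL N 1 1 g := by
    intro g
    rw [wS, wT, show N + (-g.1 - g.2) = N - g.1 - g.2 by ring]
  rw [tsum_congr h, tsum_eq_finsum (wT_support _ _ _)]
  rfl

lemma tendsto_ip_tL (c : ℤ) : Tendsto (fun N : ℕ => ip tL (N + c)) atTop (𝓝 (LL 1 1)⁻¹) := by
  simpa using tendsto_ip one_pos c

/-- The limit `N → ∞` of `r500_eq_wP`. -/
lemma tsum_fS_eq_tsum_wS : (∑' n, fS n) * (LL 1 1) ^ 2 = ∑' g, wS g := by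
  have h1 := tendsto_tsum_mul fS_null (w := fun N n => ip tL (N + -n.1)) (c := (LL 1 1)⁻¹)
    (fun N n => ip_tL_mem_VL _) (fun n => tendsto_ip_tL _)
  have h2 := tendsto_tsum_mul wS_null
    (w := fun N g => ip tL (N + g.1) * ip tL (N + g.2) * ip tL (N + (-g.1 - g.2)))
    (c := (LL 1 1)⁻¹ * (LL 1 1)⁻¹ * (LL 1 1)⁻¹)
    (fun N n => VL_mul_mem' (VL_mul_mem' (ip_tL_mem_VL _) (ip_tL_mem_VL _)) (ip_tL_mem_VL _))
    (fun n => ((tendsto_ip_tL _).mul (tendsto_ip_tL _)).mul (tendsto_ip_tL _))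
  have h3 := tendsto_nhds_unique h1 (h2.congr fun N => by
    rw [← r500_eq_tsum, r500_eq_wP, wP_eq_tsum])
  have h0 := LL_ne_zero one_pos one_pos
  generalize LL 1 1 = x at *
  generalize (∑' n, fS n) = y at *
  generalize (∑' n, wS n) = z at *
  field_simp at h3
  exact h3

/-- The identity in the field of Laurent series: the triple products are split into residue classes
modulo `8`, and the three classes modulo `24` combine to `(T^8;T^8)_∞`. -/
theorem tsum_fS_mul : (∑' n, fS n) * (LL 8 2 * LL 8 3 ^ 2 * LL 8 4 ^ 2 * LL 8 5 ^ 2 * LL 8 6)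
    = 1 := by
  have h := wS_mul
  rw [← tsum_fS_eq_tsum_wS, jS_eq (by norm_num) (by norm_num), jS_eq (by norm_num) (by norm_num),
    jS_eq (by norm_num) (by norm_num)] at h
  have h1 := LL_split one_pos one_pos (r := 8) (by norm_num)
  have h2 := LL_split (a := 8) (b := 8) (by norm_num) (by norm_num) (r := 3) (by norm_num)
  simp only [Finset.prod_range_succ, Finset.prod_range_zero] at h1 h2
  norm_num at h h1 h2
  have n (b : ℕ) (hb : 0 < b) := LL_ne_zero (a := 8) (b := b) (by norm_num) hb
  have n1 := n 1 (by norm_num)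
  have n2 := n 2 (by norm_num)
  have n6 := n 6 (by norm_num)
  have n7 := n 7 (by norm_num)
  have n8 := n 8 (by norm_num)
  rw [h1] at h
  generalize (∑' n, fS n) = y at *
  have h' : LL 24 24 * LL 24 8 * LL 24 16 = LL 8 8 := by rw [h2]; ring
  rw [h'] at h
  clear h' h2 h1 n
  generalize LL 8 1 = x1 at *
  generalize LL 8 2 = x2 at *
  generalize LL 8 3 = x3 at *
  generalize LL 8 4 = x4 at *
  generalize LL 8 5 = x5 at *
  generalize LL 8 6 = x6 at *
  generalize LL 8 7 = x7 at *
  generalize LL 8 8 = x8 at *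
  have hne : x1 ^ 2 * x2 * x6 * x7 ^ 2 * x8 ^ 3 ≠ 0 := by
    simp [n1, n2, n6, n7, n8]
  apply mul_left_cancel₀ hne
  rw [mul_one]
  linear_combination h

/-! ### Transfer to formal power series -/

/-- The embedding of formal power series into formal Laurent series. -/
noncomputable abbrev ph : PowerSeries ℚ →+* LaurentSeries ℚ := HahnSeries.ofPowerSeries ℤ ℚ

lemma ph_coeff (x : PowerSeries ℚ) (n : ℕ) : (ph x).coeff n = PowerSeries.coeff n x :=
  HahnSeries.ofPowerSeries_apply_coeff x n

lemma ph_mem_VL (x : PowerSeries ℚ) : ph x ∈ VL 0 := by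
  intro n hn
  exact (PowerSeries.coeff_coe x n).trans (if_pos hn)

lemma ph_q : ph q = tL := HahnSeries.ofPowerSeries_X

lemma exists_ph_eq {y : LaurentSeries ℚ} (hy : y ∈ VL 0) : ∃ x, ph x = y := by
  refine ⟨PowerSeries.mk fun n => y.coeff n, ?_⟩
  ext n
  rcases lt_or_ge n 0 with h | h
  · rw [hy n h, ph_mem_VL _ n h]
  · lift n to ℕ using h
    rw [ph_coeff, PowerSeries.coeff_mk]

/-- A family of power series that converges as Laurent series has a power series as limit, and
converges to it coefficientwise, since its coefficients are eventually constant. -/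
lemma exists_tendsto {α : Type*} {F : Filter α} [F.NeBot] {f : α → PowerSeries ℚ}
    {y : LaurentSeries ℚ} (h : Tendsto (fun i => ph (f i)) F (𝓝 y)) :
    ∃ x, ph x = y ∧ Tendsto f F (𝓝 x) := by
  obtain ⟨x, rfl⟩ := exists_ph_eq ((isClosed_VL 0).mem_of_tendsto h
    (Eventually.of_forall fun i => ph_mem_VL (f i)))
  refine ⟨x, rfl, tendsto_pi_nhds.2 fun d => ?_⟩
  refine tendsto_const_nhds.congr' ?_
  filter_upwards [tendsto_iff_VL.1 h (d () + 1)] with i hi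
  have h1 := hi (d ()) (by omega)
  rw [HahnSeries.coeff_sub, ph_coeff, ph_coeff, sub_eq_zero] at h1
  have hd : Finsupp.single () (d ()) = d := by ext; simp
  simp only [PowerSeries.coeff, hd] at h1
  exact h1.symm

lemma ph_inv {x : PowerSeries ℚ} (h : PowerSeries.constantCoeff x ≠ 0) : ph x⁻¹ = (ph x)⁻¹ := by
  apply eq_inv_of_mul_eq_one_left
  rw [← map_mul, PowerSeries.inv_mul_cancel _ h, map_one]

lemma constantCoeff_qPoch (n : ℕ) : PowerSeries.constantCoeff (qPoch n) ≠ 0 := by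
  simp [qPoch, q]

lemma ph_qPoch (n : ℕ) : ph (qPoch n) = (ip tL n)⁻¹ := by
  rw [ip_natCast, inv_inv, qPoch, map_prod]
  simp only [map_sub, map_one, map_pow, ph_q]

lemma ph_qBinom (m k : ℕ) : ph (qBinom m k) = (ip tL m)⁻¹ * ip tL k * ip tL (m - k) := by
  rw [qBinom]
  split_ifs with h
  · rw [map_mul, ph_inv (by simp [constantCoeff_qPoch]), map_mul, mul_inv, ph_qPoch, ph_qPoch,
      ph_qPoch, inv_inv, inv_inv, Nat.cast_sub h, mul_assoc]
  · rw [map_zero, ip_neg (n := (m : ℤ) - k) (by omega), mul_zero]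

/-- The inclusion of `ℕ⁴` into `ℤ⁴`. -/
def cast4 (n : ℕ × ℕ × ℕ × ℕ) : ℤ × ℤ × ℤ × ℤ := (n.1, n.2.1, n.2.2.1, n.2.2.2)

lemma cast4_injective : Function.Injective cast4 := by
  rintro ⟨a, b, c, d⟩ ⟨a', b', c', d'⟩ h
  simpa [cast4] using h

lemma ip_tL_ne_zero (n : ℕ) : ip tL n ≠ 0 := by
  rw [ip_natCast]
  apply inv_ne_zero
  rw [Finset.prod_ne_zero_iff]
  exact fun k _ => sub_ne_zero.2 (tL_pow_ne_one k).symm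

lemma pn_eq_inv (n : ℕ) : pn tL (n + 1) = (ip tL n)⁻¹ := by
  rw [pn_natCast, ip_natCast, inv_inv]

/-- The truncated subtraction in the exponent is exact, because the quadratic form is nonnegative. -/
lemma ph_term (n₁ n₂ n₃ n₄ : ℕ) :
    ph (q ^ (n₁ ^ 2 + n₂ ^ 2 + n₃ ^ 2 + n₄ ^ 2 + (n₁ + n₂ + n₃ + n₄) + n₂ * n₄ - n₁ * n₂)
          * (1) * (qPoch n₁)⁻¹ * qBinom n₁ n₂ * qBinom n₁ n₄ * qBinom n₂ n₃)
      = fS (cast4 (n₁, n₂, n₃, n₄)) := by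
  have hle : n₁ * n₂ ≤ n₁ ^ 2 + n₂ ^ 2 + n₃ ^ 2 + n₄ ^ 2 + (n₁ + n₂ + n₃ + n₄) + n₂ * n₄ := by
    nlinarith [two_mul_le_add_sq n₁ n₂]
  have he : ph (q ^ (n₁ ^ 2 + n₂ ^ 2 + n₃ ^ 2 + n₄ ^ 2 + (n₁ + n₂ + n₃ + n₄) + n₂ * n₄ - n₁ * n₂))
      = tL ^ qf 1 1 1 1 n₁ n₂ n₃ n₄ := by
    rw [map_pow, ph_q, ← zpow_natCast, Nat.cast_sub hle]
    congr 1
    simp only [qf]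
    push_cast
    ring
  simp only [map_mul, ph_qBinom, ph_inv (constantCoeff_qPoch _), ph_qPoch, he, fS, cast4,
    pn_eq_inv, map_one]
  have h1 := ip_tL_ne_zero n₁
  have h2 := ip_tL_ne_zero n₂
  generalize ip tL n₁ = x1 at *
  generalize ip tL n₂ = x2 at *
  field_simp

/-- The `k`-th factor of the product. -/
noncomputable def pF (k : ℕ) : PowerSeries ℚ :=
  (1 - q ^ (8*k+2)) * (1 - q ^ (8*k+3))^2 * (1 - q ^ (8*k+4))^2 * (1 - q ^ (8*k+5))^2
    * (1 - q ^ (8*k+6))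

lemma dvd_mul_sub_one {k : ℕ} {x y : PowerSeries ℚ} (hx : q ^ k ∣ x - 1) (hy : q ^ k ∣ y - 1) :
    q ^ k ∣ x * y - 1 := by
  rw [show x * y - 1 = (x - 1) * y + (y - 1) by ring]
  exact dvd_add (hx.mul_right _) hy

lemma dvd_pF_sub_one (k : ℕ) : q ^ k ∣ pF k - 1 := by
  have h (b : ℕ) : q ^ k ∣ (1 - q ^ (8 * k + b)) - 1 := by
    rw [sub_sub_cancel_left, dvd_neg]
    exact pow_dvd_pow _ (by omega)
  simp only [pF, sq]
  exact dvd_mul_sub_one (dvd_mul_sub_one (dvd_mul_sub_one (dvd_mul_sub_one (h 2)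
    (dvd_mul_sub_one (h 3) (h 3))) (dvd_mul_sub_one (h 4) (h 4))) (dvd_mul_sub_one (h 5) (h 5)))
    (h 6)

lemma multipliable_pF : Multipliable pF := by
  have h : Tendsto (fun k => (pF k - 1).order) atTop (𝓝 ⊤) := by
    refine ENat.tendsto_nhds_top_iff_natCast_lt.mpr fun n => ?_
    filter_upwards [eventually_gt_atTop n] with k hk
    exact lt_of_lt_of_le (by exact_mod_cast hk)
      (PowerSeries.nat_le_order _ _ (PowerSeries.X_pow_dvd_iff.1 (dvd_pF_sub_one k)))
  have h1 := PowerSeries.WithPiTopology.multipliable_one_add_of_tendsto_order_atTop_nhds_top _ h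
  simp only [add_sub_cancel] at h1
  exact h1

instance : T2Space (PowerSeries ℚ) :=
  inferInstanceAs (T2Space ((Unit →₀ ℕ) → ℚ))

lemma ph_prod (m : ℕ) : ph (∏ k ∈ Finset.range m, pF k)
    = pp 8 2 m * pp 8 3 m ^ 2 * pp 8 4 m ^ 2 * pp 8 5 m ^ 2 * pp 8 6 m := by
  simp only [pp, ← Finset.prod_pow, ← Finset.prod_mul_distrib, map_prod, pF, map_mul, map_pow,
    map_sub, map_one, ph_q]

lemma ph_tprod : ph (∏' k, pF k) = LL 8 2 * LL 8 3 ^ 2 * LL 8 4 ^ 2 * LL 8 5 ^ 2 * LL 8 6 := by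
  have t (b : ℕ) (hb : 0 < b) := tendsto_pp (a := 8) (b := b) (by norm_num) hb
  have h := ((((t 2 (by norm_num)).mul ((t 3 (by norm_num)).pow 2)).mul
    ((t 4 (by norm_num)).pow 2)).mul ((t 5 (by norm_num)).pow 2)).mul (t 6 (by norm_num))
  simp only [← ph_prod] at h
  obtain ⟨x, hx, hx'⟩ := exists_tendsto h
  rw [← hx, tendsto_nhds_unique multipliable_pF.hasProd.tendsto_prod_nat hx']

/-- First new modulus-8 A₂ Rogers–Ramanujan identity (profile (5,0,0)). -/
theorem a2_mod8_profile500 :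
    ∑' n : ℕ × ℕ × ℕ × ℕ,
      (fun n₁ n₂ n₃ n₄ : ℕ =>
        q ^ (n₁ ^ 2 + n₂ ^ 2 + n₃ ^ 2 + n₄ ^ 2 + (n₁ + n₂ + n₃ + n₄) + n₂ * n₄ - n₁ * n₂)
          * (1) * (qPoch n₁)⁻¹ * qBinom n₁ n₂ * qBinom n₁ n₄ * qBinom n₂ n₃)
      n.1 n.2.1 n.2.2.1 n.2.2.2
      = (∏' k : ℕ, ((1 - q ^ (8*k+2)) * (1 - q ^ (8*k+3))^2 * (1 - q ^ (8*k+4))^2 * (1 - q ^ (8*k+5))^2 * (1 - q ^ (8*k+6))))⁻¹ := by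
  have h1 : HasSum (fS ∘ cast4) (∑' n, fS n) := by
    refine (cast4_injective.hasSum_iff fun n hn => ?_).2 (summable_of_VL fS_null).hasSum
    by_contra h
    have h2 := fS_ne_zero h
    apply hn
    obtain ⟨n1, n2, n3, n4⟩ := n
    simp only at h2
    lift n1 to ℕ using by omega
    lift n2 to ℕ using by omega
    lift n3 to ℕ using by omega
    lift n4 to ℕ using by omega
    exact ⟨(n1, n2, n3, n4), rfl⟩
  have h2 : fS ∘ cast4 = fun n => ph ((fun n₁ n₂ n₃ n₄ : ℕ =>
        q ^ (n₁ ^ 2 + n₂ ^ 2 + n₃ ^ 2 + n₄ ^ 2 + (n₁ + n₂ + n₃ + n₄) + n₂ * n₄ - n₁ * n₂)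
          * (1) * (qPoch n₁)⁻¹ * qBinom n₁ n₂ * qBinom n₁ n₄ * qBinom n₂ n₃)
      n.1 n.2.1 n.2.2.1 n.2.2.2) := funext fun n => (ph_term _ _ _ _).symm
  rw [h2, HasSum] at h1
  simp only [← map_sum] at h1
  obtain ⟨x, hx, hx'⟩ := exists_tendsto h1
  rw [HasSum.tsum_eq hx']
  change x = (∏' k, pF k)⁻¹
  have h3 : x * ∏' k, pF k = 1 := by
    apply HahnSeries.ofPowerSeries_injective (Γ := ℤ) (R := ℚ)
    rw [map_mul, map_one]
    change ph x * ph _ = 1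
    rw [hx, ph_tprod, tsum_fS_mul]
  have h4 : PowerSeries.constantCoeff (∏' k, pF k) ≠ 0 := fun h => by
    simpa [h] using congrArg PowerSeries.constantCoeff h3
  exact (PowerSeries.eq_inv_iff_mul_eq_one h4).2 h3
end
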